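/- Let J ⊂ ℝ be an open interval and, for each t ∈ J, let F_t be an IFS on ℝ as in the standing parametric setup, let p = (p_i)_{i∈Λ} be a probability vector with strictly positive entries and μ_{p,t} the associated self-similar measure. Suppose {F_t}_{t∈J} satisfies the β-transversality condition. Then for any t ∈ J with dim μ_{p,t} < min(1, sd μ_{p,t}) there exist δ > 0 and ε > 0 such that dim μ_{p,t'} ≥ dim μ_{p,t} + δ for every t' ∈ ([t−ε, t+ε] ∩ J) \ {t}. -/

import Mathlib

/-!
The proof compares the parameter `t₀` with a nearby parameter `t` through the Shannon entropy of
discretized cylinder positions.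

Write `f_u z` for the image of a base point under the map of a word `u` of length `n`, chosen at
random with the product weight, and let `2 ^ (-a)` be slightly larger than the typical contraction
ratio of such words. The theorem `growth` is an inverse theorem in the spirit of Hochman: if a
self-similar measure has entropy about `α < 1` per binary scale, then, given the letter counts of
`u` and the cell of `f_u z` of size `2 ^ (-a)`, the cell of `f_u z` of size `2 ^ (-Q n)` has only
`o(n)` entropy. The reason is that on a fibre of this conditioning the self-similar measure is a
convolution of the law of `f_u z` with a scaled copy of itself (`Sys.fiber_ge`). By the
Kaimanovich–Vershik inequality (`kv_iter`) the entropy gained by one convolution is at least a fixed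
fraction of the gain of `4 ^ q` convolutions, and many convolutions do gain: a variable with entropy
at a scale has separated pairs of values there (`sent_le_farP`), and a random choice among many
separated pairs is spread by the Littlewood–Offord inequality (`signs_lower`, `gain`). A linear
amount of entropy in the fibres would thus push the entropy of the measure above `α` per scale
(`Sys.core`). All constants are uniform over systems satisfying the bounds `Sys`.

The hypotheses of `growth` are finite scale entropy bounds. Exact dimensionality gives them at `t₀`
(`Sys.hh_ge_dim`, `Sys.hh_le_dim_add`). Lower bounds at two fixed scales persist for `t` close to
`t₀` (`hh_close`), and the upper bound at `t` holds at all scales if the dimension at `t` is less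
than the dimension at `t₀` plus `ε`. So in that case the conditional entropies are small at both
parameters.

Transversality contradicts this (`transv`). Choose `n` with `|t - t₀|` comparable to `2 ^ (-B n)`:
then `f_u z` moves by less than `2 ^ (-a)` between the parameters, while two distinct words of
length `n` are at distance at least `2 ^ (-3 B n)` at one of them. Hence the pair of cells of size
`2 ^ (-3 B n)` determines `u`, whose entropy is `n` times the entropy of `p`. The common coarse cell
carries only about `n` times the dimension times the Lyapunov exponent, which is smaller by a
linear amount because the dimension is less than the similarity dimension; so one of the two
conditional entropies must be linear in `n` (`Sys.word_ent_le`).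
-/

open MeasureTheory Set Filter
open scoped ENNReal Classical

noncomputable section

/-- A measure is exact dimensional with dimension `d`: at a.e. point the local dimension
exists and equals `d`. -/
def ExactDim {X : Type*} [PseudoMetricSpace X] [MeasurableSpace X]
    (μ : Measure X) (d : ℝ) : Prop :=
  ∀ᵐ x ∂μ, Tendsto (fun r : ℝ => Real.log (μ (Metric.ball x r)).toReal / Real.log r)
    (nhdsWithin 0 (Set.Ioi 0)) (nhds d)

/-- `f_{x,t}(0) = lim_n f_{x_1,t} ∘ ⋯ ∘ f_{x_n,t}(0)` for the IFS
`{y ↦ r i t · y + s i t}_{i}`, written as a series. -/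
def codingPoint {Λ : Type*} (r s : Λ → ℝ → ℝ) (x : ℕ → Λ) (t : ℝ) : ℝ :=
  ∑' n : ℕ, (∏ k ∈ Finset.range n, r (x k) t) * s (x n) t

/-- The metric `d(x,y) = 2^{-|x∧y|}` on `Λ^ℕ`, where `|x∧y|` is the length of the longest
common initial segment. -/
def seqDist {Λ : Type*} (x y : ℕ → Λ) : ℝ :=
  if x = y then 0 else (2 : ℝ) ^ (-((sInf {k : ℕ | x k ≠ y k} : ℕ) : ℤ))

/-- The similarity dimension `(Σ_i p_i log p_i) / (Σ_i p_i log |r_{i,t}|)`. -/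
def simDim {Λ : Type*} [Fintype Λ] (p : Λ → ℝ) (r : Λ → ℝ → ℝ) (t : ℝ) : ℝ :=
  (∑ i : Λ, p i * Real.log (p i)) / (∑ i : Λ, p i * Real.log |r i t|)

/-- `μ` is the self-similar measure associated to the IFS `{y ↦ r i t · y + s i t}_i` and the
probability vector `p`. -/
def IsSelfSimilarMeasure {Λ : Type*} [Fintype Λ] (r s : Λ → ℝ → ℝ) (p : Λ → ℝ) (t : ℝ)
    (μ : Measure ℝ) : Prop :=
  IsProbabilityMeasure μ ∧
    μ = ∑ i : Λ, ENNReal.ofReal (p i) • μ.map (fun x => r i t * x + s i t)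

namespace SSM

/-! ### Shannon entropy on finite weighted spaces -/

/-- A probability weight on a finite type. -/
structure IsW {Ω : Type*} [Fintype Ω] (w : Ω → ℝ) : Prop where
  nonneg : ∀ ω, 0 ≤ w ω
  sum_one : ∑ ω, w ω = 1

/-- The probability of the event that `X` takes the value `X ω`. -/
def mass {Ω S : Type*} [Fintype Ω] (w : Ω → ℝ) (X : Ω → S) (ω : Ω) : ℝ :=
  ∑ ω', if X ω' = X ω then w ω' else 0

/-- The Shannon entropy (natural logarithm) of the random variable `X` under the weight `w`. -/
def ent {Ω S : Type*} [Fintype Ω] (w : Ω → ℝ) (X : Ω → S) : ℝ :=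
  -∑ ω, w ω * Real.log (mass w X ω)

section basic

variable {Ω S T V : Type*} [Fintype Ω] {w : Ω → ℝ}

lemma mass_nonneg (hw : IsW w) (X : Ω → S) (ω : Ω) : 0 ≤ mass w X ω :=
  Finset.sum_nonneg fun ω' _ => by split_ifs <;> simp [hw.nonneg]

lemma le_mass (hw : IsW w) (X : Ω → S) (ω : Ω) : w ω ≤ mass w X ω := by
  have := Finset.single_le_sum (f := fun ω' => if X ω' = X ω then w ω' else 0)
    (fun ω' _ => by split_ifs <;> simp [hw.nonneg]) (Finset.mem_univ ω)
  simpa [mass] using this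

lemma mass_pos (hw : IsW w) (X : Ω → S) {ω : Ω} (h : w ω ≠ 0) : 0 < mass w X ω :=
  lt_of_lt_of_le (lt_of_le_of_ne (hw.nonneg ω) h.symm) (le_mass hw X ω)

lemma mass_le_mass (hw : IsW w) {X : Ω → S} {Y : Ω → T} {ω : Ω}
    (h : ∀ ω', Y ω' = Y ω → X ω' = X ω) : mass w Y ω ≤ mass w X ω := by
  refine Finset.sum_le_sum fun ω' _ => ?_
  by_cases hY : Y ω' = Y ω
  · simp [hY, h ω' hY]
  · simp only [hY, if_false]
    split_ifs <;> simp [hw.nonneg]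

lemma mass_le_one (hw : IsW w) (X : Ω → S) (ω : Ω) : mass w X ω ≤ 1 := by
  rw [← hw.sum_one]
  refine Finset.sum_le_sum fun ω' _ => ?_
  split_ifs <;> simp [hw.nonneg]

lemma mass_congr {X : Ω → S} {ω ω' : Ω} (h : X ω = X ω') : mass w X ω = mass w X ω' := by
  simp only [mass, h]

lemma ent_nonneg (hw : IsW w) (X : Ω → S) : 0 ≤ ent w X := by
  rw [ent, ← Finset.sum_neg_distrib]
  refine Finset.sum_nonneg fun ω _ => ?_
  have := Real.log_nonpos (mass_nonneg hw X ω) (mass_le_one hw X ω)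
  nlinarith [hw.nonneg ω]

/-- Entropy decreases under taking functions of a random variable. -/
lemma ent_mono (hw : IsW w) {X : Ω → S} {Y : Ω → T}
    (h : ∀ ω ω', Y ω' = Y ω → X ω' = X ω) : ent w X ≤ ent w Y := by
  rw [ent, ent, neg_le_neg_iff]
  refine Finset.sum_le_sum fun ω _ => ?_
  by_cases h0 : w ω = 0
  · simp [h0]
  · exact mul_le_mul_of_nonneg_left
      (Real.log_le_log (mass_pos hw Y h0) (mass_le_mass hw (h ω))) (hw.nonneg ω)

lemma ent_congr {X : Ω → S} {Y : Ω → T}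
    (h : ∀ ω ω', Y ω' = Y ω ↔ X ω' = X ω) : ent w X = ent w Y := by
  simp only [ent, mass, h]

lemma sum_w_div_mass_le (X : Ω → S) (q : S → ℝ) (hq : ∀ s, 0 ≤ q s)
    (A : Finset S) (hA : ∀ ω, X ω ∈ A) :
    ∑ ω, w ω * (q (X ω) / mass w X ω) ≤ ∑ s ∈ A, q s := by
  refine le_trans ?_ (Finset.sum_le_sum_of_subset_of_nonneg (s := Finset.univ.image X)
    (fun s hs => by obtain ⟨ω₀, -, rfl⟩ := Finset.mem_image.1 hs; exact hA _)
    fun s _ _ => hq s)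
  rw [← Finset.sum_fiberwise_of_maps_to (s := Finset.univ) (t := Finset.univ.image X) (g := X)
    (fun x _ => Finset.mem_image_of_mem _ (Finset.mem_univ x))]
  refine Finset.sum_le_sum fun s hs => ?_
  obtain ⟨ω₀, -, rfl⟩ := Finset.mem_image.1 hs
  have h1 : ∑ i with X i = X ω₀, w i * (q (X i) / mass w X i)
      = (∑ i with X i = X ω₀, w i) * (q (X ω₀) / mass w X ω₀) := by
    rw [Finset.sum_mul]
    refine Finset.sum_congr rfl fun i hi => ?_
    have := (Finset.mem_filter.1 hi).2
    rw [this, mass_congr this]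
  have h2 : ∑ i with X i = X ω₀, w i = mass w X ω₀ := by
    rw [mass, Finset.sum_filter]
  rw [h1, h2]
  by_cases h0 : mass w X ω₀ = 0
  · simp [h0, hq]
  · rw [mul_div_cancel₀ _ h0]

/-- Gibbs' inequality. -/
lemma gibbs (hw : IsW w) (X : Ω → S) (q : S → ℝ) (hq : ∀ s, 0 ≤ q s)
    (hpos : ∀ ω, w ω ≠ 0 → 0 < q (X ω)) (A : Finset S) (hA : ∀ ω, X ω ∈ A)
    (hsum : ∑ s ∈ A, q s ≤ 1) :
    ent w X ≤ -∑ ω, w ω * Real.log (q (X ω)) := by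
  have h1 : ∑ ω, w ω * (Real.log (q (X ω)) - Real.log (mass w X ω))
      ≤ ∑ ω, w ω * (q (X ω) / mass w X ω - 1) := by
    refine Finset.sum_le_sum fun ω _ => ?_
    by_cases h0 : w ω = 0
    · simp [h0]
    · have hm := mass_pos hw X h0
      rw [← Real.log_div (hpos ω h0).ne' hm.ne']
      exact mul_le_mul_of_nonneg_left
        (Real.log_le_sub_one_of_pos (div_pos (hpos ω h0) hm)) (hw.nonneg ω)
  have h2 := sum_w_div_mass_le (w := w) X q hq A hA
  simp only [mul_sub, Finset.sum_sub_distrib, mul_one, hw.sum_one] at h1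
  rw [ent]
  linarith

/-- The distribution of `Z`, as a function on its values. -/
def law (w : Ω → ℝ) (Z : Ω → T) (z : T) : ℝ := ∑ ω, if Z ω = z then w ω else 0

lemma law_apply (Z : Ω → T) (ω : Ω) : law w Z (Z ω) = mass w Z ω := rfl

lemma law_nonneg (hw : IsW w) (Z : Ω → T) (z : T) : 0 ≤ law w Z z :=
  Finset.sum_nonneg fun ω' _ => by split_ifs <;> simp [hw.nonneg]

lemma sum_law (hw : IsW w) (Z : Ω → T) : ∑ z ∈ Finset.univ.image Z, law w Z z = 1 := by
  rw [← hw.sum_one, ← Finset.sum_fiberwise_of_maps_to (s := Finset.univ)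
    (t := Finset.univ.image Z) (g := Z)
    (fun x _ => Finset.mem_image_of_mem _ (Finset.mem_univ x))]
  refine Finset.sum_congr rfl fun s _ => ?_
  rw [law, Finset.sum_filter]

/-- Gibbs' inequality for conditional entropy: a kernel `q z` bounds `H(X|Z)`. -/
lemma gibbs_cond (hw : IsW w) (X : Ω → S) (Z : Ω → T) (q : T → S → ℝ) (hq : ∀ z s, 0 ≤ q z s)
    (hpos : ∀ ω, w ω ≠ 0 → 0 < q (Z ω) (X ω)) (A : Finset S) (hA : ∀ ω, X ω ∈ A)
    (hsum : ∀ z, ∑ s ∈ A, q z s ≤ 1) :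
    ent w (fun ω => (X ω, Z ω)) ≤ ent w Z - ∑ ω, w ω * Real.log (q (Z ω) (X ω)) := by
  have h := gibbs hw (fun ω => (X ω, Z ω)) (fun p => law w Z p.2 * q p.2 p.1)
    (fun p => mul_nonneg (law_nonneg hw Z _) (hq _ _))
    (fun ω h0 => mul_pos (mass_pos hw Z h0) (hpos ω h0)) (A ×ˢ (Finset.univ.image Z))
    (fun ω => by simp [hA ω]) ?_
  · refine h.trans (le_of_eq ?_)
    rw [ent, ← neg_add', ← Finset.sum_add_distrib]
    congr 1
    refine Finset.sum_congr rfl fun ω _ => ?_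
    by_cases h0 : w ω = 0
    · simp [h0]
    · dsimp only
      rw [law_apply, Real.log_mul (mass_pos hw Z h0).ne' (hpos ω h0).ne']
      ring
  · calc ∑ p ∈ A ×ˢ (Finset.univ.image Z), law w Z p.2 * q p.2 p.1
        = ∑ z ∈ Finset.univ.image Z, law w Z z * ∑ s ∈ A, q z s := by
          rw [Finset.sum_product_right]
          exact Finset.sum_congr rfl fun z _ => by rw [Finset.mul_sum]
      _ ≤ ∑ z ∈ Finset.univ.image Z, law w Z z * 1 := Finset.sum_le_sum fun z _ =>
          mul_le_mul_of_nonneg_left (hsum z) (law_nonneg hw Z z)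
      _ = 1 := by simp [sum_law hw]

/-- Strong subadditivity of entropy. -/
lemma submod (hw : IsW w) (X : Ω → S) (Y : Ω → T) (Z : Ω → V) :
    ent w (fun ω => (X ω, Y ω, Z ω)) + ent w Z
      ≤ ent w (fun ω => (X ω, Z ω)) + ent w (fun ω => (Y ω, Z ω)) := by
  have h := gibbs_cond hw X (fun ω => (Y ω, Z ω))
    (fun p s => law w (fun ω => (X ω, Z ω)) (s, p.2) / law w Z p.2)
    (fun p s => div_nonneg (law_nonneg hw _ _) (law_nonneg hw _ _))
    (fun ω h0 => div_pos (mass_pos hw (fun ω => (X ω, Z ω)) h0) (mass_pos hw Z h0))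
    (Finset.univ.image X) (fun ω => Finset.mem_image_of_mem _ (Finset.mem_univ ω)) ?_
  · have h2 : ∑ ω, w ω * Real.log (law w (fun ω => (X ω, Z ω)) (X ω, (Y ω, Z ω).2)
        / law w Z (Y ω, Z ω).2) = ent w Z - ent w (fun ω => (X ω, Z ω)) := by
      rw [ent, ent, ← neg_add', ← sub_eq_add_neg, ← Finset.sum_sub_distrib,
        ← Finset.sum_neg_distrib]
      refine Finset.sum_congr rfl fun ω _ => ?_
      by_cases h0 : w ω = 0
      · simp [h0]
      · have e1 : law w (fun ω => (X ω, Z ω)) (X ω, Z ω) = mass w (fun ω => (X ω, Z ω)) ω := rfl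
        have e2 : law w Z (Z ω) = mass w Z ω := rfl
        dsimp only
        rw [e1, e2, Real.log_div (mass_pos hw _ h0).ne' (mass_pos hw _ h0).ne']
        ring
    rw [h2] at h
    linarith
  · rintro ⟨y, z⟩
    dsimp only
    rw [← Finset.sum_div]
    refine div_le_one_of_le₀ (le_of_eq ?_) (law_nonneg hw _ _)
    simp only [law]
    rw [Finset.sum_comm]
    refine Finset.sum_congr rfl fun ω _ => ?_
    by_cases hz : Z ω = z <;> simp [hz]

lemma ent_pair_le (hw : IsW w) (X : Ω → S) (Y : Ω → T) :
    ent w (fun ω => (X ω, Y ω)) ≤ ent w X + ent w Y := by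
  have h := submod hw X Y (fun _ => ())
  have e1 : ent w (fun ω => (X ω, Y ω, ())) = ent w (fun ω => (X ω, Y ω)) :=
    ent_congr (by simp)
  have e2 : ent w (fun ω => (X ω, ())) = ent w X := ent_congr (by simp)
  have e3 : ent w (fun ω => (Y ω, ())) = ent w Y := ent_congr (by simp)
  have e4 := ent_nonneg hw (fun _ => ())
  linarith

/-- A variable taking values in the finite set `A` has entropy at most `log #A`. -/
lemma ent_le_log_card (hw : IsW w) (X : Ω → S) (A : Finset S) (hA : ∀ ω, w ω ≠ 0 → X ω ∈ A) :
    ent w X ≤ Real.log A.card := by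
  obtain ⟨ω₀, h₀⟩ : ∃ ω, w ω ≠ 0 := by
    by_contra h
    push Not at h
    have := hw.sum_one
    simp [h] at this
  have hc : (0 : ℝ) < A.card := by
    exact_mod_cast Finset.card_pos.2 ⟨_, hA ω₀ h₀⟩
  have h := gibbs hw X (fun s => if s ∈ A then (A.card : ℝ)⁻¹ else 0)
    (fun s => by split_ifs <;> positivity)
    (fun ω h0 => by simp only [hA ω h0, if_true]; positivity)
    (Finset.univ.image X) (fun ω => Finset.mem_image_of_mem _ (Finset.mem_univ ω)) ?_
  · refine h.trans (le_of_eq ?_)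
    have : ∑ ω, w ω * Real.log (if X ω ∈ A then (A.card : ℝ)⁻¹ else 0)
        = ∑ ω, w ω * (-Real.log A.card) := by
      refine Finset.sum_congr rfl fun ω _ => ?_
      by_cases h0 : w ω = 0
      · simp [h0]
      · simp [hA ω h0]
    rw [this, ← Finset.sum_mul, hw.sum_one]
    ring
  · rw [← Finset.sum_filter, Finset.sum_const, nsmul_eq_mul, ← div_eq_mul_inv]
    refine div_le_one_of_le₀ ?_ hc.le
    exact_mod_cast Finset.card_le_card fun s hs => (Finset.mem_filter.1 hs).2

/-- `H(X) ≤ H(Y) + log (2 * K + 1)` when the integer variables `X`, `Y` differ by at most `K`. -/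
lemma ent_approx (hw : IsW w) (X Y : Ω → ℤ) (K : ℕ) (h : ∀ ω, w ω ≠ 0 → |X ω - Y ω| ≤ K) :
    ent w X ≤ ent w Y + Real.log (2 * K + 1) := by
  have h1 : ent w X ≤ ent w (fun ω => (Y ω, X ω - Y ω)) := ent_mono hw (by
    intro ω ω' h
    simp only [Prod.mk.injEq] at h
    lia)
  have h2 := ent_pair_le hw Y (fun ω => X ω - Y ω)
  have h3 := ent_le_log_card hw (fun ω => X ω - Y ω) (Finset.Icc (-(K:ℤ)) K) (fun ω h0 => by
    have := abs_le.1 (h ω h0)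
    simp; lia)
  have h4 : ((Finset.Icc (-(K:ℤ)) K).card : ℝ) = 2 * K + 1 := by
    rw [Int.card_Icc]
    have : ((K:ℤ) + 1 - -(K:ℤ)).toNat = 2 * K + 1 := by lia
    rw [this]; push_cast; ring
  rw [h4] at h3
  linarith

/-- Entropy is invariant under measure preserving maps. -/
lemma ent_map {Ω' : Type*} [Fintype Ω'] {w' : Ω' → ℝ} (f : Ω' → Ω)
    (hf : ∀ ω, ∑ ω', (if f ω' = ω then w' ω' else 0) = w ω) (X : Ω → S) :
    ent w' (fun ω' => X (f ω')) = ent w X := by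
  have key : ∀ G : Ω → ℝ, ∑ ω', w' ω' * G (f ω') = ∑ ω, w ω * G ω := by
    intro G
    simp only [← hf, Finset.sum_mul]
    rw [Finset.sum_comm]
    refine Finset.sum_congr rfl fun ω' _ => ?_
    simp
  have hm : ∀ ω', mass w' (fun ω' => X (f ω')) ω' = mass w X (f ω') := by
    intro ω'
    have := key (fun ω => if X ω = X (f ω') then 1 else 0)
    simpa [mass] using this
  simp only [ent, hm]
  rw [key (fun ω => Real.log (mass w X ω))]

lemma IsW_map {Ω' : Type*} [Fintype Ω'] {w' : Ω' → ℝ} (hw' : IsW w') (f : Ω' → Ω)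
    (hf : ∀ ω, ∑ ω', (if f ω' = ω then w' ω' else 0) = w ω) : IsW w := by
  refine ⟨fun ω => ?_, ?_⟩
  · rw [← hf]
    exact Finset.sum_nonneg fun ω' _ => by split_ifs <;> simp [hw'.nonneg]
  · rw [← hw'.sum_one]
    simp only [← hf]
    rw [Finset.sum_comm]
    simp

/-- Product weights with a kernel. -/
lemma IsW_kernel {A B : Type*} [Fintype A] [Fintype B] {q : A → ℝ} {v : A → B → ℝ}
    (hq : IsW q) (hv : ∀ a, q a ≠ 0 → IsW (v a)) :
    IsW (fun x : A × B => q x.1 * v x.1 x.2) := by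
  refine ⟨fun x => ?_, ?_⟩
  · by_cases h : q x.1 = 0
    · simp [h]
    · exact mul_nonneg (hq.nonneg _) ((hv _ h).nonneg _)
  · rw [Fintype.sum_prod_type]
    simp only [← Finset.mul_sum]
    rw [← hq.sum_one]
    refine Finset.sum_congr rfl fun a _ => ?_
    by_cases h : q a = 0
    · simp [h]
    · rw [(hv a h).sum_one, mul_one]

lemma IsW_prod {A B : Type*} [Fintype A] [Fintype B] {q : A → ℝ} {v : B → ℝ}
    (hq : IsW q) (hv : IsW v) : IsW (fun x : A × B => q x.1 * v x.2) :=
  IsW_kernel (v := fun _ => v) hq fun _ _ => hv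

/-- Chain rule on a product with a kernel. -/
lemma chain_kernel {A B : Type*} [Fintype A] [Fintype B] {q : A → ℝ} {v : A → B → ℝ}
    (hv : ∀ a, q a ≠ 0 → IsW (v a)) (X : A × B → S) :
    ent (fun x : A × B => q x.1 * v x.1 x.2) (fun x => (X x, x.1))
      = ent q (fun a => a) + ∑ a, q a * ent (v a) (fun b => X (a, b)) := by
  have hm : ∀ a b, mass (fun x : A × B => q x.1 * v x.1 x.2) (fun x => (X x, x.1)) (a, b)
      = q a * mass (v a) (fun b => X (a, b)) b := by
    intro a b
    rw [mass, mass, Fintype.sum_prod_type, Finset.mul_sum, Finset.sum_eq_single a]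
    · refine Finset.sum_congr rfl fun b' _ => ?_
      simp
    · intro a' _ ha
      simp [ha]
    · simp
  have hma : ∀ a, mass q (fun a => a) a = q a := by
    intro a
    simp [mass]
  simp only [ent]
  rw [Fintype.sum_prod_type, ← sub_eq_zero, ← Finset.sum_neg_distrib, ← Finset.sum_neg_distrib,
    ← Finset.sum_add_distrib, ← Finset.sum_sub_distrib]
  refine Finset.sum_eq_zero fun a _ => ?_
  by_cases h : q a = 0
  · simp [h]
  simp only [hm, hma]
  have : ∑ b, q a * v a b * Real.log (q a * mass (v a) (fun b => X (a, b)) b)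
      = q a * Real.log (q a) + q a * ∑ b, v a b * Real.log (mass (v a) (fun b => X (a, b)) b) := by
    rw [show q a * Real.log (q a) = q a * (∑ b, v a b) * Real.log (q a) by
      rw [(hv a h).sum_one, mul_one], Finset.mul_sum, Finset.sum_mul, Finset.mul_sum,
      ← Finset.sum_add_distrib]
    refine Finset.sum_congr rfl fun b _ => ?_
    by_cases hb : v a b = 0
    · simp [hb]
    · rw [Real.log_mul h (mass_pos (hv a h) _ hb).ne']
      ring
  rw [this]
  ring

/-- Conditional entropy is concave: it is at least the average over a mixture. -/
lemma mixture {A B : Type*} [Fintype A] [Fintype B] {q : A → ℝ} {v : A → B → ℝ}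
    (hq : IsW q) (hv : ∀ a, q a ≠ 0 → IsW (v a)) (X : A × B → S) (Y : A × B → T) 
    (hXY : ∀ x x', X x' = X x → Y x' = Y x) :
    ∑ a, q a * (ent (v a) (fun b => X (a, b)) - ent (v a) (fun b => Y (a, b)))
      ≤ ent (fun x : A × B => q x.1 * v x.1 x.2) X
        - ent (fun x : A × B => q x.1 * v x.1 x.2) Y := by
  have hw := IsW_kernel hq hv
  have h := submod hw (fun x => x.1) X Y
  have h1 := chain_kernel hv X
  have h2 := chain_kernel hv Y
  have e1 : ent (fun x : A × B => q x.1 * v x.1 x.2) (fun x => (x.1, X x, Y x))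
      = ent (fun x : A × B => q x.1 * v x.1 x.2) (fun x => (X x, x.1)) :=
    ent_congr fun x x' => by
      simp only [Prod.mk.injEq]
      have := hXY x x'
      tauto
  have e2 : ent (fun x : A × B => q x.1 * v x.1 x.2) (fun x => (x.1, Y x))
      = ent (fun x : A × B => q x.1 * v x.1 x.2) (fun x => (Y x, x.1)) :=
    ent_congr fun x x' => by
      simp only [Prod.mk.injEq]
      tauto
  have e3 : ent (fun x : A × B => q x.1 * v x.1 x.2) (fun x => (X x, Y x))
      = ent (fun x : A × B => q x.1 * v x.1 x.2) X :=
    ent_congr fun x x' => by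
      simp only [Prod.mk.injEq]
      have := hXY x x'
      tauto
  simp only [mul_sub, Finset.sum_sub_distrib]
  linarith

/-- Entropy of an independent pair. -/
lemma ent_indep {A B : Type*} [Fintype A] [Fintype B] {q : A → ℝ} {v : B → ℝ}
    (hq : IsW q) (hv : IsW v) (X : A → S) (Y : B → T) :
    ent (fun x : A × B => q x.1 * v x.2) (fun x => (X x.1, Y x.2)) = ent q X + ent v Y := by
  have hm : ∀ a b, mass (fun x : A × B => q x.1 * v x.2) (fun x => (X x.1, Y x.2)) (a, b)
      = mass q X a * mass v Y b := by
    intro a b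
    rw [mass, mass, mass, Fintype.sum_prod_type, Finset.sum_mul_sum]
    refine Finset.sum_congr rfl fun a' _ => Finset.sum_congr rfl fun b' _ => ?_
    by_cases h1 : X a' = X a <;> by_cases h2 : Y b' = Y b <;> simp [h1, h2]
  simp only [ent]
  rw [Fintype.sum_prod_type]
  simp only [hm]
  have : ∀ a b, q a * v b * Real.log (mass q X a * mass v Y b)
      = q a * Real.log (mass q X a) * v b + q a * (v b * Real.log (mass v Y b)) := by
    intro a b
    by_cases ha : q a = 0
    · simp [ha]
    by_cases hb : v b = 0
    · simp [hb]
    rw [Real.log_mul (mass_pos hq X ha).ne' (mass_pos hv Y hb).ne']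
    ring
  simp only [this, Finset.sum_add_distrib, ← Finset.mul_sum, ← Finset.sum_mul, hv.sum_one,
    hq.sum_one]
  ring

/-- The conditional weight given that `Z` takes the value `Z ω₀`. -/
def cw (w : Ω → ℝ) (Z : Ω → T) (ω₀ ω : Ω) : ℝ := if Z ω = Z ω₀ then w ω / mass w Z ω₀ else 0

lemma IsW_cw (hw : IsW w) (Z : Ω → T) {ω₀ : Ω} (h : w ω₀ ≠ 0) : IsW (cw w Z ω₀) := by
  refine ⟨fun ω => ?_, ?_⟩
  · unfold cw
    split_ifs
    exacts [div_nonneg (hw.nonneg _) (mass_nonneg hw _ _), le_rfl]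
  · have : ∀ ω, cw w Z ω₀ ω = (if Z ω = Z ω₀ then w ω else 0) / mass w Z ω₀ := by
      intro ω; unfold cw; split_ifs <;> simp
    simp only [this, ← Finset.sum_div]
    exact div_self (mass_pos hw Z h).ne'

/-- Resampling `ω` conditionally on `Z` preserves the weight. -/
lemma cw_marginal (hw : IsW w) (Z : Ω → T) (ω : Ω) : ∑ ω₀, w ω₀ * cw w Z ω₀ ω = w ω := by
  have : ∀ ω₀, w ω₀ * cw w Z ω₀ ω = (if Z ω₀ = Z ω then w ω₀ else 0) * (w ω / mass w Z ω) := by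
    intro ω₀
    unfold cw
    by_cases h : Z ω₀ = Z ω
    · simp [h, mass_congr h]
    · simp [h, Ne.symm h]
  simp only [this, ← Finset.sum_mul]
  by_cases h0 : w ω = 0
  · simp [h0]
  · exact mul_div_cancel₀ _ (mass_pos hw Z h0).ne'

/-- Chain rule: `H(X,Z) = H(Z) + H(X|Z)`. -/
lemma chain_cw (hw : IsW w) (X : Ω → S) (Z : Ω → T) :
    ent w (fun ω => (X ω, Z ω)) = ent w Z + ∑ ω₀, w ω₀ * ent (cw w Z ω₀) X := by
  have hm : ∀ ω₀ ω, Z ω = Z ω₀ → mass (cw w Z ω₀) X ω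
      = mass w (fun ω => (X ω, Z ω)) ω / mass w Z ω := by
    intro ω₀ ω h
    rw [mass, mass, Finset.sum_div]
    refine Finset.sum_congr rfl fun ω' _ => ?_
    rw [mass_congr h, cw]
    by_cases h1 : X ω' = X ω <;> by_cases h2 : Z ω' = Z ω₀ <;> simp [h1, h2, h]
  have h1 : ∀ ω₀, w ω₀ * ent (cw w Z ω₀) X = -∑ ω, w ω₀ * cw w Z ω₀ ω *
      Real.log (mass w (fun ω => (X ω, Z ω)) ω / mass w Z ω) := by
    intro ω₀
    rw [ent, mul_neg, Finset.mul_sum]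
    congr 1
    refine Finset.sum_congr rfl fun ω _ => ?_
    by_cases h : Z ω = Z ω₀
    · rw [hm ω₀ ω h]; ring
    · simp [cw, h]
  simp only [h1, Finset.sum_neg_distrib]
  rw [Finset.sum_comm]
  simp only [← Finset.sum_mul, cw_marginal hw]
  rw [ent, ent, ← neg_add, ← Finset.sum_add_distrib]
  congr 1
  refine Finset.sum_congr rfl fun ω _ => ?_
  by_cases h0 : w ω = 0
  · simp [h0]
  · rw [Real.log_div (mass_pos hw _ h0).ne' (mass_pos hw _ h0).ne']
    ring

end basic

/-! ### Product weights and scale entropies of integer variables -/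

section products

variable {Ω B S : Type*} [Fintype Ω] [Fintype B] {w : Ω → ℝ}

/-- The product weight on `k`-tuples. -/
def pw (w : Ω → ℝ) (k : ℕ) (x : Fin k → Ω) : ℝ := ∏ i, w (x i)

lemma sum_fin_succ {k : ℕ} (G : (Fin (k + 1) → Ω) → ℝ) :
    ∑ x, G x = ∑ b, ∑ x : Fin k → Ω, G (Fin.cons b x) := by
  rw [← Fintype.sum_prod_type' (f := fun b (x : Fin k → Ω) => G (Fin.cons b x))]
  exact (Fintype.sum_equiv (Fin.consEquiv (fun _ : Fin (k + 1) => Ω)) _ _ (fun x => rfl)).symm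

lemma pw_cons {k : ℕ} (b : Ω) (x : Fin k → Ω) :
    pw w (k + 1) (Fin.cons b x) = w b * pw w k x := by
  simp [pw, Fin.prod_univ_succ]

lemma IsW_pw (hw : IsW w) (k : ℕ) : IsW (pw w k) := by
  refine ⟨fun x => Finset.prod_nonneg fun i _ => hw.nonneg _, ?_⟩
  have := Finset.prod_univ_sum (fun _ : Fin k => (Finset.univ : Finset Ω)) (fun _ b => w b)
  simp only [hw.sum_one, Finset.prod_const_one, Fintype.piFinset_univ] at this
  exact this.symm

lemma pw_map {v : B → ℝ} (s : B → Ω) (hs : ∀ ω, ∑ b, (if s b = ω then v b else 0) = w ω) (k : ℕ)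
    (x : Fin k → Ω) :
    ∑ b : Fin k → B, (if (fun i => s (b i)) = x then pw v k b else 0) = pw w k x := by
  have h := Finset.prod_univ_sum (fun _ : Fin k => (Finset.univ : Finset B))
    (fun i b => if s b = x i then v b else 0)
  simp only [hs, Fintype.piFinset_univ] at h
  rw [pw, h]
  refine Finset.sum_congr rfl fun b _ => ?_
  split_ifs with hb
  · refine Finset.prod_congr rfl fun i _ => ?_
    simp [← hb]
  · obtain ⟨i, hi⟩ := Function.ne_iff.1 hb
    exact (Finset.prod_eq_zero (Finset.mem_univ i) (if_neg hi)).symm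

lemma pw_first_moment (hw : IsW w) {k : ℕ} (g : Fin k → Ω → ℝ) :
    ∑ x, pw w k x * ∑ i, g i (x i) = ∑ i, ∑ b, w b * g i b := by
  induction k with
  | zero => simp
  | succ k ih =>
    rw [sum_fin_succ]
    simp only [pw_cons, Fin.sum_univ_succ, Fin.cons_zero, Fin.cons_succ, mul_add,
      Finset.sum_add_distrib]
    congr 1
    · refine Finset.sum_congr rfl fun b _ => ?_
      rw [← Finset.sum_mul, ← Finset.mul_sum, (IsW_pw hw k).sum_one, mul_one]
    · simp only [mul_assoc]
      simp only [← Finset.mul_sum (s := (Finset.univ : Finset (Fin k → Ω)))]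
      rw [← Finset.sum_mul, hw.sum_one, one_mul, ih (fun i => g i.succ)]

lemma pw_second_moment (hw : IsW w) {k : ℕ} (g : Fin k → Ω → ℝ)
    (hg : ∀ i, ∑ b, w b * g i b = 0) :
    ∑ x, pw w k x * (∑ i, g i (x i)) ^ 2 = ∑ i, ∑ b, w b * g i b ^ 2 := by
  induction k with
  | zero => simp
  | succ k ih =>
    rw [sum_fin_succ]
    have h1 := ih (fun i => g i.succ) (fun i => hg i.succ)
    have h0 := pw_first_moment hw (fun i => g (Fin.succ i))
    have h2 : ∀ b, ∑ x, pw w (k + 1) (Fin.cons b x) *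
        (∑ i, g i ((Fin.cons b x : Fin (k + 1) → Ω) i)) ^ 2
        = w b * g 0 b ^ 2 + w b * ∑ i : Fin k, ∑ b, w b * g i.succ b ^ 2 := by
      intro b
      have : ∀ x : Fin k → Ω, pw w (k + 1) (Fin.cons b x) *
        (∑ i, g i ((Fin.cons b x : Fin (k + 1) → Ω) i)) ^ 2
        = w b * g 0 b ^ 2 * pw w k x + 2 * w b * g 0 b * (pw w k x * ∑ i, g i.succ (x i))
          + w b * (pw w k x * (∑ i : Fin k, g i.succ (x i)) ^ 2) := by
        intro x
        simp only [pw_cons, Fin.sum_univ_succ, Fin.cons_zero, Fin.cons_succ]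
        ring
      simp only [this, Finset.sum_add_distrib, ← Finset.mul_sum, (IsW_pw hw k).sum_one, h1, h0]
      simp [hg]
    rw [Finset.sum_congr rfl fun b _ => h2 b, Finset.sum_add_distrib, ← Finset.sum_mul,
      hw.sum_one, one_mul, Fin.sum_univ_succ (fun i => ∑ b, w b * g i b ^ 2)]

lemma ent_equiv {Ω' : Type*} [Fintype Ω'] {w' : Ω' → ℝ} (e : Ω' ≃ Ω)
    (h : ∀ x, w' x = w (e x)) (X : Ω → S) : ent w' (fun x => X (e x)) = ent w X := by
  refine ent_map e (fun ω => ?_) X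
  rw [Finset.sum_eq_single (e.symm ω)]
  · simp [h]
  · intro b _ hb
    rw [if_neg]
    rintro rfl
    simp at hb
  · simp

lemma ent_snd {v : B → ℝ} (hw : IsW w) (Y : B → S) :
    ent (fun x : Ω × B => w x.1 * v x.2) (fun x => Y x.2) = ent v Y := by
  refine ent_map (Prod.snd : Ω × B → B) (fun b => ?_) Y
  rw [Fintype.sum_prod_type]
  simp [← Finset.sum_mul, hw.sum_one]

lemma ent_fst {v : B → ℝ} (hv : IsW v) (X : Ω → S) :
    ent (fun x : Ω × B => w x.1 * v x.2) (fun x => X x.1) = ent w X := by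
  refine ent_map (Prod.fst : Ω × B → Ω) (fun b => ?_) X
  rw [Fintype.sum_prod_type]
  rw [Finset.sum_eq_single b]
  · simp [← Finset.mul_sum, hv.sum_one]
  · intro b' _ h
    simp [h]
  · simp

/-- Submodularity for sums of independent variables:
`H(X+Y+Z) + H(Z) ≤ H(X+Z) + H(Y+Z)` (Kaimanovich-Vershik, Madiman). -/
lemma kv {Ω₁ Ω₂ Ω₃ : Type*} [Fintype Ω₁] [Fintype Ω₂] [Fintype Ω₃]
    {w₁ : Ω₁ → ℝ} {w₂ : Ω₂ → ℝ} {w₃ : Ω₃ → ℝ} (h₁ : IsW w₁) (h₂ : IsW w₂) (h₃ : IsW w₃)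
    (X : Ω₁ → ℤ) (Y : Ω₂ → ℤ) (Z : Ω₃ → ℤ) :
    ent (fun x : Ω₁ × Ω₂ × Ω₃ => w₁ x.1 * (w₂ x.2.1 * w₃ x.2.2))
        (fun x => X x.1 + (Y x.2.1 + Z x.2.2)) + ent w₃ Z
      ≤ ent (fun x : Ω₁ × Ω₃ => w₁ x.1 * w₃ x.2) (fun x => X x.1 + Z x.2)
        + ent (fun x : Ω₂ × Ω₃ => w₂ x.1 * w₃ x.2) (fun x => Y x.1 + Z x.2) := by
  have h23 := IsW_prod h₂ h₃
  have h13 := IsW_prod h₁ h₃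
  have hW := IsW_prod h₁ h23
  have h := submod hW (fun x => X x.1) (fun x => Y x.2.1)
    (fun x => X x.1 + (Y x.2.1 + Z x.2.2))
  have e1 := ent_indep h₁ h23 X (fun x => Y x.1 + Z x.2)
  have e2 := ent_indep h₁ h23 X (fun x => (Y x.1, Z x.2))
  have e3 := ent_indep h₂ h₃ Y Z
  have e4 := ent_indep h₂ h13 Y (fun x => X x.1 + Z x.2)
  have e5 : ent (fun x : Ω₁ × Ω₂ × Ω₃ => w₁ x.1 * (w₂ x.2.1 * w₃ x.2.2))
      (fun x => (Y x.2.1, X x.1 + Z x.2.2))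
      = ent (fun x : Ω₂ × Ω₁ × Ω₃ => w₂ x.1 * (w₁ x.2.1 * w₃ x.2.2))
      (fun x => (Y x.1, X x.2.1 + Z x.2.2)) :=
    ent_equiv (Ω' := Ω₁ × Ω₂ × Ω₃) (Ω := Ω₂ × Ω₁ × Ω₃)
      ⟨fun x => (x.2.1, x.1, x.2.2), fun x => (x.2.1, x.1, x.2.2), fun _ => rfl, fun _ => rfl⟩
      (fun x => by simp only [Equiv.coe_fn_mk]; ring) (fun x => (Y x.1, X x.2.1 + Z x.2.2))
  have c1 : ent (fun x : Ω₁ × Ω₂ × Ω₃ => w₁ x.1 * (w₂ x.2.1 * w₃ x.2.2))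
      (fun x => (X x.1, X x.1 + (Y x.2.1 + Z x.2.2)))
      = ent (fun x : Ω₁ × Ω₂ × Ω₃ => w₁ x.1 * (w₂ x.2.1 * w₃ x.2.2))
      (fun x => (X x.1, Y x.2.1 + Z x.2.2)) := ent_congr fun x x' => by
    simp only [Prod.mk.injEq]; constructor <;> (rintro ⟨h1, h2⟩; constructor <;> lia)
  have c2 : ent (fun x : Ω₁ × Ω₂ × Ω₃ => w₁ x.1 * (w₂ x.2.1 * w₃ x.2.2))
      (fun x => (X x.1, Y x.2.1, X x.1 + (Y x.2.1 + Z x.2.2)))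
      = ent (fun x : Ω₁ × Ω₂ × Ω₃ => w₁ x.1 * (w₂ x.2.1 * w₃ x.2.2))
      (fun x => (X x.1, Y x.2.1, Z x.2.2)) := ent_congr fun x x' => by
    simp only [Prod.mk.injEq]; constructor <;> (rintro ⟨h1, h2, h3⟩; refine ⟨?_, ?_, ?_⟩ <;> lia)
  have c3 : ent (fun x : Ω₁ × Ω₂ × Ω₃ => w₁ x.1 * (w₂ x.2.1 * w₃ x.2.2))
      (fun x => (Y x.2.1, X x.1 + (Y x.2.1 + Z x.2.2)))
      = ent (fun x : Ω₁ × Ω₂ × Ω₃ => w₁ x.1 * (w₂ x.2.1 * w₃ x.2.2))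
      (fun x => (Y x.2.1, X x.1 + Z x.2.2)) := ent_congr fun x x' => by
    simp only [Prod.mk.injEq]; constructor <;> (rintro ⟨h1, h2⟩; constructor <;> lia)
  linarith

/-- `k` independent copies of `Θ` cost at most `k` times the entropy increment of one copy. -/
lemma kv_iter {v : B → ℝ} (hw : IsW w) (hv : IsW v) (Θ : Ω → ℤ) (Y : B → ℤ) (k : ℕ) :
    ent (fun x : (Fin k → Ω) × B => pw w k x.1 * v x.2) (fun x => ∑ i, Θ (x.1 i) + Y x.2)
      ≤ ent v Y + k * (ent (fun x : Ω × B => w x.1 * v x.2) (fun x => Θ x.1 + Y x.2)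
          - ent v Y) := by
  induction k with
  | zero =>
    have := ent_snd (IsW_pw hw 0) (v := v) Y
    simp only [Finset.univ_eq_empty, Finset.sum_empty, zero_add] at this ⊢
    rw [this]; simp
  | succ k ih =>
    have h := kv hw (IsW_pw hw k) hv Θ (fun x => ∑ i, Θ (x i)) Y
    have e : ent (fun x : Ω × (Fin k → Ω) × B => w x.1 * (pw w k x.2.1 * v x.2.2))
        (fun x => Θ x.1 + (∑ i, Θ (x.2.1 i) + Y x.2.2))
        = ent (fun x : (Fin (k + 1) → Ω) × B => pw w (k + 1) x.1 * v x.2)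
          (fun x => ∑ i, Θ (x.1 i) + Y x.2) := by
      rw [← ent_equiv (Ω' := Ω × (Fin k → Ω) × B) (Ω := (Fin (k + 1) → Ω) × B)
        (w' := fun x : Ω × (Fin k → Ω) × B => w x.1 * (pw w k x.2.1 * v x.2.2))
        ((Equiv.prodAssoc _ _ _).symm.trans
          (Equiv.prodCongr (Fin.consEquiv (fun _ : Fin (k + 1) => Ω)) (Equiv.refl B)))
        (fun x => by
          change w x.1 * (pw w k x.2.1 * v x.2.2)
            = pw w (k + 1) (Fin.cons x.1 x.2.1) * v x.2.2
          rw [pw_cons]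
          ring)]
      congr 1
      funext x
      simp [Fin.sum_univ_succ, add_assoc]
    push_cast
    rw [e] at h
    linarith

/-- Entropy of the integer variable `U` at scale `2 ^ j`. -/
def sent (w : Ω → ℝ) (U : Ω → ℤ) (j : ℕ) : ℝ := ent w (fun ω => U ω / 2 ^ j)

lemma sent_zero (U : Ω → ℤ) : sent w U 0 = ent w U := by simp [sent]

lemma div_two_pow_add (a : ℤ) (j l : ℕ) : a / 2 ^ (j + l) = a / 2 ^ j / 2 ^ l := by
  rw [pow_add, Int.ediv_ediv_of_nonneg (by positivity)]

lemma sent_antitone (hw : IsW w) (U : Ω → ℤ) : Antitone (sent w U) := by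
  intro i j hij
  obtain ⟨l, rfl⟩ := Nat.exists_eq_add_of_le hij
  refine ent_mono hw fun ω ω' h => ?_
  rw [div_two_pow_add, div_two_pow_add, h]

lemma sent_nonneg (hw : IsW w) (U : Ω → ℤ) (j : ℕ) : 0 ≤ sent w U j := ent_nonneg hw _

lemma sent_le_add (hw : IsW w) (U : Ω → ℤ) (j g : ℕ) :
    sent w U j ≤ sent w U (j + g) + g * Real.log 2 := by
  have h1 : sent w U j ≤ ent w (fun ω => (U ω / 2 ^ (j + g), (U ω / 2 ^ j) % 2 ^ g)) :=
    ent_mono hw (by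
      intro ω ω' h
      simp only [Prod.mk.injEq, div_two_pow_add] at h
      rw [← Int.mul_ediv_add_emod (U ω' / 2 ^ j) (2 ^ g), h.1, h.2, Int.mul_ediv_add_emod])
  have h2 := ent_pair_le hw (fun ω => U ω / 2 ^ (j + g)) (fun ω => (U ω / 2 ^ j) % 2 ^ g)
  have h3 := ent_le_log_card hw (fun ω => (U ω / 2 ^ j) % 2 ^ g) (Finset.Ico 0 (2 ^ g))
    (fun ω _ => by
      simp only [Finset.mem_Ico]
      exact ⟨Int.emod_nonneg _ (by positivity), Int.emod_lt_of_pos _ (by positivity)⟩)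
  have h4 : ((Finset.Ico (0:ℤ) (2 ^ g)).card : ℝ) = 2 ^ g := by
    rw [Int.card_Ico]
    have : (2 ^ g - 0 : ℤ).toNat = 2 ^ g := by
      have : (2 ^ g - 0 : ℤ) = ((2 ^ g : ℕ) : ℤ) := by push_cast; ring
      rw [this, Int.toNat_natCast]
    rw [this]; push_cast; rfl
  rw [h4, Real.log_pow] at h3
  rw [sent] at *
  unfold sent
  linarith

/-- Concavity of the entropy between two scales. -/
lemma sent_mix {A : Type*} [Fintype A] {q : A → ℝ} {v : A → B → ℝ}
    (hq : IsW q) (hv : ∀ a, q a ≠ 0 → IsW (v a)) (U : A × B → ℤ) (j l : ℕ) :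
    ∑ a, q a * (sent (v a) (fun b => U (a, b)) j - sent (v a) (fun b => U (a, b)) (j + l))
      ≤ sent (fun x : A × B => q x.1 * v x.1 x.2) U j
        - sent (fun x : A × B => q x.1 * v x.1 x.2) U (j + l) :=
  mixture hq hv (fun x => U x / 2 ^ j) (fun x => U x / 2 ^ (j + l))
    (fun x x' h => by rw [div_two_pow_add, div_two_pow_add, h])

lemma telescope (φ : ℕ → ℝ) (g N : ℕ) :
    ∑ j ∈ Finset.range N, (φ j - φ (j + g))
      = ∑ j ∈ Finset.range g, φ j - ∑ j ∈ Finset.range g, φ (N + j) := by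
  induction N with
  | zero => simp
  | succ N ih =>
    rw [Finset.sum_range_succ, ih]
    have h1 := Finset.sum_range_succ (fun j => φ (N + j)) g
    have h2 := Finset.sum_range_succ' (fun j => φ (N + j)) g
    have h3 : ∀ j, N + (j + 1) = N + 1 + j := fun j => by ring
    rw [Finset.sum_congr rfl fun j _ => congrArg φ (h3 j)] at h2
    simp only [add_zero] at h2
    linarith

lemma telescope_le {φ : ℕ → ℝ} (hφ : Antitone φ) (h0 : ∀ j, 0 ≤ φ j) (g N : ℕ) :
    ∑ j ∈ Finset.range N, (φ j - φ (j + g)) ≤ g * φ 0 := by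
  rw [telescope]
  have h1 : ∑ j ∈ Finset.range g, φ j ≤ ∑ j ∈ Finset.range g, φ 0 :=
    Finset.sum_le_sum fun j _ => hφ (Nat.zero_le j)
  have h2 : 0 ≤ ∑ j ∈ Finset.range g, φ (N + j) := Finset.sum_nonneg fun j _ => h0 _
  simp at h1
  linarith

lemma le_telescope {φ : ℕ → ℝ} (hφ : Antitone φ) (g N : ℕ) :
    g * (φ g - φ N) ≤ ∑ j ∈ Finset.range N, (φ j - φ (j + g)) := by
  rw [telescope]
  have h1 : ∑ j ∈ Finset.range g, φ g ≤ ∑ j ∈ Finset.range g, φ j :=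
    Finset.sum_le_sum fun j hj => hφ (Finset.mem_range.1 hj).le
  have h2 : ∑ j ∈ Finset.range g, φ (N + j) ≤ ∑ j ∈ Finset.range g, φ N :=
    Finset.sum_le_sum fun j _ => hφ (Nat.le_add_right _ _)
  simp at h1 h2
  linarith

end products

/-! ### Moment bounds and anticoncentration -/

section anticonc

variable {Ω B S : Type*} [Fintype Ω] [Fintype B] {w : Ω → ℝ}

lemma floor_div_pow (x : ℝ) (j : ℕ) : ⌊x⌋ / 2 ^ j = ⌊x / 2 ^ j⌋ := by
  have := Int.floor_div_natCast x (2 ^ j)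
  push_cast at this
  exact this.symm

lemma ent_ge (hw : IsW w) (X : Ω → S) (a : ℝ)
    (h : ∀ ω, w ω ≠ 0 → Real.log (mass w X ω) ≤ -a) : a ≤ ent w X := by
  have h1 : ∑ ω, w ω * Real.log (mass w X ω) ≤ ∑ ω, w ω * (-a) := by
    refine Finset.sum_le_sum fun ω _ => ?_
    by_cases h0 : w ω = 0
    · simp [h0]
    · exact mul_le_mul_of_nonneg_left (h ω h0) (hw.nonneg ω)
  rw [← Finset.sum_mul, hw.sum_one] at h1
  rw [ent]
  linarith

lemma sum_half_pow_inj (A : Finset ℤ) (f : ℤ → ℕ) (hf : Set.InjOn f A) :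
    ∑ z ∈ A, (1 / 2 : ℝ) ^ f z ≤ 2 := by
  rw [← Finset.sum_image (f := fun n => (1 / 2 : ℝ) ^ n) hf]
  exact (summable_geometric_two.sum_le_tsum _ (fun n _ => by positivity)).trans
    tsum_geometric_two.le

/-- A variable with small first absolute moment has small entropy. -/
lemma ent_le_moment (hw : IsW w) (U : Ω → ℤ) (a : ℤ) :
    ent w U ≤ Real.log 2 * ∑ ω, w ω * |(U ω : ℝ) - a| + 2 * Real.log 2 := by
  have hsum : ∀ A : Finset ℤ, ∑ z ∈ A, (1 / 2 : ℝ) ^ (z - a).natAbs / 4 ≤ 1 := by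
    intro A
    rw [← Finset.sum_div, ← Finset.sum_filter_add_sum_filter_not A (fun z => a ≤ z)]
    have h1 := sum_half_pow_inj (A.filter (fun z => a ≤ z)) (fun z => (z - a).natAbs) (by
      intro x hx y hy h
      simp only [Finset.coe_filter, Set.mem_ofPred_eq] at hx hy h
      omega)
    have h2 := sum_half_pow_inj (A.filter (fun z => ¬ a ≤ z)) (fun z => (z - a).natAbs) (by
      intro x hx y hy h
      simp only [Finset.coe_filter, Set.mem_ofPred_eq] at hx hy h
      omega)
    linarith
  have h := gibbs hw U (fun z => (1 / 2 : ℝ) ^ (z - a).natAbs / 4) (fun z => by positivity)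
    (fun ω _ => by positivity) (Finset.univ.image U)
    (fun ω => Finset.mem_image_of_mem _ (Finset.mem_univ _)) (hsum _)
  refine h.trans (le_of_eq ?_)
  have e : ∀ ω, w ω * Real.log ((1 / 2 : ℝ) ^ (U ω - a).natAbs / 4)
      = -(Real.log 2 * (w ω * |(U ω : ℝ) - a|)) - w ω * (2 * Real.log 2) := by
    intro ω
    rw [Real.log_div (by positivity) (by norm_num), Real.log_pow, one_div, Real.log_inv,
      show (4 : ℝ) = 2 ^ 2 by norm_num, Real.log_pow, Nat.cast_natAbs]
    push_cast
    ring
  simp only [e, Finset.sum_sub_distrib, Finset.sum_neg_distrib, ← Finset.mul_sum, ← Finset.sum_mul,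
    hw.sum_one]
  ring

lemma centralBinom_sq_le (n : ℕ) : n.centralBinom ^ 2 * (2 * n + 1) ≤ 16 ^ n := by
  induction n with
  | zero => simp
  | succ n ih =>
    have h := Nat.succ_mul_centralBinom_succ n
    have h2 : ((n + 1) * (n + 1).centralBinom) ^ 2 * (2 * (n + 1) + 1)
        ≤ 16 ^ (n + 1) * (n + 1) ^ 2 := by
      rw [h]
      calc (2 * (2 * n + 1) * n.centralBinom) ^ 2 * (2 * (n + 1) + 1)
          = (n.centralBinom ^ 2 * (2 * n + 1)) * (4 * (2 * n + 1) * (2 * n + 3)) := by ring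
        _ ≤ 16 ^ n * (4 * (2 * n + 1) * (2 * n + 3)) := Nat.mul_le_mul_right _ ih
        _ ≤ 16 ^ n * (16 * (n + 1) ^ 2) := Nat.mul_le_mul_left _ (by nlinarith)
        _ = 16 ^ (n + 1) * (n + 1) ^ 2 := by ring
    have h3 : 0 < (n + 1) ^ 2 := by positivity
    refine Nat.le_of_mul_le_mul_right (?_ : _ * (n + 1) ^ 2 ≤ _ * (n + 1) ^ 2) h3
    calc _ = ((n + 1) * (n + 1).centralBinom) ^ 2 * (2 * (n + 1) + 1) := by ring
      _ ≤ _ := h2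

lemma choose_half_sq_le (m : ℕ) : (m.choose (m / 2)) ^ 2 * m ≤ 4 ^ m := by
  rcases Nat.even_or_odd' m with ⟨n, rfl | rfl⟩
  · have h := centralBinom_sq_le n
    rw [Nat.centralBinom] at h
    rw [show 2 * n / 2 = n by omega, pow_mul]
    refine le_trans ?_ h
    exact Nat.mul_le_mul_left _ (by omega)
  · have h := centralBinom_sq_le n
    have h1 : (2 * n + 1).choose n ≤ 2 * n.centralBinom := by
      rcases n with _ | n
      · simp
      · rw [Nat.choose_succ_succ]
        have := Nat.choose_le_centralBinom n (n + 1)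
        have : (2 * (n + 1)).choose n.succ ≤ _ := Nat.choose_le_centralBinom (n + 1) (n + 1)
        omega
    rw [show (2 * n + 1) / 2 = n by omega]
    calc _ ≤ (2 * n.centralBinom) ^ 2 * (2 * n + 1) := by gcongr
      _ = 4 * (n.centralBinom ^ 2 * (2 * n + 1)) := by ring
      _ ≤ 4 * 16 ^ n := by gcongr
      _ = 4 ^ (2 * n + 1) := by rw [pow_succ, pow_mul]; ring

/-- The Littlewood-Offord inequality of Erdős: signed choices with gaps at least `D` hit a window
of length `D` at most `choose m (m/2)` times. -/
lemma littlewood_offord {ι : Type*} [Fintype ι] (x y : ι → ℤ) (D : ℤ)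
    (h : ∀ i, D ≤ |x i - y i|) (hD : 0 < D) (c : ℤ) :
    (Finset.univ.filter (fun η : ι → Bool => c ≤ ∑ i, (if η i then x i else y i) ∧
      ∑ i, (if η i then x i else y i) < c + D)).card
      ≤ (Fintype.card ι).choose (Fintype.card ι / 2) := by
  set 𝒮 := Finset.univ.filter (fun η : ι → Bool => c ≤ ∑ i, (if η i then x i else y i) ∧
      ∑ i, (if η i then x i else y i) < c + D) with h𝒮
  -- the set of indices where the larger of `x i`, `y i` is chosen
  let φ : (ι → Bool) → Finset ι := fun η => Finset.univ.filter (fun i => η i = decide (y i < x i))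
  have hφ : Function.Injective φ := by
    intro η η' he
    funext i
    have : i ∈ φ η ↔ i ∈ φ η' := by rw [he]
    simp only [φ, Finset.mem_filter, Finset.mem_univ, true_and] at this
    by_cases hxy : y i < x i <;> cases h1 : η i <;> cases h2 : η' i <;> simp_all <;> omega
  have hanti : IsAntichain (· ⊆ ·) (SetLike.coe (𝒮.image φ)) := by
    intro a ha b hb hab hsub
    simp only [Finset.coe_image, Set.mem_image, Finset.mem_coe] at ha hb
    obtain ⟨η, hη, rfl⟩ := ha
    obtain ⟨η', hη', rfl⟩ := hb
    simp only [h𝒮, Finset.mem_filter, Finset.mem_univ, true_and] at hη hη'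
    have hss : φ η ⊂ φ η' := lt_of_le_of_ne hsub hab
    obtain ⟨i, hi', hi⟩ := Finset.exists_of_ssubset hss
    have hle : ∀ j, (if η j then x j else y j) ≤ (if η' j then x j else y j) := by
      intro j
      have hj : j ∈ φ η → j ∈ φ η' := fun hj => hsub hj
      simp only [φ, Finset.mem_filter, Finset.mem_univ, true_and] at hj
      by_cases hxy : y j < x j <;> cases h1 : η j <;> cases h2 : η' j <;> simp_all <;> omega
    have hi2 : (if η i then x i else y i) + D ≤ (if η' i then x i else y i) := by
      have := h i
      simp only [φ, Finset.mem_filter, Finset.mem_univ, true_and] at hi hi'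
      rcases abs_cases (x i - y i) with ⟨h3, h4⟩ | ⟨h3, h4⟩ <;>
      by_cases hxy : y i < x i <;> cases h1 : η i <;> cases h2 : η' i <;> simp_all <;> omega
    have hsum : ∑ j, (if η j then x j else y j) + D ≤ ∑ j, (if η' j then x j else y j) := by
      rw [← Finset.add_sum_erase _ _ (Finset.mem_univ i),
        ← Finset.add_sum_erase Finset.univ (fun j => if η' j then x j else y j) (Finset.mem_univ i)]
      have := Finset.sum_le_sum (s := Finset.univ.erase i) fun j _ => hle j
      linarith
    omega
  have := hanti.sperner
  rwa [Finset.card_image_of_injective _ hφ] at this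

/-- Uniform weight on `{0,1}`. -/
def half (_ : Bool) : ℝ := 1 / 2

lemma IsW_half : IsW half := ⟨fun _ => by norm_num [half], by simp [half]⟩

lemma pw_half (k : ℕ) (η : Fin k → Bool) : pw half k η = (1 / 2) ^ k := by simp [pw, half]

lemma window_mass {k : ℕ} (x y : Fin k → ℤ) (D : ℤ) (hD : 0 < D) (c : ℤ) {m : ℕ}
    (hm : m = Fintype.card {i // D ≤ |x i - y i|}) :
    ∑ η : Fin k → Bool, (if c ≤ ∑ i, (if η i then x i else y i) ∧
      ∑ i, (if η i then x i else y i) < c + D then pw half k η else 0)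
      ≤ m.choose (m / 2) / 2 ^ m := by
  let e := Equiv.piEquivPiSubtypeProd (fun i => D ≤ |x i - y i|) (fun _ : Fin k => Bool)
  have hk : m + Fintype.card {i // ¬ D ≤ |x i - y i|} = k := by
    rw [hm, ← Fintype.card_sum, Fintype.card_congr (Equiv.sumCompl _), Fintype.card_fin]
  have hs : ∀ η : Fin k → Bool, ∑ i, (if η i then x i else y i)
      = ∑ i : {i // D ≤ |x i - y i|}, (if (e η).1 i then x i else y i)
        + ∑ i : {i // ¬ D ≤ |x i - y i|}, (if (e η).2 i then x i else y i) := by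
    intro η
    rw [← Fintype.sum_subtype_add_sum_subtype (fun i => D ≤ |x i - y i|)]
    rfl
  simp only [pw_half, hs]
  rw [Fintype.sum_equiv e _ (fun ζ => if c ≤
      ∑ i : {i // D ≤ |x i - y i|}, (if ζ.1 i then x i else y i)
        + ∑ i : {i // ¬ D ≤ |x i - y i|}, (if ζ.2 i then x i else y i) ∧
      ∑ i : {i // D ≤ |x i - y i|}, (if ζ.1 i then x i else y i)
        + ∑ i : {i // ¬ D ≤ |x i - y i|}, (if ζ.2 i then x i else y i) < c + D
      then (1 / 2 : ℝ) ^ k else 0) (fun η => rfl), Fintype.sum_prod_type_right]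
  have hb : ∀ ζ : {i // ¬ D ≤ |x i - y i|} → Bool,
      ∑ ξ : {i // D ≤ |x i - y i|} → Bool, (if c ≤
      ∑ i : {i // D ≤ |x i - y i|}, (if ξ i then x i else y i)
        + ∑ i : {i // ¬ D ≤ |x i - y i|}, (if ζ i then x i else y i) ∧
      ∑ i : {i // D ≤ |x i - y i|}, (if ξ i then x i else y i)
        + ∑ i : {i // ¬ D ≤ |x i - y i|}, (if ζ i then x i else y i) < c + D
      then (1 / 2 : ℝ) ^ k else 0) ≤ m.choose (m / 2) * (1 / 2) ^ k := by
    intro ζ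
    set d := ∑ i : {i // ¬ D ≤ |x i - y i|}, (if ζ i then x i else y i)
    have h := littlewood_offord (fun i : {i // D ≤ |x i - y i|} => x i) (fun i => y i) D
      (fun i => i.2) hD (c - d)
    rw [← hm] at h
    rw [← Finset.sum_filter, Finset.sum_const, nsmul_eq_mul]
    refine mul_le_mul_of_nonneg_right ?_ (by positivity)
    refine le_trans ?_ (Nat.cast_le.2 h)
    refine Nat.cast_le.2 (Finset.card_le_card ?_)
    intro ξ hξ
    simp only [Finset.mem_filter, Finset.mem_univ, true_and] at hξ ⊢
    constructor <;> linarith [hξ.1, hξ.2]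
  refine (Finset.sum_le_sum fun ζ _ => hb ζ).trans (le_of_eq ?_)
  rw [Finset.sum_const, Finset.card_univ, Fintype.card_fun, Fintype.card_bool, nsmul_eq_mul]
  have hk2 : (1 / 2 : ℝ) ^ k
      = (1 / 2) ^ m * (1 / 2) ^ Fintype.card {i // ¬ D ≤ |x i - y i|} := by
    rw [← pow_add, hk]
  rw [hk2]
  push_cast
  have : (2 : ℝ) ^ Fintype.card {i // ¬ D ≤ |x i - y i|}
    * (1 / 2) ^ Fintype.card {i // ¬ D ≤ |x i - y i|} = 1 := by
    rw [← mul_pow]; norm_num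
  calc _ = (2 : ℝ) ^ Fintype.card {i // ¬ D ≤ |x i - y i|}
    * (1 / 2) ^ Fintype.card {i // ¬ D ≤ |x i - y i|} * (m.choose (m / 2) * (1 / 2) ^ m) := by ring
    _ = _ := by rw [this, one_mul, one_div, inv_pow, div_eq_mul_inv]

/-- A random signed sum with `m` gaps of size at least `2 ^ j` is spread at scale `2 ^ j`. -/
lemma signs_lower {k : ℕ} (x y : Fin k → ℤ) (c : ℤ) (j : ℕ) {m : ℕ}
    (hm : m = Fintype.card {i // (2 : ℤ) ^ j ≤ |x i - y i|}) (h1 : 1 ≤ m) :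
    1 / 2 * Real.log m
      ≤ sent (pw half k) (fun η => ∑ i, (if η i then x i else y i) + c) j := by
  refine ent_ge (IsW_pw IsW_half k) _ _ fun η _ => ?_
  set U : (Fin k → Bool) → ℤ := fun η => ∑ i, (if η i then x i else y i) + c
  have hle : mass (pw half k) (fun η => U η / 2 ^ j) η ≤ m.choose (m / 2) / 2 ^ m := by
    refine le_trans ?_ (window_mass x y (2 ^ j) (by positivity) (2 ^ j * (U η / 2 ^ j) - c) hm)
    refine Finset.sum_le_sum fun η' _ => ?_
    have hnn := (IsW_pw IsW_half k).nonneg η'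
    by_cases he : U η' / 2 ^ j = U η / 2 ^ j
    · rw [if_pos he, if_pos]
      have h2 := Int.mul_ediv_add_emod (U η') (2 ^ j)
      have h3 := Int.emod_nonneg (U η') (show (2 : ℤ) ^ j ≠ 0 by positivity)
      have h4 := Int.emod_lt_of_pos (U η') (show (0 : ℤ) < 2 ^ j by positivity)
      rw [he] at h2
      have h5 : ∑ i, (if η' i then x i else y i) = U η' - c := by simp [U]
      rw [h5]
      constructor <;> linarith
    · rw [if_neg he]
      split_ifs <;> simp [hnn]
  have hpos : 0 < mass (pw half k) (fun η => U η / 2 ^ j) η :=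
    mass_pos (IsW_pw IsW_half k) _ (by rw [pw_half]; positivity)
  have hm0 : (0 : ℝ) < m := by exact_mod_cast h1
  have hsq : (mass (pw half k) (fun η => U η / 2 ^ j) η) ^ 2 ≤ 1 / m := by
    refine (pow_le_pow_left₀ hpos.le hle 2).trans ?_
    rw [div_pow, div_le_div_iff₀ (by positivity) hm0, one_mul]
    have := choose_half_sq_le m
    have h4 : ((2 : ℝ) ^ m) ^ 2 = 4 ^ m := by rw [← pow_mul, mul_comm, pow_mul]; norm_num
    rw [h4]
    exact_mod_cast this
  have := Real.log_le_log (by positivity) hsq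
  rw [Real.log_pow, one_div, Real.log_inv] at this
  push_cast at this
  linarith

/-- A random signed sum of `4 ^ q` terms with gaps at most `2 ^ i` is concentrated at scale
`2 ^ (i + q)`. -/
lemma signs_upper {q : ℕ} (x y : Fin (4 ^ q) → ℤ) (c : ℤ) (i : ℕ)
    (h : ∀ a, |x a - y a| ≤ 2 ^ i) :
    sent (pw half (4 ^ q)) (fun η => ∑ a, (if η a then x a else y a) + c) (i + q)
      ≤ 4 * Real.log 2 := by
  have hu := IsW_pw IsW_half (4 ^ q)
  set U : (Fin (4 ^ q) → Bool) → ℤ := fun η => ∑ a, (if η a then x a else y a) + c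
  set M : ℝ := ∑ a, ((x a : ℝ) + y a) / 2 + c
  have hsec := pw_second_moment IsW_half (k := 4 ^ q)
    (fun a b => (if b then (x a : ℝ) else y a) - ((x a : ℝ) + y a) / 2)
    (fun a => by simp [half]; ring)
  have hU : ∀ η, ∑ a, ((if η a then (x a : ℝ) else y a) - ((x a : ℝ) + y a) / 2) = U η - M := by
    intro η
    simp only [U, M, Finset.sum_sub_distrib]
    push_cast
    ring
  simp only [hU] at hsec
  have hsec2 : ∑ η, pw half (4 ^ q) η * ((U η : ℝ) - M) ^ 2 ≤ (2 ^ (i + q)) ^ 2 / 4 := by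
    rw [hsec]
    have : ∀ a ∈ (Finset.univ : Finset (Fin (4 ^ q))),
        ∑ b, half b * ((if b then (x a : ℝ) else y a) - ((x a : ℝ) + y a) / 2) ^ 2
        ≤ (2 ^ i) ^ 2 / 4 := by
      intro a _
      have h1 : |(x a : ℝ) - y a| ≤ 2 ^ i := by exact_mod_cast h a
      have h2 : ((x a : ℝ) - y a) ^ 2 ≤ (2 ^ i) ^ 2 := by
        rw [← sq_abs]; exact pow_le_pow_left₀ (abs_nonneg _) h1 2
      simp [half]
      nlinarith
    refine (Finset.sum_le_sum this).trans (le_of_eq ?_)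
    rw [Finset.sum_const, Finset.card_univ, Fintype.card_fin, nsmul_eq_mul]
    push_cast
    rw [pow_add, mul_pow, ← pow_mul 2 q 2, mul_comm q 2, pow_mul]
    norm_num
    ring
  have hm := ent_le_moment hu (fun η => U η / 2 ^ (i + q)) ⌊M / 2 ^ (i + q)⌋
  set P : ℝ := 2 ^ (i + q)
  have hP : 0 < P := by positivity
  have hpt : ∀ η, |((U η / 2 ^ (i + q) : ℤ) : ℝ) - ⌊M / P⌋|
      ≤ 3 / 2 + 1 / 2 * (1 / P ^ 2 * ((U η : ℝ) - M) ^ 2) := by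
    intro η
    have e1 : ((U η / 2 ^ (i + q) : ℤ) : ℝ) = ⌊(U η : ℝ) / P⌋ := by
      rw [← floor_div_pow, Int.floor_intCast]
    rw [e1]
    have h1 := Int.floor_le ((U η : ℝ) / P)
    have h2 := Int.lt_floor_add_one ((U η : ℝ) / P)
    have h3 := Int.floor_le (M / P)
    have h4 := Int.lt_floor_add_one (M / P)
    have h5 : ((U η : ℝ) - M) / P = (U η : ℝ) / P - M / P := by ring
    have h6 : 1 / P ^ 2 * ((U η : ℝ) - M) ^ 2 = ((U η : ℝ) / P - M / P) ^ 2 := by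
      rw [← h5, div_pow]; ring
    rw [h6, abs_le]
    constructor <;>
      nlinarith [sq_nonneg ((U η : ℝ) / P - M / P - 1), sq_nonneg ((U η : ℝ) / P - M / P + 1)]
  have hE : ∑ η, pw half (4 ^ q) η * |((U η / 2 ^ (i + q) : ℤ) : ℝ) - ⌊M / P⌋| ≤ 2 := by
    refine (Finset.sum_le_sum fun η _ => mul_le_mul_of_nonneg_left (hpt η) (hu.nonneg η)).trans ?_
    have : ∀ η, pw half (4 ^ q) η * (3 / 2 + 1 / 2 * (1 / P ^ 2 * ((U η : ℝ) - M) ^ 2))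
        = pw half (4 ^ q) η * (3 / 2)
          + 1 / 2 * (1 / P ^ 2) * (pw half (4 ^ q) η * ((U η : ℝ) - M) ^ 2) := fun η => by ring
    simp only [this, Finset.sum_add_distrib, ← Finset.sum_mul, ← Finset.mul_sum, hu.sum_one]
    have h7 : 1 / 2 * (1 / P ^ 2) * ∑ η, pw half (4 ^ q) η * ((U η : ℝ) - M) ^ 2
        ≤ 1 / 2 * (1 / P ^ 2) * (P ^ 2 / 4) := mul_le_mul_of_nonneg_left hsec2 (by positivity)
    have h8 : 1 / 2 * (1 / P ^ 2) * (P ^ 2 / 4) = 1 / 8 := by field_simp; norm_num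
    linarith
  have hl := Real.log_nonneg (show (1 : ℝ) ≤ 2 by norm_num)
  rw [sent]
  nlinarith

end anticonc

/-! ### Entropy gain for sums of independent integer variables -/

section gain

variable {Ω B S : Type*} [Fintype Ω] [Fintype B] {w : Ω → ℝ} {v : B → ℝ}

/-- Law of a pair of copies of `Θ`, conditionally independent given `Θ / 2 ^ i`. -/
def pairW (w : Ω → ℝ) (Θ : Ω → ℤ) (i : ℕ) (x : Ω × Ω) : ℝ :=
  w x.1 * cw w (fun ω => Θ ω / 2 ^ i) x.1 x.2

lemma IsW_pairW (hw : IsW w) (Θ : Ω → ℤ) (i : ℕ) : IsW (pairW w Θ i) :=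
  IsW_kernel hw fun _ h => IsW_cw hw _ h

/-- Probability that a pair sharing the same cell of size `2 ^ (j + g)` is `2 ^ j` apart. -/
def farP (w : Ω → ℝ) (Θ : Ω → ℤ) (j g : ℕ) : ℝ :=
  ∑ x : Ω × Ω, pairW w Θ (j + g) x * (if (2 : ℤ) ^ j ≤ |Θ x.1 - Θ x.2| then 1 else 0)

/-- Entropy between the scales `2 ^ (j + g)` and `2 ^ j` forces separated pairs. -/
lemma sent_le_farP (hw : IsW w) (Θ : Ω → ℤ) (j g : ℕ) :
    sent w Θ j - sent w Θ (j + g) ≤ Real.log 6 + farP w Θ j g * (g * Real.log 2) := by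
  have h1 : sent w Θ j = ent w (fun ω => (Θ ω / 2 ^ j, Θ ω / 2 ^ (j + g))) :=
    ent_congr fun ω ω' => by
      simp only [Prod.mk.injEq]
      refine ⟨fun h => h.1, fun h => ⟨h, ?_⟩⟩
      rw [div_two_pow_add, div_two_pow_add, h]
  have hl := Real.log_nonneg (show (1 : ℝ) ≤ 2 by norm_num)
  rw [h1, chain_cw hw, sent, add_sub_cancel_left, farP, Fintype.sum_prod_type]
  have key : ∀ ω₀, w ω₀ * ent (cw w (fun ω => Θ ω / 2 ^ (j + g)) ω₀) (fun ω => Θ ω / 2 ^ j)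
      ≤ w ω₀ * (Real.log 6 + (∑ ω, cw w (fun ω => Θ ω / 2 ^ (j + g)) ω₀ ω *
        (if (2 : ℤ) ^ j ≤ |Θ ω₀ - Θ ω| then 1 else 0)) * (g * Real.log 2)) := by
    intro ω₀
    by_cases h0 : w ω₀ = 0
    · simp [h0]
    refine mul_le_mul_of_nonneg_left ?_ (hw.nonneg ω₀)
    have hc := IsW_cw hw (fun ω => Θ ω / 2 ^ (j + g)) h0
    set C := cw w (fun ω => Θ ω / 2 ^ (j + g)) ω₀ with hC
    set x₀ := Θ ω₀ / 2 ^ j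
    let q : ℤ → ℝ := fun x => (if |x - x₀| ≤ 1 then 1 / 6 else 0)
      + (if x / 2 ^ g = Θ ω₀ / 2 ^ (j + g) then 1 / 2 * (1 / 2) ^ g else 0)
    have hg := gibbs hc (fun ω => Θ ω / 2 ^ j) q (fun x => by positivity) (fun ω hω => by
        have : Θ ω / 2 ^ (j + g) = Θ ω₀ / 2 ^ (j + g) := by
          by_contra hne
          exact hω (by rw [hC, cw, if_neg hne])
        have h2 : (Θ ω / 2 ^ j) / 2 ^ g = Θ ω₀ / 2 ^ (j + g) := by rw [← this, div_two_pow_add]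
        simp only [q, h2, if_true]
        positivity) (Finset.univ.image (fun ω => Θ ω / 2 ^ j))
      (fun ω => Finset.mem_image_of_mem _ (Finset.mem_univ _)) (by
        rw [Finset.sum_add_distrib, ← Finset.sum_filter, ← Finset.sum_filter]
        simp only [Finset.sum_const, nsmul_eq_mul]
        set A := Finset.univ.image (fun ω => Θ ω / 2 ^ j)
        have c1 : ((A.filter (fun x => |x - x₀| ≤ 1)).card : ℝ) ≤ 3 := by
          have : (A.filter (fun x => |x - x₀| ≤ 1)) ⊆ Finset.Icc (x₀ - 1) (x₀ + 1) := by
            intro x hx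
            simp only [Finset.mem_filter, abs_le] at hx
            simp only [Finset.mem_Icc]
            omega
          have h3 := Finset.card_le_card this
          rw [Int.card_Icc] at h3
          have : (x₀ + 1 + 1 - (x₀ - 1)).toNat = 3 := by omega
          rw [this] at h3
          exact_mod_cast h3
        set z := Θ ω₀ / 2 ^ (j + g)
        have c2 : ((A.filter (fun x => x / 2 ^ g = z)).card : ℝ) ≤ 2 ^ g := by
          have : (A.filter (fun x => x / 2 ^ g = z)) ⊆ Finset.Ico (2 ^ g * z) (2 ^ g * z + 2 ^ g) := by
            intro x hx
            simp only [Finset.mem_filter] at hx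
            have e1 := Int.mul_ediv_add_emod x (2 ^ g)
            have e2 := Int.emod_nonneg x (show (2 : ℤ) ^ g ≠ 0 by positivity)
            have e3 := Int.emod_lt_of_pos x (show (0 : ℤ) < 2 ^ g by positivity)
            rw [hx.2] at e1
            simp only [Finset.mem_Ico]
            constructor <;> linarith
          have h3 := Finset.card_le_card this
          rw [Int.card_Ico] at h3
          have : (2 ^ g * z + 2 ^ g - 2 ^ g * z).toNat = 2 ^ g := by
            have : (2 ^ g * z + 2 ^ g - 2 ^ g * z) = ((2 ^ g : ℕ) : ℤ) := by push_cast; ring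
            rw [this, Int.toNat_natCast]
          rw [this] at h3
          exact_mod_cast h3
        have c3 : ((A.filter (fun x => x / 2 ^ g = z)).card : ℝ) * (1 / 2 * (1 / 2) ^ g)
            ≤ 2 ^ g * (1 / 2 * (1 / 2) ^ g) := mul_le_mul_of_nonneg_right c2 (by positivity)
        have c4 : (2 : ℝ) ^ g * (1 / 2 * (1 / 2) ^ g) = 1 / 2 := by
          rw [mul_left_comm, ← mul_pow]; norm_num
        linarith)
    refine hg.trans ?_
    have hpt : ∀ ω, C ω * (-Real.log (q (Θ ω / 2 ^ j)))
        ≤ C ω * Real.log 6 + C ω * (if (2 : ℤ) ^ j ≤ |Θ ω₀ - Θ ω| then 1 else 0)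
          * (g * Real.log 2) := by
      intro ω
      by_cases hω : C ω = 0
      · simp [hω]
      rw [mul_assoc, ← mul_add]
      refine mul_le_mul_of_nonneg_left ?_ (hc.nonneg ω)
      have hz : Θ ω / 2 ^ (j + g) = Θ ω₀ / 2 ^ (j + g) := by
        by_contra hne
        exact hω (by rw [hC, cw, if_neg hne])
      have h2 : (Θ ω / 2 ^ j) / 2 ^ g = Θ ω₀ / 2 ^ (j + g) := by rw [← hz, div_two_pow_add]
      by_cases hf : (2 : ℤ) ^ j ≤ |Θ ω₀ - Θ ω|
      · rw [if_pos hf, one_mul]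
        have h3 : 1 / 2 * (1 / 2) ^ g ≤ q (Θ ω / 2 ^ j) := by
          simp only [q, h2, if_true]
          have : (0 : ℝ) ≤ (if |Θ ω / 2 ^ j - x₀| ≤ 1 then 1 / 6 else 0) := by positivity
          linarith
        have h4 := Real.log_le_log (by positivity) h3
        rw [Real.log_mul (by norm_num) (by positivity), Real.log_pow, one_div, Real.log_inv] at h4
        have h5 := Real.log_le_log (by norm_num) (show (2 : ℝ) ≤ 6 by norm_num)
        linarith
      · rw [if_neg hf, zero_mul, add_zero]
        have hclose : |Θ ω / 2 ^ j - x₀| ≤ 1 := by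
          have e1 := Int.mul_ediv_add_emod (Θ ω) (2 ^ j)
          have e2 := Int.emod_nonneg (Θ ω) (show (2 : ℤ) ^ j ≠ 0 by positivity)
          have e3 := Int.emod_lt_of_pos (Θ ω) (show (0 : ℤ) < 2 ^ j by positivity)
          have f1 := Int.mul_ediv_add_emod (Θ ω₀) (2 ^ j)
          have f2 := Int.emod_nonneg (Θ ω₀) (show (2 : ℤ) ^ j ≠ 0 by positivity)
          have f3 := Int.emod_lt_of_pos (Θ ω₀) (show (0 : ℤ) < 2 ^ j by positivity)
          rw [not_le, abs_lt] at hf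
          have hp : (0 : ℤ) < 2 ^ j := by positivity
          rw [abs_le]
          constructor
          · by_contra hlt
            push Not at hlt
            have : Θ ω / 2 ^ j - x₀ ≤ -2 := by omega
            nlinarith [hf.1, hf.2]
          · by_contra hlt
            push Not at hlt
            have : 2 ≤ Θ ω / 2 ^ j - x₀ := by omega
            nlinarith [hf.1, hf.2]
        have h3 : 1 / 6 ≤ q (Θ ω / 2 ^ j) := by
          simp only [q, h2, if_true, hclose]
          have : (0 : ℝ) ≤ 1 / 2 * (1 / 2) ^ g := by positivity
          linarith
        have h4 := Real.log_le_log (by positivity) h3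
        rw [one_div, Real.log_inv] at h4
        linarith
    have hs := Finset.sum_le_sum fun ω (_ : ω ∈ Finset.univ) => hpt ω
    simp only [Finset.sum_add_distrib, ← Finset.sum_mul, hc.sum_one, one_mul, mul_neg,
      Finset.sum_neg_distrib] at hs
    exact hs
  refine (Finset.sum_le_sum fun ω₀ _ => key ω₀).trans (le_of_eq ?_)
  simp only [mul_add, Finset.sum_add_distrib, ← Finset.sum_mul, hw.sum_one, one_mul]
  congr 1
  rw [Finset.sum_mul]
  refine Finset.sum_congr rfl fun ω₀ _ => ?_
  rw [← mul_assoc, Finset.mul_sum]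
  congr 1
  refine Finset.sum_congr rfl fun ω _ => ?_
  rw [pairW]
  ring

/-- Choose one of the two members of a pair. -/
def pick (x : (Ω × Ω) × Bool) : Ω := if x.2 then x.1.1 else x.1.2

lemma pick_law (hw : IsW w) (Θ : Ω → ℤ) (i : ℕ) (ω : Ω) :
    ∑ b : (Ω × Ω) × Bool, (if pick b = ω then pairW w Θ i b.1 * half b.2 else 0) = w ω := by
  rw [Fintype.sum_prod_type]
  simp only [pick, Fintype.sum_bool, if_true, Bool.false_eq_true, if_false, Finset.sum_add_distrib]
  have h1 : ∑ x : Ω × Ω, (if x.1 = ω then pairW w Θ i x * half true else 0) = w ω * (1 / 2) := by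
    rw [Fintype.sum_prod_type, Finset.sum_eq_single ω]
    · simp only [if_true, pairW, half, ← Finset.sum_mul, ← Finset.mul_sum]
      by_cases h0 : w ω = 0
      · simp [h0]
      · rw [(IsW_cw hw _ h0).sum_one, mul_one]
    · intro b _ hb
      simp [hb]
    · simp
  have h2 : ∑ x : Ω × Ω, (if x.2 = ω then pairW w Θ i x * half false else 0) = w ω * (1 / 2) := by
    rw [Fintype.sum_prod_type_right, Finset.sum_eq_single ω]
    · simp only [if_true, pairW, half, ← Finset.sum_mul]
      rw [cw_marginal hw]
    · intro b _ hb
      simp [hb]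
    · simp
  rw [h1, h2]
  ring

/-- A sum of `k` independent copies of `Θ`, rewritten as a random choice in `k` independent
pairs. -/
lemma ent_pairs (hw : IsW w) (Θ : Ω → ℤ) (i k : ℕ) (X : (Fin k → Ω) × B → S) :
    ent (fun x : (Fin k → Ω × Ω) × ((Fin k → Bool) × B) =>
        pw (pairW w Θ i) k x.1 * (pw half k x.2.1 * v x.2.2))
      (fun x => X (fun a => if x.2.1 a then (x.1 a).1 else (x.1 a).2, x.2.2))
    = ent (fun x : (Fin k → Ω) × B => pw w k x.1 * v x.2) X := by
  refine ent_map (fun x : (Fin k → Ω × Ω) × ((Fin k → Bool) × B) =>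
    ((fun a => if x.2.1 a then (x.1 a).1 else (x.1 a).2, x.2.2) : (Fin k → Ω) × B)) ?_ X
  rintro ⟨y, b⟩
  rw [← pw_map (v := fun x : (Ω × Ω) × Bool => pairW w Θ i x.1 * half x.2) pick
    (fun ω => pick_law hw Θ i ω) k y, Finset.sum_mul]
  rw [Fintype.sum_prod_type]
  have e := Fintype.sum_equiv (Equiv.arrowProdEquivProdArrow (Fin k) (fun _ => Ω × Ω)
    (fun _ => Bool)) (fun c : Fin k → (Ω × Ω) × Bool => (if (fun i => pick (c i)) = y then
      pw (fun x : (Ω × Ω) × Bool => pairW w Θ i x.1 * half x.2) k c else 0) * v b)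
    (fun c : (Fin k → Ω × Ω) × (Fin k → Bool) => (if (fun i => pick (c.1 i, c.2 i)) = y then
      pw (fun x : (Ω × Ω) × Bool => pairW w Θ i x.1 * half x.2) k (fun i => (c.1 i, c.2 i))
      else 0) * v b) (fun c => rfl)
  rw [e, Fintype.sum_prod_type]
  refine Finset.sum_congr rfl fun c _ => ?_
  rw [Fintype.sum_prod_type]
  refine Finset.sum_congr rfl fun η _ => ?_
  rw [Finset.sum_eq_single b]
  · simp only [Prod.mk.injEq, and_true, pick, pw, Finset.prod_mul_distrib]
    split_ifs <;> ring
  · intro b' _ hb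
    simp [hb]
  · simp

/-- Without any information on `Θ`, adding independent terms keeps the entropy between scales. -/
lemma base_keep {A : ℝ} (hw : IsW w) (hv : IsW v) (T : Ω → ℤ) (Y : B → ℤ) (j l : ℕ)
    (hbase : ∀ c : ℤ, A ≤ sent v (fun b => Y b + c) j - sent v (fun b => Y b + c) (j + l)) :
    A ≤ sent (fun x : Ω × B => w x.1 * v x.2) (fun x => T x.1 + Y x.2) j
      - sent (fun x : Ω × B => w x.1 * v x.2) (fun x => T x.1 + Y x.2) (j + l) := by
  refine le_trans ?_ (sent_mix hw (fun _ _ => hv) (fun x => T x.1 + Y x.2) j l)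
  calc A = ∑ ω, w ω * A := by rw [← Finset.sum_mul, hw.sum_one, one_mul]
    _ ≤ _ := Finset.sum_le_sum fun ω _ => mul_le_mul_of_nonneg_left (by
      have := hbase (T ω)
      simpa only [add_comm] using this) (hw.nonneg ω)

/-- Entropy gain at a single scale where separated pairs are frequent. -/
lemma scale_gain {A κ : ℝ} (hw : IsW w) (hv : IsW v) (Θ : Ω → ℤ) (Y : B → ℤ) (j g q : ℕ)
    (hbase : ∀ c : ℤ, A ≤ sent v (fun b => Y b + c) j - sent v (fun b => Y b + c) (j + (g + q)))
    (hκ : 0 < κ) (hfar : κ ≤ farP w Θ j g)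
    (hG : 0 ≤ 1 / 2 * Real.log (κ * 4 ^ q / 2) - 4 * Real.log 2 - A) :
    A + κ / 2 * (1 / 2 * Real.log (κ * 4 ^ q / 2) - 4 * Real.log 2 - A)
      ≤ sent (fun x : (Fin (4 ^ q) → Ω) × B => pw w (4 ^ q) x.1 * v x.2)
          (fun x => ∑ i, Θ (x.1 i) + Y x.2) j
        - sent (fun x : (Fin (4 ^ q) → Ω) × B => pw w (4 ^ q) x.1 * v x.2)
          (fun x => ∑ i, Θ (x.1 i) + Y x.2) (j + (g + q)) := by
  set k := 4 ^ q with hk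
  set D := 1 / 2 * Real.log (κ * 4 ^ q / 2) - 4 * Real.log 2 - A with hD
  have hπ := IsW_pairW hw Θ (j + g)
  set π := pairW w Θ (j + g) with hπd
  have hP := IsW_pw hπ k
  have hH := IsW_pw IsW_half k
  have hHB := IsW_prod hH hv
  unfold sent
  rw [← ent_pairs hw Θ (j + g) k, ← ent_pairs hw Θ (j + g) k]
  refine le_trans ?_ (sent_mix hP (fun _ _ => hHB)
    (fun x : (Fin k → Ω × Ω) × ((Fin k → Bool) × B) =>
      ∑ i, Θ (if x.2.1 i then (x.1 i).1 else (x.1 i).2) + Y x.2.2) j (g + q))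
  -- number of separated pairs
  let m : (Fin k → Ω × Ω) → ℕ := fun a =>
    Fintype.card {i // (2 : ℤ) ^ j ≤ |Θ (a i).1 - Θ (a i).2|}
  have hmE : κ * k ≤ ∑ a, pw π k a * (m a : ℝ) := by
    have h := pw_first_moment hπ (k := k) (fun _ x =>
      (if (2 : ℤ) ^ j ≤ |Θ x.1 - Θ x.2| then (1 : ℝ) else 0))
    have h1 : ∀ a : Fin k → Ω × Ω, ∑ i, (if (2 : ℤ) ^ j ≤ |Θ (a i).1 - Θ (a i).2| then (1 : ℝ)
        else 0) = m a := by
      intro a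
      simp only [m, Fintype.card_subtype]
      rw [← Finset.sum_filter]
      simp
    simp only [h1] at h
    rw [h]
    simp only [Finset.sum_const, Finset.card_univ, Fintype.card_fin, nsmul_eq_mul]
    rw [mul_comm κ]
    exact mul_le_mul_of_nonneg_left hfar (by positivity)
  have hk0 : (0 : ℝ) < k := by rw [hk]; positivity
  have hprob : κ / 2 ≤ ∑ a, pw π k a * (if κ * k / 2 ≤ m a then 1 else 0) := by
    have h1 : ∑ a, pw π k a * (m a : ℝ)
        ≤ ∑ a, (pw π k a * (if κ * k / 2 ≤ m a then 1 else 0) * k + pw π k a * (κ * k / 2)) := by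
      refine Finset.sum_le_sum fun a _ => ?_
      rw [mul_assoc, ← mul_add]
      refine mul_le_mul_of_nonneg_left ?_ (hP.nonneg a)
      have hmk : (m a : ℝ) ≤ k := by
        have := Fintype.card_subtype_le (fun i => (2 : ℤ) ^ j ≤ |Θ (a i).1 - Θ (a i).2|)
        rw [Fintype.card_fin] at this
        exact_mod_cast this
      split_ifs with hc
      · have : 0 ≤ κ * k / 2 := by positivity
        linarith
      · push Not at hc
        linarith
    rw [Finset.sum_add_distrib, ← Finset.sum_mul, ← Finset.sum_mul, hP.sum_one] at h1
    have : κ / 2 * k ≤ (∑ a, pw π k a * (if κ * k / 2 ≤ m a then 1 else 0)) * k := by linarith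
    exact le_of_mul_le_mul_right this hk0
  calc A + κ / 2 * D ≤ A + (∑ a, pw π k a * (if κ * k / 2 ≤ m a then 1 else 0)) * D := by
        have := mul_le_mul_of_nonneg_right hprob hG
        linarith
    _ = ∑ a, pw π k a * (A + (if κ * k / 2 ≤ m a then 1 else 0) * D) := by
        simp only [mul_add, Finset.sum_add_distrib, ← Finset.sum_mul, hP.sum_one, one_mul,
          ← mul_assoc]
    _ ≤ _ := Finset.sum_le_sum fun a _ => ?_
  by_cases ha : pw π k a = 0
  · simp [ha]
  refine mul_le_mul_of_nonneg_left ?_ (hP.nonneg a)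
  by_cases hm : κ * k / 2 ≤ m a
  · rw [if_pos hm, one_mul]
    have hm0 : 1 ≤ m a := by
      have h0 : (0 : ℝ) < m a := lt_of_lt_of_le (by positivity) hm
      exact_mod_cast h0
    have hgap : ∀ i, |Θ (a i).1 - Θ (a i).2| ≤ 2 ^ (j + g) := by
      intro i
      have hi : π (a i) ≠ 0 := fun h => ha (Finset.prod_eq_zero (Finset.mem_univ i) h)
      have hz : Θ (a i).2 / 2 ^ (j + g) = Θ (a i).1 / 2 ^ (j + g) := by
        by_contra hne
        exact hi (by rw [hπd, pairW, cw, if_neg hne, mul_zero])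
      have e1 := Int.mul_ediv_add_emod (Θ (a i).1) (2 ^ (j + g))
      have e2 := Int.emod_nonneg (Θ (a i).1) (show (2 : ℤ) ^ (j + g) ≠ 0 by positivity)
      have e3 := Int.emod_lt_of_pos (Θ (a i).1) (show (0 : ℤ) < 2 ^ (j + g) by positivity)
      have f1 := Int.mul_ediv_add_emod (Θ (a i).2) (2 ^ (j + g))
      have f2 := Int.emod_nonneg (Θ (a i).2) (show (2 : ℤ) ^ (j + g) ≠ 0 by positivity)
      have f3 := Int.emod_lt_of_pos (Θ (a i).2) (show (0 : ℤ) < 2 ^ (j + g) by positivity)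
      rw [hz] at f1
      rw [abs_le]
      constructor <;> linarith
    have hlow : ∀ b, 1 / 2 * Real.log (κ * 4 ^ q / 2) - 4 * Real.log 2
        ≤ sent (pw half k) (fun η => ∑ i, Θ (if η i then (a i).1 else (a i).2) + Y b) j
          - sent (pw half k) (fun η => ∑ i, Θ (if η i then (a i).1 else (a i).2) + Y b)
            (j + (g + q)) := by
      intro b
      have h1 := signs_lower (fun i => Θ (a i).1) (fun i => Θ (a i).2) (Y b) j (m := m a) rfl hm0
      have h2 := signs_upper (q := q) (fun i => Θ (a i).1) (fun i => Θ (a i).2) (Y b) (j + g) hgap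
      have h3 : Real.log (κ * 4 ^ q / 2) ≤ Real.log (m a) :=
        Real.log_le_log (by positivity) (by rw [hk] at hm; exact_mod_cast hm)
      rw [add_assoc] at h2
      simp only [apply_ite Θ]
      linarith
    -- average over the `B` coordinate
    have hswap : ∀ i, sent (fun x : (Fin k → Bool) × B => pw half k x.1 * v x.2)
        (fun x => ∑ i, Θ (if x.1 i then (a i).1 else (a i).2) + Y x.2) i
        = sent (fun x : B × (Fin k → Bool) => v x.1 * pw half k x.2)
        (fun x => ∑ i, Θ (if x.2 i then (a i).1 else (a i).2) + Y x.1) i := by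
      intro i
      exact ent_equiv (Equiv.prodComm (Fin k → Bool) B) (fun x => mul_comm _ _)
        (fun x : B × (Fin k → Bool) =>
          (∑ i, Θ (if x.2 i then (a i).1 else (a i).2) + Y x.1) / 2 ^ i)
    rw [hswap, hswap]
    refine le_trans ?_ (sent_mix hv (fun _ _ => hH)
      (fun x : B × (Fin k → Bool) => ∑ i, Θ (if x.2 i then (a i).1 else (a i).2) + Y x.1) j (g + q))
    calc A + D = ∑ b, v b * (A + D) := by rw [← Finset.sum_mul, hv.sum_one, one_mul]
      _ ≤ _ := Finset.sum_le_sum fun b _ => mul_le_mul_of_nonneg_left (by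
        have := hlow b
        rw [hD]
        linarith) (hv.nonneg b)
  · rw [if_neg hm, zero_mul, add_zero]
    exact base_keep hH hv (fun η : Fin k → Bool => ∑ i, Θ (if η i then (a i).1 else (a i).2)) Y j
      (g + q) hbase

/-- Quantitative entropy growth: if `Θ` has entropy `c` per scale on average and `Y` has entropy at
least `A` on every block of scales, then the sum of many copies of `Θ` with `Y` beats `A`. -/
lemma gain {A κ c : ℝ} (hw : IsW w) (hv : IsW v) (Θ : Ω → ℤ) (Y : B → ℤ) (g q N : ℕ)
    (hbase : ∀ j < N, ∀ c : ℤ,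
      A ≤ sent v (fun b => Y b + c) j - sent v (fun b => Y b + c) (j + (g + q)))
    (hg : 1 ≤ g) (hκ : 0 < κ) (hΘ : c * N ≤ ent w Θ - sent w Θ N)
    (h6 : Real.log 6 + κ * (g * Real.log 2) ≤ c * g / 2)
    (hG : 0 ≤ 1 / 2 * Real.log (κ * 4 ^ q / 2) - 4 * Real.log 2 - A) :
    N * A + (N * c / (2 * Real.log 2) - g)
        * (κ / 2 * (1 / 2 * Real.log (κ * 4 ^ q / 2) - 4 * Real.log 2 - A))
      ≤ (g + q) * ent (fun x : (Fin (4 ^ q) → Ω) × B => pw w (4 ^ q) x.1 * v x.2)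
          (fun x => ∑ i, Θ (x.1 i) + Y x.2) := by
  set G := κ / 2 * (1 / 2 * Real.log (κ * 4 ^ q / 2) - 4 * Real.log 2 - A) with hGd
  have hG0 : 0 ≤ G := mul_nonneg (by linarith) hG
  have hl : 0 < Real.log 2 := Real.log_pos (by norm_num)
  have hg0 : (0 : ℝ) < g := by exact_mod_cast hg
  have hWW := IsW_prod (IsW_pw hw (4 ^ q)) hv
  set W := (fun x : (Fin (4 ^ q) → Ω) × B => pw w (4 ^ q) x.1 * v x.2)
  set U : (Fin (4 ^ q) → Ω) × B → ℤ := fun x => ∑ i, Θ (x.1 i) + Y x.2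
  let P : ℕ → Prop := fun j => κ ≤ farP w Θ j g
  have h1 : ∀ j ∈ Finset.range N, A + (if P j then 1 else 0) * G
      ≤ sent W U j - sent W U (j + (g + q)) := by
    intro j hj
    have hb := hbase j (Finset.mem_range.1 hj)
    split_ifs with hP
    · rw [one_mul]
      exact scale_gain hw hv Θ Y j g q hb hκ hP hG
    · rw [zero_mul, add_zero]
      exact base_keep (IsW_pw hw (4 ^ q)) hv (fun x => ∑ i, Θ (x i)) Y j (g + q) hb
  have h2 := telescope_le (sent_antitone hWW U) (sent_nonneg hWW U) (g + q) N
  have h3 := Finset.sum_le_sum h1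
  rw [Finset.sum_add_distrib, ← Finset.sum_mul] at h3
  simp only [Finset.sum_const, Finset.card_range, nsmul_eq_mul] at h3
  set n : ℝ := ∑ j ∈ Finset.range N, (if P j then (1 : ℝ) else 0)
  have h4 : N * c / (2 * Real.log 2) - g ≤ n := by
    have h5 := le_telescope (sent_antitone hw Θ) g N
    have h6' : ∀ j ∈ Finset.range N, sent w Θ j - sent w Θ (j + g)
        ≤ c * g / 2 + (if P j then 1 else 0) * (g * Real.log 2) := by
      intro j _
      have hc0 : 0 ≤ c * g / 2 := le_trans (by
        have := Real.log_nonneg (show (1 : ℝ) ≤ 6 by norm_num)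
        positivity) h6
      split_ifs with hP
      · have := sent_le_add hw Θ j g
        linarith
      · have := sent_le_farP hw Θ j g
        simp only [P, not_le] at hP
        have h7 := mul_le_mul_of_nonneg_right hP.le (show 0 ≤ g * Real.log 2 by positivity)
        linarith
    have h8 := Finset.sum_le_sum h6'
    rw [Finset.sum_add_distrib, ← Finset.sum_mul] at h8
    simp only [Finset.sum_const, Finset.card_range, nsmul_eq_mul] at h8
    have h9 := sent_le_add hw Θ 0 g
    rw [sent_zero, zero_add] at h9
    have h10 : g * (c * N - g * Real.log 2) ≤ N * (c * g / 2) + n * (g * Real.log 2) := by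
      refine le_trans ?_ (h5.trans h8)
      exact mul_le_mul_of_nonneg_left (by linarith) hg0.le
    have h11 : c * N - g * Real.log 2 ≤ N * c / 2 + n * Real.log 2 := by
      refine le_of_mul_le_mul_left ?_ hg0
      linarith
    rw [sub_le_iff_le_add, div_le_iff₀ (by positivity)]
    linarith
  have h5 := mul_le_mul_of_nonneg_right h4 hG0
  rw [sent_zero] at h2
  push_cast at h2
  linarith

end gain

/-! ### Finite words of a self-similar system -/

section words

variable {Ω S : Type*} [Fintype Ω] {w : Ω → ℝ}

lemma ent_const (hw : IsW w) (s : S) : ent w (fun _ => s) = 0 := by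
  refine le_antisymm ?_ (ent_nonneg hw _)
  have := ent_le_log_card hw (fun _ => s) {s} (by simp)
  simpa using this

/-- If `X` is approximated by a function of `U`, its entropy is essentially at most that of `U`. -/
lemma ent_le_of_approx (hw : IsW w) (X : Ω → ℤ) (U : Ω → S) (f : S → ℝ) (K : ℕ)
    (h : ∀ ω, w ω ≠ 0 → |(X ω : ℝ) - f (U ω)| ≤ K) :
    ent w X ≤ ent w U + Real.log (2 * K + 3) := by
  have h1 := ent_approx hw X (fun ω => ⌊f (U ω)⌋) (K + 1) (fun ω h0 => by
    have := h ω h0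
    have h1 := Int.floor_le (f (U ω))
    have h2 := Int.lt_floor_add_one (f (U ω))
    have h3 : |((X ω - ⌊f (U ω)⌋ : ℤ) : ℝ)| ≤ ((K + 1 : ℕ) : ℝ) := by
      push_cast
      rw [abs_le] at this ⊢
      constructor <;> linarith
    exact_mod_cast h3)
  have h2 : ent w (fun ω => ⌊f (U ω)⌋) ≤ ent w U :=
    ent_mono hw fun ω ω' h => by rw [h]
  push_cast at h1
  rw [show (2 * ((K : ℝ) + 1) + 1) = 2 * K + 3 by ring] at h1
  linarith

lemma floor_sub_le (x : ℝ) : |(⌊x⌋ : ℝ) - x| ≤ 1 := by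
  have h1 := Int.floor_le x
  have h2 := Int.lt_floor_add_one x
  rw [abs_le]
  constructor <;> linarith

lemma ent_floor_le_of_approx (hw : IsW w) (X : Ω → ℝ) (U : Ω → S) (f : S → ℝ) (K : ℕ)
    (h : ∀ ω, w ω ≠ 0 → |X ω - f (U ω)| ≤ K) :
    ent w (fun ω => ⌊X ω⌋) ≤ ent w U + Real.log (2 * K + 5) := by
  have := ent_le_of_approx hw (fun ω => ⌊X ω⌋) U f (K + 1) (fun ω h0 => by
    have h1 := h ω h0
    have h2 := floor_sub_le (X ω)
    push_cast
    calc _ = |(⌊X ω⌋ - X ω) + (X ω - f (U ω))| := by ring_nf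
      _ ≤ _ := by have := abs_add_le (⌊X ω⌋ - X ω) (X ω - f (U ω)); linarith)
  push_cast at this
  rw [show (2 * ((K : ℝ) + 1) + 3) = 2 * K + 5 by ring] at this
  exact this

lemma sent_floor (X : Ω → ℝ) (j : ℕ) :
    sent w (fun ω => ⌊X ω⌋) j = ent w (fun ω => ⌊X ω / 2 ^ j⌋) := by
  simp only [sent, floor_div_pow]

variable {Λ : Type*} [Fintype Λ]

/-- The composition `f_{w 0} ∘ ⋯ ∘ f_{w (L-1)}` of the maps `y ↦ ρ i * y + σ i`. -/
def ev (ρ σ : Λ → ℝ) {L : ℕ} (u : Fin L → Λ) (x : ℝ) : ℝ :=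
  (List.ofFn u).foldr (fun i y => ρ i * y + σ i) x

/-- The contraction ratio of a word. -/
def rat (ρ : Λ → ℝ) {L : ℕ} (u : Fin L → Λ) : ℝ := ∏ i, ρ (u i)

variable {p ρ σ : Λ → ℝ} {z θ : ℝ} {K : ℕ}

lemma ev_cons {L : ℕ} (i : Λ) (u : Fin L → Λ) (x : ℝ) :
    ev ρ σ (Fin.cons i u : Fin (L + 1) → Λ) x = ρ i * ev ρ σ u x + σ i := by
  simp [ev, List.ofFn_succ]

lemma ev_append {m n : ℕ} (u : Fin m → Λ) (v : Fin n → Λ) (x : ℝ) :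
    ev ρ σ (Fin.append u v) x = ev ρ σ u (ev ρ σ v x) := by
  simp [ev, List.ofFn_fin_append]

lemma rat_cons {L : ℕ} (i : Λ) (u : Fin L → Λ) :
    rat ρ (Fin.cons i u : Fin (L + 1) → Λ) = ρ i * rat ρ u := by
  simp [rat, Fin.prod_univ_succ]

lemma ev_affine {L : ℕ} (u : Fin L → Λ) (x y : ℝ) :
    ev ρ σ u x - ev ρ σ u y = rat ρ u * (x - y) := by
  induction L with
  | zero => simp [ev, rat]
  | succ L ih =>
    rw [← Fin.cons_self_tail u, ev_cons, ev_cons, rat_cons]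
    have := ih (Fin.tail u)
    linear_combination ρ (u 0) * this

lemma pw_append {m n : ℕ} (u : Fin m → Λ) (v : Fin n → Λ) :
    pw p (m + n) (Fin.append u v) = pw p m u * pw p n v := by
  simp [pw, Fin.prod_univ_add]

/-- Quantitative bounds for an affine system with base point `z`: the ratios lie in `[1/K, θ]` and
the interval `[-K, K]` is mapped into itself. -/
structure Sys (p ρ σ : Λ → ℝ) (z θ : ℝ) (K : ℕ) : Prop where
  hp : IsW p
  hθ0 : 0 < θ
  hθ1 : θ < 1
  low : ∀ i, 1 ≤ K * |ρ i|
  up : ∀ i, |ρ i| ≤ θ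
  inv : ∀ i, |ρ i| * K + |σ i| ≤ K
  hz : |z| ≤ K

/-- Entropy at scale `2 ^ (-m)` of the level `L` approximation of the self-similar measure. -/
def hh (p ρ σ : Λ → ℝ) (z : ℝ) (L m : ℕ) : ℝ :=
  ent (pw p L) (fun u => ⌊2 ^ m * ev ρ σ u z⌋)

/-- The constant governing bounded errors in entropy comparisons. -/
def cK (K : ℕ) : ℝ := Real.log (2 * K + 5)

lemma cK_nonneg (K : ℕ) : 0 ≤ cK K := Real.log_nonneg (by
  have : (0 : ℝ) ≤ K := Nat.cast_nonneg K
  linarith)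

lemma cK_mono {K K' : ℕ} (h : K ≤ K') : cK K ≤ cK K' := by
  have h1 : (K : ℝ) ≤ K' := by exact_mod_cast h
  have h0 : (0 : ℝ) ≤ K := Nat.cast_nonneg K
  exact Real.log_le_log (by linarith) (by linarith)

lemma Sys.abs_ev_le (H : Sys p ρ σ z θ K) {L : ℕ} (u : Fin L → Λ) {x : ℝ} (hx : |x| ≤ K) :
    |ev ρ σ u x| ≤ K := by
  induction L with
  | zero => simpa [ev] using hx
  | succ L ih =>
    rw [← Fin.cons_self_tail u, ev_cons]
    have h1 := ih (Fin.tail u)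
    have h2 := H.inv (u 0)
    calc _ ≤ |ρ (u 0) * ev ρ σ (Fin.tail u) x| + |σ (u 0)| := abs_add_le _ _
      _ ≤ |ρ (u 0)| * K + |σ (u 0)| := by rw [abs_mul]; gcongr
      _ ≤ K := h2

lemma Sys.rat_ne (H : Sys p ρ σ z θ K) {L : ℕ} (u : Fin L → Λ) : rat ρ u ≠ 0 := by
  refine Finset.prod_ne_zero_iff.2 fun i _ h => ?_
  have := H.low (u i)
  rw [h] at this
  simp at this
  linarith

lemma Sys.abs_rat_le (H : Sys p ρ σ z θ K) {L : ℕ} (u : Fin L → Λ) : |rat ρ u| ≤ θ ^ L := by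
  rw [rat, Finset.abs_prod]
  calc _ ≤ ∏ _i : Fin L, θ := Finset.prod_le_prod (fun i _ => abs_nonneg _) fun i _ => H.up _
    _ = θ ^ L := by simp

/-- Base case of `base_block`: the map has size comparable to the coarse scale. -/
lemma Sys.base_direct (H : Sys p ρ σ z θ K) (L l j : ℕ) (a b : ℝ)
    (h1 : 2 ^ (j + l) ≤ K * |a|) (h2 : |a| ≤ 2 ^ (j + l)) :
    hh p ρ σ z L l - 2 * cK K ≤ sent (pw p L) (fun u => ⌊a * ev ρ σ u z + b⌋) j
      - sent (pw p L) (fun u => ⌊a * ev ρ σ u z + b⌋) (j + l) := by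
  have hP := IsW_pw H.hp L
  rw [sent_floor, sent_floor]
  have hK0 : (0 : ℝ) ≤ K := Nat.cast_nonneg K
  have ha : 0 < |a| := by
    by_contra hn
    have : |a| = 0 := le_antisymm (not_lt.1 hn) (abs_nonneg _)
    rw [this, mul_zero] at h1
    exact absurd h1 (not_le.2 (by positivity))
  have e1 : ent (pw p L) (fun u => ⌊(a * ev ρ σ u z + b) / 2 ^ (j + l)⌋) ≤ 0 + cK K := by
    rw [← ent_const hP ()]
    refine ent_floor_le_of_approx hP (fun u => (a * ev ρ σ u z + b) / 2 ^ (j + l)) (fun _ => ())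
      (fun _ => b / 2 ^ (j + l)) K fun u _ => ?_
    rw [← sub_div, add_sub_cancel_right, abs_div, abs_mul, abs_of_pos (by positivity : (0:ℝ) < 2 ^ (j + l)),
      div_le_iff₀ (by positivity), mul_comm (K : ℝ)]
    exact mul_le_mul h2 (H.abs_ev_le u H.hz) (abs_nonneg _) (by positivity)
  have e2 : hh p ρ σ z L l
      ≤ ent (pw p L) (fun u => ⌊(a * ev ρ σ u z + b) / 2 ^ j⌋) + cK K := by
    refine ent_floor_le_of_approx hP (fun u => 2 ^ l * ev ρ σ u z)
      (fun u => ⌊(a * ev ρ σ u z + b) / 2 ^ j⌋) (fun y : ℤ => 2 ^ l * (2 ^ j * (y : ℝ) - b) / a) K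
      fun u _ => ?_
    have ha' : a ≠ 0 := abs_pos.1 ha
    set y := a * ev ρ σ u z + b
    have h3 : 2 ^ l * ev ρ σ u z - 2 ^ l * (2 ^ j * (⌊y / 2 ^ j⌋ : ℝ) - b) / a
        = 2 ^ (j + l) * (y / 2 ^ j - ⌊y / 2 ^ j⌋) / a := by
      rw [pow_add]; field_simp; simp only [y]; ring
    rw [h3, abs_div, abs_mul, div_le_iff₀ ha, abs_of_pos (by positivity : (0:ℝ) < 2 ^ (j + l))]
    have h4 := floor_sub_le (y / 2 ^ j)
    rw [abs_sub_comm] at h4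
    calc (2:ℝ) ^ (j + l) * |y / 2 ^ j - ⌊y / 2 ^ j⌋| ≤ 2 ^ (j + l) * 1 := by gcongr
      _ ≤ _ := by rw [mul_one]; exact h1
  linarith

lemma sent_succ_word {L : ℕ} (U : (Fin (L + 1) → Λ) → ℤ) (j : ℕ) :
    sent (pw p (L + 1)) U j = sent (fun x : Λ × (Fin L → Λ) => p x.1 * pw p L x.2)
      (fun x => U (Fin.cons x.1 x.2)) j :=
  (ent_equiv (Fin.consEquiv (fun _ : Fin (L + 1) => Λ))
    (w' := fun x : Λ × (Fin L → Λ) => p x.1 * pw p L x.2)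
    (fun x => (pw_cons x.1 x.2).symm) (fun u => U u / 2 ^ j)).symm

/-- Every affine image of the self-similar measure of size at least the coarse scale carries on
each block of `l` scales at least the entropy of the first `l` scales, up to a constant. -/
lemma Sys.base_block (H : Sys p ρ σ z θ K) {l L₁ : ℕ} {A : ℝ}
    (hA : ∀ L ≥ L₁, A ≤ hh p ρ σ z L l) (j n : ℕ) :
    ∀ (a b : ℝ) (L : ℕ), 2 ^ (j + l) ≤ K * |a| → |a| * θ ^ n ≤ 2 ^ (j + l) → L₁ + n ≤ L →
    A - 2 * cK K ≤ sent (pw p L) (fun u => ⌊a * ev ρ σ u z + b⌋) j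
      - sent (pw p L) (fun u => ⌊a * ev ρ σ u z + b⌋) (j + l) := by
  induction n with
  | zero =>
    intro a b L h1 h2 hL
    have := H.base_direct L l j a b h1 (by simpa using h2)
    have := hA L (by omega)
    linarith
  | succ n ih =>
    intro a b L h1 h2 hL
    by_cases h3 : |a| ≤ 2 ^ (j + l)
    · have := H.base_direct L l j a b h1 h3
      have := hA L (by omega)
      linarith
    push Not at h3
    obtain ⟨L, rfl⟩ : ∃ L', L = L' + 1 := ⟨L - 1, by omega⟩
    rw [sent_succ_word, sent_succ_word]
    refine le_trans ?_ (sent_mix H.hp (fun _ _ => IsW_pw H.hp L) _ j l)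
    calc A - 2 * cK K = ∑ i, p i * (A - 2 * cK K) := by
          rw [← Finset.sum_mul, H.hp.sum_one, one_mul]
      _ ≤ _ := Finset.sum_le_sum fun i _ => mul_le_mul_of_nonneg_left ?_ (H.hp.nonneg i)
    have := ih (a * ρ i) (a * σ i + b) L (by
        rw [abs_mul]
        have h4 := H.low i
        nlinarith [abs_nonneg a]) (by
        rw [abs_mul]
        refine le_trans ?_ h2
        rw [pow_succ, mul_assoc, mul_comm (θ ^ n) θ]
        have hθ := H.hθ0
        have := H.up i
        gcongr) (by omega)
    have e : ∀ u : Fin L → Λ, a * ev ρ σ (Fin.cons i u : Fin (L + 1) → Λ) z + b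
        = a * ρ i * ev ρ σ u z + (a * σ i + b) := by
      intro u; rw [ev_cons]; ring
    simp only [e]
    exact this

/-- Telescoped form of `base_block`. -/
lemma Sys.base_total (H : Sys p ρ σ z θ K) {l L₁ : ℕ} {A : ℝ}
    (hA : ∀ L ≥ L₁, A ≤ hh p ρ σ z L l) (N n : ℕ) (a b : ℝ) (L : ℕ)
    (h1 : 2 ^ (N + l) ≤ K * |a|) (h2 : |a| * θ ^ n ≤ 1) (hL : L₁ + n ≤ L) :
    N * (A - 2 * cK K) ≤ l * ent (pw p L) (fun u => ⌊a * ev ρ σ u z + b⌋) := by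
  have hP := IsW_pw H.hp L
  have h3 := telescope_le (sent_antitone hP (fun u => ⌊a * ev ρ σ u z + b⌋))
    (sent_nonneg hP (fun u => ⌊a * ev ρ σ u z + b⌋)) l N
  rw [sent_zero] at h3
  refine le_trans ?_ h3
  rw [← nsmul_eq_mul, ← Finset.card_range N, ← Finset.sum_const, Finset.card_range]
  refine Finset.sum_le_sum fun j hj => H.base_block hA j n a b L ?_ ?_ hL
  · refine le_trans (pow_le_pow_right₀ (by norm_num) ?_) h1
    have := Finset.mem_range.1 hj
    omega
  · exact h2.trans (one_le_pow₀ (by norm_num))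

lemma Sys.exists_pow (H : Sys p ρ σ z θ K) (a : ℝ) : ∃ n : ℕ, |a| * θ ^ n ≤ 1 := by
  obtain ⟨n, hn⟩ := exists_pow_lt_of_lt_one (show (0 : ℝ) < 1 / (|a| + 1) by positivity) H.hθ1
  refine ⟨n, ?_⟩
  rw [lt_div_iff₀ (by positivity)] at hn
  have := pow_pos H.hθ0 n
  nlinarith [abs_nonneg a]

/-- Entropy of an affine image is at most that of the measure at the corresponding scale. -/
lemma Sys.ent_affine_le (H : Sys p ρ σ z θ K) (L m : ℕ) (a b : ℝ) (h : |a| ≤ 2 ^ m) :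
    ent (pw p L) (fun u => ⌊a * ev ρ σ u z + b⌋) ≤ hh p ρ σ z L m + cK 1 := by
  have hP := IsW_pw H.hp L
  refine ent_floor_le_of_approx hP (fun u => a * ev ρ σ u z + b) (fun u => ⌊2 ^ m * ev ρ σ u z⌋)
    (fun y : ℤ => a / 2 ^ m * (y : ℝ) + b) 1 fun u _ => ?_
  set y := 2 ^ m * ev ρ σ u z
  have e : a * ev ρ σ u z + b - (a / 2 ^ m * (⌊y⌋ : ℝ) + b) = a / 2 ^ m * (y - ⌊y⌋) := by
    simp only [y]; field_simp; ring
  rw [e, abs_mul, abs_div, abs_of_pos (by positivity : (0:ℝ) < 2 ^ m)]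
  have h4 := floor_sub_le y
  rw [abs_sub_comm] at h4
  have h5 : |a| / 2 ^ m ≤ 1 := (div_le_one (by positivity)).2 h
  push_cast
  exact mul_le_one₀ h5 (abs_nonneg _) h4

end words

/-! ### Entropy growth for self-similar systems -/

section growth

variable {Λ : Type*} [Fintype Λ] {p ρ σ : Λ → ℝ} {z θ : ℝ} {K : ℕ}

/-- The number of occurrences of each letter in a word. -/
def cnt {n : ℕ} (u : Fin n → Λ) (i : Λ) : ℕ := (Finset.univ.filter (fun k => u k = i)).card

lemma rat_eq_prod {n : ℕ} (u : Fin n → Λ) : rat ρ u = ∏ i, ρ i ^ cnt u i := by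
  rw [rat, ← Finset.prod_fiberwise' Finset.univ u ρ]
  refine Finset.prod_congr rfl fun i _ => ?_
  rw [Finset.prod_const, cnt]

lemma rat_eq_of_cnt {n : ℕ} {u v : Fin n → Λ} (h : cnt u = cnt v) : rat ρ u = rat ρ v := by
  rw [rat_eq_prod, rat_eq_prod, h]

/-- The discretized point `f_u (f_v z)` at scale `2 ^ (-M)`. -/
def UU (ρ σ : Λ → ℝ) (z : ℝ) (n L M : ℕ) (x : (Fin n → Λ) × (Fin L → Λ)) : ℤ :=
  ⌊2 ^ M * ev ρ σ x.1 (ev ρ σ x.2 z)⌋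

lemma ent_UU (n L M : ℕ) :
    ent (fun x : (Fin n → Λ) × (Fin L → Λ) => pw p n x.1 * pw p L x.2) (UU ρ σ z n L M)
      = hh p ρ σ z (n + L) M := by
  rw [hh, ← ent_equiv (Fin.appendEquiv n L)
    (w' := fun x : (Fin n → Λ) × (Fin L → Λ) => pw p n x.1 * pw p L x.2)
    (fun x => (pw_append x.1 x.2).symm) (fun u => ⌊2 ^ M * ev ρ σ u z⌋)]
  congr 1
  funext x
  simp only [UU, Fin.appendEquiv, Equiv.coe_fn_mk, ev_append]

lemma UU_div {n L M a : ℕ} (h : a ≤ M) (x : (Fin n → Λ) × (Fin L → Λ)) :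
    UU ρ σ z n L M x / 2 ^ (M - a) = UU ρ σ z n L a x := by
  rw [UU, UU, floor_div_pow]
  congr 1
  obtain ⟨d, rfl⟩ := Nat.exists_eq_add_of_le h
  rw [Nat.add_sub_cancel_left, pow_add]
  field_simp

/-- Conditioning the first `n` letters on `Z` can only decrease the entropy between scales. -/
lemma Sys.mix (H : Sys p ρ σ z θ K) {T : Type*} (n L : ℕ) {M a : ℕ} (ham : a ≤ M)
    (Z : (Fin n → Λ) → T) :
    ∑ u₀, pw p n u₀ * (ent (fun x : (Fin n → Λ) × (Fin L → Λ) =>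
        cw (pw p n) Z u₀ x.1 * pw p L x.2) (UU ρ σ z n L M)
      - ent (fun x : (Fin n → Λ) × (Fin L → Λ) =>
        cw (pw p n) Z u₀ x.1 * pw p L x.2) (UU ρ σ z n L a))
      ≤ hh p ρ σ z (n + L) M - hh p ρ σ z (n + L) a := by
  have hP := IsW_pw H.hp n
  have hQ := IsW_pw H.hp L
  have h := mixture (A := Fin n → Λ) (B := (Fin n → Λ) × (Fin L → Λ)) (q := pw p n)
    (v := fun u₀ x => cw (pw p n) Z u₀ x.1 * pw p L x.2) hP
    (fun u₀ h0 => IsW_prod (IsW_cw hP Z h0) hQ)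
    (fun x => UU ρ σ z n L M x.2) (fun x => UU ρ σ z n L a x.2) (fun x x' hx => by
      rw [← UU_div ham, ← UU_div ham, hx])
  have hm : ∀ y : (Fin n → Λ) × (Fin L → Λ),
      ∑ x : (Fin n → Λ) × ((Fin n → Λ) × (Fin L → Λ)),
        (if x.2 = y then pw p n x.1 * (cw (pw p n) Z x.1 x.2.1 * pw p L x.2.2) else 0)
        = pw p n y.1 * pw p L y.2 := by
    intro y
    rw [Fintype.sum_prod_type]
    simp only [Finset.sum_ite_eq', Finset.mem_univ, if_true]
    simp only [← mul_assoc, ← Finset.sum_mul]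
    rw [cw_marginal hP]
  rw [ent_map (w := fun x : (Fin n → Λ) × (Fin L → Λ) => pw p n x.1 * pw p L x.2)
      Prod.snd (fun y => by convert hm y) (UU ρ σ z n L M),
    ent_map (w := fun x : (Fin n → Λ) × (Fin L → Λ) => pw p n x.1 * pw p L x.2)
      Prod.snd (fun y => by convert hm y) (UU ρ σ z n L a), ent_UU, ent_UU] at h
  exact h

/-- On words with a common contraction ratio, the point `f_u (f_v z)` is a sum of two independent
terms. -/
lemma Sys.fiber_ge (H : Sys p ρ σ z θ K) (n L M : ℕ) {w : (Fin n → Λ) → ℝ} (hw : IsW w) {R : ℝ}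
    (hR : ∀ u, w u ≠ 0 → rat ρ u = R) :
    ent (fun x : (Fin n → Λ) × (Fin L → Λ) => w x.1 * pw p L x.2)
      (fun x => ⌊2 ^ M * ev ρ σ x.1 z⌋ + ⌊(2 ^ M * R) * ev ρ σ x.2 z + -(2 ^ M * R * z)⌋)
      - Real.log 5
      ≤ ent (fun x : (Fin n → Λ) × (Fin L → Λ) => w x.1 * pw p L x.2) (UU ρ σ z n L M) := by
  have := ent_approx (IsW_prod hw (IsW_pw H.hp L))
    (fun x => ⌊2 ^ M * ev ρ σ x.1 z⌋ + ⌊(2 ^ M * R) * ev ρ σ x.2 z + -(2 ^ M * R * z)⌋)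
    (UU ρ σ z n L M) 2 (fun x hx => by
      have h1 := hR x.1 (left_ne_zero_of_mul hx)
      have h2 := ev_affine (ρ := ρ) (σ := σ) x.1 (ev ρ σ x.2 z) z
      rw [h1] at h2
      have e : 2 ^ M * ev ρ σ x.1 (ev ρ σ x.2 z) = 2 ^ M * ev ρ σ x.1 z
          + ((2 ^ M * R) * ev ρ σ x.2 z + -(2 ^ M * R * z)) := by
        linear_combination 2 ^ M * h2
      rw [UU, e]
      set s := 2 ^ M * ev ρ σ x.1 z
      set t := (2 ^ M * R) * ev ρ σ x.2 z + -(2 ^ M * R * z)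
      have h3 := Int.le_floor_add s t
      have h4 := Int.le_floor_add_floor s t
      rw [abs_le]
      constructor <;> push_cast <;> lia)
  norm_num at this
  linarith

/-- At the scale of the cylinder the conditioned point is essentially deterministic. -/
lemma Sys.fiber_le (H : Sys p ρ σ z θ K) (n L a : ℕ) {w : (Fin n → Λ) → ℝ} (hw : IsW w) {k : ℤ}
    (hR : ∀ u, w u ≠ 0 → |rat ρ u| * 2 ^ a ≤ 1) (hk : ∀ u, w u ≠ 0 → ⌊2 ^ a * ev ρ σ u z⌋ = k) :
    ent (fun x : (Fin n → Λ) × (Fin L → Λ) => w x.1 * pw p L x.2) (UU ρ σ z n L a)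
      ≤ cK (2 * K + 1) := by
  have hW := IsW_prod hw (IsW_pw H.hp L)
  have h := ent_floor_le_of_approx hW
    (fun x => 2 ^ a * ev ρ σ x.1 (ev ρ σ x.2 z)) (fun _ => ()) (fun _ => (k : ℝ)) (2 * K + 1)
    (fun x hx => by
      have h0 := left_ne_zero_of_mul hx
      have h1 := hR x.1 h0
      have h2 := ev_affine (ρ := ρ) (σ := σ) x.1 (ev ρ σ x.2 z) z
      have h3 := floor_sub_le (2 ^ a * ev ρ σ x.1 z)
      rw [hk x.1 h0] at h3
      have h4 := H.abs_ev_le x.2 H.hz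
      have h5 := H.hz
      have e : 2 ^ a * ev ρ σ x.1 (ev ρ σ x.2 z) - k
          = (rat ρ x.1 * 2 ^ a) * (ev ρ σ x.2 z - z) - (k - 2 ^ a * ev ρ σ x.1 z) := by
        linear_combination 2 ^ a * h2
      have h6 : |(rat ρ x.1 * 2 ^ a) * (ev ρ σ x.2 z - z)| ≤ 2 * K := by
        rw [abs_mul, abs_mul, abs_of_pos (by positivity : (0:ℝ) < 2 ^ a)]
        have h7 : |ev ρ σ x.2 z - z| ≤ 2 * K := by
          have := abs_sub (ev ρ σ x.2 z) z
          linarith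
        calc _ ≤ 1 * (2 * (K : ℝ)) := mul_le_mul h1 h7 (abs_nonneg _) zero_le_one
          _ = _ := one_mul _
      push_cast
      rw [e]
      have := abs_sub ((rat ρ x.1 * 2 ^ a) * (ev ρ σ x.2 z - z)) (k - 2 ^ a * ev ρ σ x.1 z)
      linarith)
  rw [ent_const hW, zero_add] at h
  exact h

/-- The entropy gained by one convolution, from the gain of `4 ^ q` convolutions and the
Kaimanovich–Vershik inequality. -/
lemma gain_single {Ω B : Type*} [Fintype Ω] [Fintype B] {w : Ω → ℝ} {v : B → ℝ} {A κ c E : ℝ}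
    (hw : IsW w) (hv : IsW v) (Θ : Ω → ℤ) (Y : B → ℤ) (g q N : ℕ)
    (hbase : ∀ j < N, ∀ c : ℤ,
      A ≤ sent v (fun b => Y b + c) j - sent v (fun b => Y b + c) (j + (g + q)))
    (hg : 1 ≤ g) (hκ : 0 < κ) (hΘ : c * N ≤ ent w Θ - sent w Θ N)
    (h6 : Real.log 6 + κ * (g * Real.log 2) ≤ c * g / 2)
    (hG : 0 ≤ 1 / 2 * Real.log (κ * 4 ^ q / 2) - 4 * Real.log 2 - A) (hE : ent v Y ≤ E) :
    ent v Y + ((N * A + (N * c / (2 * Real.log 2) - g)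
        * (κ / 2 * (1 / 2 * Real.log (κ * 4 ^ q / 2) - 4 * Real.log 2 - A))) / (g + q) - E) / 4 ^ q
      ≤ ent (fun x : Ω × B => w x.1 * v x.2) (fun x => Θ x.1 + Y x.2) := by
  have h1 := gain hw hv Θ Y g q N hbase hg hκ hΘ h6 hG
  have h2 := kv_iter hw hv Θ Y (4 ^ q)
  have hg0 : (0 : ℝ) < g + q := by
    have : (1 : ℝ) ≤ g := by exact_mod_cast hg
    positivity
  rw [mul_comm ((g : ℝ) + q), ← div_le_iff₀ hg0] at h1
  have h3 := h1.trans h2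
  push_cast at h3
  rw [← le_sub_iff_add_le', div_le_iff₀ (by positivity)]
  linarith

/-- The conditioning variable: letter counts together with the cell of `f_u z` at scale
`2 ^ (-a)`. -/
def ZZ (ρ σ : Λ → ℝ) (z : ℝ) (n a : ℕ) (u : Fin n → Λ) : (Λ → ℕ) × ℤ :=
  (cnt u, ⌊2 ^ a * ev ρ σ u z⌋)

/-- The entropy of the fibre through `u₀` between the scales `2 ^ (-a)` and `2 ^ (-M)`. -/
def DD (p ρ σ : Λ → ℝ) (z : ℝ) (n L M a : ℕ) (u₀ : Fin n → Λ) : ℝ :=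
  ent (fun x : (Fin n → Λ) × (Fin L → Λ) =>
      cw (pw p n) (ZZ ρ σ z n a) u₀ x.1 * pw p L x.2) (UU ρ σ z n L M)
    - ent (fun x : (Fin n → Λ) × (Fin L → Λ) =>
      cw (pw p n) (ZZ ρ σ z n a) u₀ x.1 * pw p L x.2) (UU ρ σ z n L a)

/-- Words whose contraction ratio lies in `[2 ^ (-a'), 2 ^ (-a)]`. -/
def Typ (ρ : Λ → ℝ) {n : ℕ} (a a' : ℕ) (u : Fin n → Λ) : Prop :=
  1 ≤ |rat ρ u| * 2 ^ a' ∧ |rat ρ u| * 2 ^ a ≤ 1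

/-- The discretized image of the measure under the linear part of a cylinder map of ratio `R`. -/
def YY (ρ σ : Λ → ℝ) (z : ℝ) (L M : ℕ) (R : ℝ) (v : Fin L → Λ) : ℤ :=
  ⌊(2 ^ M * R) * ev ρ σ v z + -(2 ^ M * R * z)⌋

lemma cw_ne {Ω T : Type*} [Fintype Ω] {w : Ω → ℝ} {Z : Ω → T} {u₀ u : Ω} (h : cw w Z u₀ u ≠ 0) :
    Z u = Z u₀ := by
  by_contra hn
  exact h (by rw [cw, if_neg hn])

lemma Sys.DD_nonneg (H : Sys p ρ σ z θ K) (n L : ℕ) {M a : ℕ} (ham : a ≤ M) {u₀ : Fin n → Λ}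
    (h0 : pw p n u₀ ≠ 0) : 0 ≤ DD p ρ σ z n L M a u₀ := by
  rw [DD, sub_nonneg]
  refine ent_mono (IsW_prod (IsW_cw (IsW_pw H.hp n) _ h0) (IsW_pw H.hp L)) fun x x' hx => ?_
  rw [← UU_div ham, ← UU_div ham, hx]

lemma Sys.DD_ge (H : Sys p ρ σ z θ K) (n L M : ℕ) {a a' : ℕ} {u₀ : Fin n → Λ}
    (h0 : pw p n u₀ ≠ 0) (ht : Typ ρ a a' u₀) :
    ent (fun x : (Fin n → Λ) × (Fin L → Λ) =>
      cw (pw p n) (ZZ ρ σ z n a) u₀ x.1 * pw p L x.2)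
      (fun x => ⌊2 ^ M * ev ρ σ x.1 z⌋ + YY ρ σ z L M (rat ρ u₀) x.2)
      - (Real.log 5 + cK (2 * K + 1)) ≤ DD p ρ σ z n L M a u₀ := by
  have hw := IsW_cw (IsW_pw H.hp n) (ZZ ρ σ z n a) h0
  have hz : ∀ u, cw (pw p n) (ZZ ρ σ z n a) u₀ u ≠ 0 →
      rat ρ u = rat ρ u₀ ∧ ⌊2 ^ a * ev ρ σ u z⌋ = ⌊2 ^ a * ev ρ σ u₀ z⌋ := fun u hu => by
    have := cw_ne hu
    simp only [ZZ, Prod.mk.injEq] at this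
    exact ⟨rat_eq_of_cnt this.1, this.2⟩
  have h1 := H.fiber_ge n L M hw (fun u hu => (hz u hu).1)
  have h2 := H.fiber_le n L a hw (fun u hu => by rw [(hz u hu).1]; exact ht.2)
    (fun u hu => (hz u hu).2)
  unfold DD YY
  linarith

/-- The fibre entropy is at least the entropy of the second summand. -/
lemma Sys.DD_ge_base (H : Sys p ρ σ z θ K) (n L M : ℕ) {a a' : ℕ} {u₀ : Fin n → Λ}
    (h0 : pw p n u₀ ≠ 0) (ht : Typ ρ a a' u₀) :
    ent (pw p L) (YY ρ σ z L M (rat ρ u₀)) - (Real.log 5 + cK (2 * K + 1))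
      ≤ DD p ρ σ z n L M a u₀ := by
  have hw := IsW_cw (IsW_pw H.hp n) (ZZ ρ σ z n a) h0
  have h1 := H.DD_ge n L M h0 ht
  have h2 := kv_iter hw (IsW_pw H.hp L) (fun u => ⌊2 ^ M * ev ρ σ u z⌋)
    (YY ρ σ z L M (rat ρ u₀)) 1
  have h3 : ent (pw p L) (YY ρ σ z L M (rat ρ u₀)) ≤
      ent (fun x : (Fin 1 → (Fin n → Λ)) × (Fin L → Λ) =>
        pw (cw (pw p n) (ZZ ρ σ z n a) u₀) 1 x.1 * pw p L x.2)
      (fun x => ∑ i, ⌊2 ^ M * ev ρ σ (x.1 i) z⌋ + YY ρ σ z L M (rat ρ u₀) x.2) := by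
    have h4 := mixture (q := pw (cw (pw p n) (ZZ ρ σ z n a) u₀) 1) (v := fun _ => pw p L)
      (IsW_pw hw 1) (fun _ _ => IsW_pw H.hp L)
      (fun x => ∑ i, ⌊2 ^ M * ev ρ σ (x.1 i) z⌋ + YY ρ σ z L M (rat ρ u₀) x.2)
      (fun _ => ()) (fun _ _ _ => rfl)
    rw [ent_const (IsW_prod (IsW_pw hw 1) (IsW_pw H.hp L))] at h4
    refine le_trans ?_ (h4.trans (by simp))
    have h5 : ∀ b : Fin 1 → (Fin n → Λ), ent (pw p L)
        (fun v => ∑ i, ⌊2 ^ M * ev ρ σ (b i) z⌋ + YY ρ σ z L M (rat ρ u₀) v)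
        - ent (pw p L) (fun _ => ()) = ent (pw p L) (YY ρ σ z L M (rat ρ u₀)) := by
      intro b
      rw [ent_const (IsW_pw H.hp L), sub_zero]
      exact (ent_congr (by simp))
    simp only [h5]
    rw [← Finset.sum_mul, (IsW_pw hw 1).sum_one, one_mul]
  simp only [Nat.cast_one, one_mul] at h2
  linarith

/-- On rich fibres the entropy is strictly larger. -/
lemma Sys.DD_ge_gain (H : Sys p ρ σ z θ K) (n L M : ℕ) {a a' : ℕ} {u₀ : Fin n → Λ}
    (h0 : pw p n u₀ ≠ 0) (ht : Typ ρ a a' u₀) {A κ c E : ℝ} (g q N L₁ k : ℕ)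
    (hA : ∀ L ≥ L₁, A + 2 * cK K ≤ hh p ρ σ z L (g + q)) (hK : 1 ≤ K)
    (hk : (2 : ℝ) ^ M * θ ^ k ≤ 1) (hL : L₁ + k ≤ L) (hM : N + (g + q) + a' = M)
    (hg : 1 ≤ g) (hκ : 0 < κ)
    (hΘ : c * N ≤ ent (cw (pw p n) (ZZ ρ σ z n a) u₀) (fun u => ⌊2 ^ M * ev ρ σ u z⌋)
      - sent (cw (pw p n) (ZZ ρ σ z n a) u₀) (fun u => ⌊2 ^ M * ev ρ σ u z⌋) N)
    (h6 : Real.log 6 + κ * (g * Real.log 2) ≤ c * g / 2)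
    (hG : 0 ≤ 1 / 2 * Real.log (κ * 4 ^ q / 2) - 4 * Real.log 2 - A)
    (hE : ent (pw p L) (YY ρ σ z L M (rat ρ u₀)) ≤ E) :
    ent (pw p L) (YY ρ σ z L M (rat ρ u₀)) + ((N * A + (N * c / (2 * Real.log 2) - g)
        * (κ / 2 * (1 / 2 * Real.log (κ * 4 ^ q / 2) - 4 * Real.log 2 - A))) / (g + q) - E) / 4 ^ q
      - (Real.log 5 + cK (2 * K + 1)) ≤ DD p ρ σ z n L M a u₀ := by
  have hw := IsW_cw (IsW_pw H.hp n) (ZZ ρ σ z n a) h0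
  have h1 := H.DD_ge n L M h0 ht
  have hK' : (1 : ℝ) ≤ K := by exact_mod_cast hK
  have h2 := gain_single (E := E) hw (IsW_pw H.hp L) (fun u => ⌊2 ^ M * ev ρ σ u z⌋)
    (YY ρ σ z L M (rat ρ u₀)) g q N (fun j hj b => by
      have h3 := H.base_block hA j k (2 ^ M * rat ρ u₀) (-(2 ^ M * rat ρ u₀ * z) + b) L (by
          rw [abs_mul, abs_of_pos (by positivity : (0:ℝ) < 2 ^ M)]
          have h4 : (2:ℝ) ^ (j + (g + q)) * 2 ^ a' ≤ 2 ^ M := by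
            rw [← pow_add]
            exact pow_le_pow_right₀ (by norm_num) (by lia)
          have h5 := ht.1
          have h6 : (2:ℝ) ^ (j + (g + q)) ≤ 2 ^ M * |rat ρ u₀| := by
            calc (2:ℝ) ^ (j + (g + q)) ≤ 2 ^ (j + (g + q)) * (|rat ρ u₀| * 2 ^ a') :=
                  le_mul_of_one_le_right (by positivity) h5
              _ = (2 ^ (j + (g + q)) * 2 ^ a') * |rat ρ u₀| := by ring
              _ ≤ _ := by gcongr
          exact h6.trans (le_mul_of_one_le_left (by positivity) hK')) (by
          rw [abs_mul, abs_of_pos (by positivity : (0:ℝ) < 2 ^ M)]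
          have h4 : |rat ρ u₀| ≤ 1 := (H.abs_rat_le u₀).trans (pow_le_one₀ H.hθ0.le H.hθ1.le)
          have h5 : (1:ℝ) ≤ 2 ^ (j + (g + q)) := one_le_pow₀ (by norm_num)
          have h6 := pow_pos H.hθ0 k
          calc 2 ^ M * |rat ρ u₀| * θ ^ k = (2 ^ M * θ ^ k) * |rat ρ u₀| := by ring
            _ ≤ 1 * 1 := by gcongr
            _ ≤ _ := by linarith) hL
      have e : (fun v => YY ρ σ z L M (rat ρ u₀) v + b) = fun v : Fin L → Λ =>
          ⌊2 ^ M * rat ρ u₀ * ev ρ σ v z + (-(2 ^ M * rat ρ u₀ * z) + b)⌋ := by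
        funext v
        rw [YY, ← Int.floor_add_intCast, add_assoc]
      rw [e]
      linarith) hg hκ hΘ h6 hG hE
  linarith

end growth

/-! ### Summation over the fibres -/

section growth_total

variable {Λ : Type*} [Fintype Λ] {p ρ σ : Λ → ℝ} {z θ : ℝ} {K : ℕ}

/-- An average of fibre entropies, bounded below via the typical and the rich fibres. -/
lemma weight_bound {Ω : Type*} [Fintype Ω] {w : Ω → ℝ} (hw : IsW w) (D e : Ω → ℝ) (typ : Ω → Prop)
    {e₁ br x Bd ε : ℝ} (hBd : 0 < Bd) (hx : 0 ≤ x) (he₁ : 0 ≤ e₁) (hbr : 0 ≤ br)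
    (hD0 : ∀ ω, w ω ≠ 0 → 0 ≤ D ω)
    (hD1 : ∀ ω, w ω ≠ 0 → typ ω → e₁ ≤ D ω)
    (hD2 : ∀ ω, w ω ≠ 0 → typ ω → x ≤ e ω → e₁ + br ≤ D ω)
    (hpu : ∑ ω, w ω * (if typ ω then 0 else 1) ≤ ε)
    (heB : ∀ ω, w ω ≠ 0 → e ω ≤ Bd) (hex : 2 * x ≤ ∑ ω, w ω * e ω) :
    (1 - ε) * e₁ + (x / Bd - ε) * br ≤ ∑ ω, w ω * D ω := by
  have h1 : ∑ ω, w ω * e ω ≤ x + Bd * ∑ ω, w ω * (if x ≤ e ω then 1 else 0) := by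
    calc _ ≤ ∑ ω, (w ω * x + Bd * (w ω * (if x ≤ e ω then 1 else 0))) := by
          refine Finset.sum_le_sum fun ω _ => ?_
          have h0 := hw.nonneg ω
          by_cases hz : w ω = 0
          · simp [hz]
          split_ifs with h
          · have := mul_le_mul_of_nonneg_left (heB ω hz) h0
            have := mul_nonneg h0 hx
            linarith
          · have := mul_le_mul_of_nonneg_left (not_le.1 h).le h0
            linarith
      _ = _ := by rw [Finset.sum_add_distrib, ← Finset.sum_mul, hw.sum_one, Finset.mul_sum, one_mul]
  have h2 : x / Bd ≤ ∑ ω, w ω * (if x ≤ e ω then 1 else 0) := by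
    rw [div_le_iff₀ hBd]
    linarith
  have h3 : ∑ ω, (w ω * e₁ - e₁ * (w ω * (if typ ω then 0 else 1))
      + br * (w ω * (if x ≤ e ω then 1 else 0)) - br * (w ω * (if typ ω then 0 else 1)))
      ≤ ∑ ω, w ω * D ω := by
    refine Finset.sum_le_sum fun ω _ => ?_
    have h0 := hw.nonneg ω
    by_cases hz : w ω = 0
    · simp [hz]
    have hm : ∀ y, y ≤ D ω → w ω * y ≤ w ω * D ω := fun y hy => mul_le_mul_of_nonneg_left hy h0
    by_cases ht : typ ω <;> by_cases hr : x ≤ e ω <;> simp only [ht, hr, if_true, if_false]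
    · have := hm _ (hD2 ω hz ht hr); linarith
    · have := hm _ (hD1 ω hz ht); linarith
    · have := hm _ (hD0 ω hz); linarith
    · have := hm _ (hD0 ω hz)
      have := mul_nonneg hbr h0
      linarith
  rw [Finset.sum_sub_distrib, Finset.sum_add_distrib, Finset.sum_sub_distrib, ← Finset.sum_mul,
    ← Finset.mul_sum, ← Finset.mul_sum, ← Finset.mul_sum, hw.sum_one, one_mul] at h3
  nlinarith

lemma Sys.fiber_sent_le (H : Sys p ρ σ z θ K) (n : ℕ) {M a j d : ℕ} (hj : j + d + a = M)
    {u₀ : Fin n → Λ} (h0 : pw p n u₀ ≠ 0) :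
    sent (cw (pw p n) (ZZ ρ σ z n a) u₀) (fun u => ⌊2 ^ M * ev ρ σ u z⌋) j
      ≤ d * Real.log 2 := by
  have hw := IsW_cw (IsW_pw H.hp n) (ZZ ρ σ z n a) h0
  have h1 := sent_le_add hw (fun u => ⌊2 ^ M * ev ρ σ u z⌋) j d
  have h2 : sent (cw (pw p n) (ZZ ρ σ z n a) u₀) (fun u => ⌊2 ^ M * ev ρ σ u z⌋) (j + d) ≤ 0 := by
    rw [sent_floor]
    have := ent_le_log_card hw (fun u => ⌊2 ^ M * ev ρ σ u z / 2 ^ (j + d)⌋)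
      {⌊2 ^ a * ev ρ σ u₀ z⌋} (fun u hu => by
        have h3 := cw_ne hu
        simp only [ZZ, Prod.mk.injEq] at h3
        rw [Finset.mem_singleton, ← h3.2]
        congr 1
        rw [← hj, pow_add]
        field_simp)
    simpa using this
  linarith

/-- The average fibre entropy of the positions of the cylinders is a conditional entropy. -/
lemma Sys.rich_sum (H : Sys p ρ σ z θ K) (n : ℕ) {M a : ℕ} (ham : a ≤ M) :
    ∑ u₀, pw p n u₀ * ent (cw (pw p n) (ZZ ρ σ z n a) u₀) (fun u => ⌊2 ^ M * ev ρ σ u z⌋)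
      = ent (pw p n) (fun u => (cnt u, ⌊2 ^ M * ev ρ σ u z⌋)) - ent (pw p n) (ZZ ρ σ z n a) := by
  have h1 := chain_cw (IsW_pw H.hp n) (fun u => ⌊2 ^ M * ev ρ σ u z⌋) (ZZ ρ σ z n a)
  have h2 : ent (pw p n) (fun u => (⌊2 ^ M * ev ρ σ u z⌋, ZZ ρ σ z n a u))
      = ent (pw p n) (fun u => (cnt u, ⌊2 ^ M * ev ρ σ u z⌋)) := by
    refine ent_congr fun u u' => ?_
    have e : ∀ u : Fin n → Λ, ⌊2 ^ a * ev ρ σ u z⌋ = ⌊2 ^ M * ev ρ σ u z⌋ / 2 ^ (M - a) := by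
      intro u
      rw [floor_div_pow]
      congr 1
      obtain ⟨d, rfl⟩ := Nat.exists_eq_add_of_le ham
      rw [Nat.add_sub_cancel_left, pow_add]
      field_simp
    simp only [ZZ, Prod.mk.injEq, e]
    constructor
    · rintro ⟨h1, h2⟩
      rw [h1, h2]
      exact ⟨rfl, rfl, rfl⟩
    · rintro ⟨h1, h2, h3⟩
      exact ⟨h2, h1⟩
  rw [← h2, h1]
  ring

/-- Comparison of the entropy at scale `2 ^ (-M)` with the contributions of the fibres: the coarse
entropy `ha`, the entropy `e₀` of the second summand on typical fibres, and the additional gain `br`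
on the rich fibres, those with entropy at least `x`. A fibre entropy is at most `(M - a) log 2`,
so an average of at least `2 * x` makes rich fibres likely. -/
lemma Sys.core (H : Sys p ρ σ z θ K) (hK : 1 ≤ K) {n M a a' g q N ℓ N' : ℕ}
    {A κ c A₂ e₀ br x ε ha : ℝ} {up : ℕ → ℝ}
    (hl : ∃ L₁, ∀ L ≥ L₁, A + 2 * cK K ≤ hh p ρ σ z L (g + q))
    (hℓ : ∃ L₁, ∀ L ≥ L₁, A₂ + 2 * cK K ≤ hh p ρ σ z L ℓ)
    (hup : ∀ m, ∃ L₁, ∀ L ≥ L₁, hh p ρ σ z L m ≤ up m)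
    (hha : ∃ L₁, ∀ L ≥ L₁, ha ≤ hh p ρ σ z L a)
    (hN : N + (g + q) + a' = M) (hN' : N' + ℓ + a' = M) (haa : a ≤ a') (hℓ1 : 1 ≤ ℓ)
    (hg : 1 ≤ g) (hκ : 0 < κ) (h6 : Real.log 6 + κ * (g * Real.log 2) ≤ c * g / 2)
    (hG : 0 ≤ 1 / 2 * Real.log (κ * 4 ^ q / 2) - 4 * Real.log 2 - A)
    (he₀ : ℓ * e₀ ≤ N' * A₂) (hbr : 0 ≤ br)
    (hbr2 : br + (Real.log 5 + cK (2 * K + 1)) ≤ ((N * A + (N * c / (2 * Real.log 2) - g)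
        * (κ / 2 * (1 / 2 * Real.log (κ * 4 ^ q / 2) - 4 * Real.log 2 - A))) / (g + q)
        - (up (M - a) + cK 1)) / 4 ^ q)
    (hx : 0 ≤ x) (hxN : c * N + (M - a - N : ℝ) * Real.log 2 ≤ x)
    (hKx : 2 * x ≤ ent (pw p n) (fun u => (cnt u, ⌊2 ^ M * ev ρ σ u z⌋))
      - ent (pw p n) (ZZ ρ σ z n a))
    (hpu : ∑ u, pw p n u * (if Typ ρ a a' u then 0 else 1) ≤ ε) :
    ha + (1 - ε) * max 0 (e₀ - (Real.log 5 + cK (2 * K + 1)))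
      + (x / ((M - a : ℝ) * Real.log 2) - ε) * br ≤ up M := by
  set C₂ := Real.log 5 + cK (2 * K + 1) with hC₂
  have hC₂0 : 0 ≤ C₂ := add_nonneg (Real.log_nonneg (by norm_num)) (cK_nonneg _)
  have hlog : 0 < Real.log 2 := Real.log_pos (by norm_num)
  have hK' : (1 : ℝ) ≤ K := by exact_mod_cast hK
  have ham : a ≤ M := by lia
  have hP := IsW_pw H.hp n
  obtain ⟨L₁, hl⟩ := hl
  obtain ⟨L₂, hℓ⟩ := hℓ
  obtain ⟨L₃, hu1⟩ := hup M
  obtain ⟨L₄, hu2⟩ := hup (M - a)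
  obtain ⟨L₅, hha⟩ := hha
  obtain ⟨k, hk⟩ := H.exists_pow (2 ^ M)
  rw [abs_of_pos (by positivity)] at hk
  set L := L₁ + L₂ + L₃ + L₄ + L₅ + k with hL
  have hrat : ∀ u : Fin n → Λ, |rat ρ u| ≤ 1 := fun u =>
    (H.abs_rat_le u).trans (pow_le_one₀ H.hθ0.le H.hθ1.le)
  have hpM : (0:ℝ) < 2 ^ M := by positivity
  have hY1 : ∀ u₀ : Fin n → Λ, Typ ρ a a' u₀ →
      e₀ ≤ ent (pw p L) (YY ρ σ z L M (rat ρ u₀)) := by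
    intro u₀ ht
    have h1 := H.base_total hℓ N' k (2 ^ M * rat ρ u₀) (-(2 ^ M * rat ρ u₀ * z)) L (by
      rw [abs_mul, abs_of_pos hpM]
      have h4 : (2:ℝ) ^ (N' + ℓ) * 2 ^ a' = 2 ^ M := by rw [← pow_add, hN']
      have h5 := ht.1
      have h6 : (2:ℝ) ^ (N' + ℓ) ≤ 2 ^ M * |rat ρ u₀| := by
        calc (2:ℝ) ^ (N' + ℓ) ≤ 2 ^ (N' + ℓ) * (|rat ρ u₀| * 2 ^ a') :=
              le_mul_of_one_le_right (by positivity) h5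
          _ = (2 ^ (N' + ℓ) * 2 ^ a') * |rat ρ u₀| := by ring
          _ = _ := by rw [h4]
      exact h6.trans (le_mul_of_one_le_left (by positivity) hK')) (by
      rw [abs_mul, abs_of_pos hpM]
      have h6 := pow_pos H.hθ0 k
      calc 2 ^ M * |rat ρ u₀| * θ ^ k = (2 ^ M * θ ^ k) * |rat ρ u₀| := by ring
        _ ≤ 1 * 1 := by gcongr; exact hrat u₀
        _ = _ := by norm_num) (by lia)
    have hℓ0 : (0:ℝ) < ℓ := by exact_mod_cast hℓ1
    have h2 : (ℓ : ℝ) * e₀ ≤ ℓ * ent (pw p L) (YY ρ σ z L M (rat ρ u₀)) := by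
      refine le_trans he₀ (le_trans (le_of_eq ?_) h1)
      ring
    exact le_of_mul_le_mul_left h2 hℓ0
  have hY2 : ∀ u₀ : Fin n → Λ, Typ ρ a a' u₀ →
      ent (pw p L) (YY ρ σ z L M (rat ρ u₀)) ≤ up (M - a) + cK 1 := by
    intro u₀ ht
    have h1 := H.ent_affine_le L (M - a) (2 ^ M * rat ρ u₀) (-(2 ^ M * rat ρ u₀ * z)) (by
      rw [abs_mul, abs_of_pos hpM]
      have h4 : (2:ℝ) ^ (M - a) * 2 ^ a = 2 ^ M := by rw [← pow_add]; congr 1; lia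
      rw [← h4]
      calc _ = 2 ^ (M - a) * (|rat ρ u₀| * 2 ^ a) := by ring
        _ ≤ _ := mul_le_of_le_one_right (by positivity) ht.2)
    have h2 := hu2 L (by lia)
    refine le_trans h1 ?_
    linarith
  have hDe : ∀ u₀ : Fin n → Λ, pw p n u₀ ≠ 0 → Typ ρ a a' u₀ →
      max 0 (e₀ - C₂) ≤ DD p ρ σ z n L M a u₀ := fun u₀ h0 ht => by
    have h1 := H.DD_ge_base n L M h0 ht
    have h2 := hY1 u₀ ht
    exact max_le (H.DD_nonneg n L ham h0) (by linarith)
  have hMaN : (0:ℝ) < M - a := by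
    have : (M : ℝ) = N' + ℓ + a' := by exact_mod_cast hN'.symm
    have h2 : (a : ℝ) ≤ a' := by exact_mod_cast haa
    have h3 : (1 : ℝ) ≤ ℓ := by exact_mod_cast hℓ1
    have h4 : (0 : ℝ) ≤ N' := Nat.cast_nonneg _
    linarith
  have hB : 0 < (M - a : ℝ) * Real.log 2 := by positivity
  have key := weight_bound hP (DD p ρ σ z n L M a)
    (fun u₀ => ent (cw (pw p n) (ZZ ρ σ z n a) u₀) (fun u => ⌊2 ^ M * ev ρ σ u z⌋))
    (Typ ρ a a') hB hx (le_max_left 0 (e₀ - C₂)) hbr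
    (fun u₀ h0 => H.DD_nonneg n L ham h0) hDe
    (fun u₀ h0 ht hr => by
      have hd := H.fiber_sent_le n (j := N) (d := M - a - N) (a := a) (M := M) (by lia) h0
      have hcast : ((M - a - N : ℕ) : ℝ) = M - a - N := by
        rw [Nat.cast_sub (by lia), Nat.cast_sub ham]
      rw [hcast] at hd
      have h1 := H.DD_ge_gain n L M h0 ht g q N L₁ k hl hK hk (by lia) hN hg hκ
        (by linarith) h6 hG (hY2 u₀ ht)
      have h2 := hY1 u₀ ht
      have h3 := ent_nonneg (IsW_pw H.hp L) (YY ρ σ z L M (rat ρ u₀))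
      have h4 : max 0 (e₀ - C₂) ≤ ent (pw p L) (YY ρ σ z L M (rat ρ u₀)) :=
        max_le h3 (by linarith)
      linarith) hpu
    (fun u₀ h0 => by
      have hd := H.fiber_sent_le n (j := 0) (d := M - a) (a := a) (M := M) (by lia) h0
      rwa [sent_zero, Nat.cast_sub ham] at hd)
    (by rw [H.rich_sum n ham]; exact hKx)
  have h1 := H.mix n L ham (ZZ ρ σ z n a)
  have h2 := hu1 (n + L) (by lia)
  have h3 := hha (n + L) (by lia)
  have h4 : ∑ u₀, pw p n u₀ * DD p ρ σ z n L M a u₀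
      ≤ hh p ρ σ z (n + L) M - hh p ρ σ z (n + L) a := h1
  linarith

/-- Lower bound for the entropy at every scale from the entropy at a single scale. -/
lemma Sys.hh_lower (H : Sys p ρ σ z θ K) (hK : 1 ≤ K) {ℓ : ℕ} {A : ℝ}
    (hℓ : ∃ L₁, ∀ L ≥ L₁, A + 2 * cK K ≤ hh p ρ σ z L ℓ) (N : ℕ) :
    ∃ L₁, ∀ L ≥ L₁, N * A ≤ ℓ * hh p ρ σ z L (N + ℓ) := by
  obtain ⟨L₁, hℓ⟩ := hℓ
  obtain ⟨k, hk⟩ := H.exists_pow (2 ^ (N + ℓ))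
  refine ⟨L₁ + k, fun L hL => ?_⟩
  have hK' : (1 : ℝ) ≤ K := by exact_mod_cast hK
  have := H.base_total hℓ N k (2 ^ (N + ℓ)) 0 L (by
    rw [abs_of_pos (by positivity)]
    exact le_mul_of_one_le_left (by positivity) hK') hk hL
  simp only [add_zero] at this
  rw [hh]
  linarith

end growth_total

/-! ### The entropy growth theorem -/

section growth_numeric

variable {Λ : Type*} [Fintype Λ] {p : Λ → ℝ}

lemma pos_mul_le_one {B ε X : ℝ} (hε : 0 < ε) (hB : ε * B ≤ 1) (hX : X ≤ B) : ε * X ≤ 1 :=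
  (mul_le_mul_of_nonneg_left hX hε.le).trans hB

set_option maxHeartbeats 1000000 in
/-- A self-similar measure with entropy about `α` per scale, `α < 1`, cannot have cylinders of
generation `n` whose positions carry a linear amount of entropy below the scale of the cylinders. -/
theorem growth {α c₀ C : ℝ} {Q K : ℕ} (hα0 : 0 ≤ α) (hα1 : α < 1) (hc₀ : 0 < c₀) (hQ : 1 ≤ Q)
    (hK : 1 ≤ K) (hC : 0 ≤ C) :
    ∃ ε₁ > 0, ∃ l₀ : ℕ, ∀ l ≥ l₀, ∃ ε > 0, ∃ ℓ₀ : ℕ, ∀ ℓ ≥ ℓ₀, ∃ n₀ : ℕ, ∀ n ≥ n₀,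
      ∀ a a' : ℕ, a ≤ a' → (a' : ℝ) - a ≤ ε * n → a' + n ≤ Q * n →
      ∀ (ρ σ : Λ → ℝ) (z θ : ℝ), Sys p ρ σ z θ K →
      (∃ L₁, ∀ L ≥ L₁, (α - ε₁) * l * Real.log 2 ≤ hh p ρ σ z L l) →
      (∃ L₁, ∀ L ≥ L₁, (α - ε) * ℓ * Real.log 2 ≤ hh p ρ σ z L ℓ) →
      (∀ m : ℕ, ∃ L₁, ∀ L ≥ L₁, hh p ρ σ z L m ≤ (α + ε) * m * Real.log 2 + C) →
      ∑ u : Fin n → Λ, pw p n u * (if Typ ρ a a' u then 0 else 1) ≤ ε →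
      ent (pw p n) (fun u => (cnt u, ⌊2 ^ (Q * n) * ev ρ σ u z⌋))
        - ent (pw p n) (ZZ ρ σ z n a) < c₀ * n := by
  have hlg : 0 < Real.log 2 := Real.log_pos (by norm_num)
  set lg := Real.log 2 with hlgdef
  have hQ' : (1 : ℝ) ≤ Q := by exact_mod_cast hQ
  have hαlg : α * lg ≤ lg := mul_le_of_le_one_left hlg.le hα1.le
  -- `c` is the fibre entropy per scale available on rich fibres, `κ` the resulting frequency of
  -- separated pairs at resolution `g`
  set c := c₀ / (4 * Q) with hc
  have hc0 : 0 < c := by positivity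
  set κ := c / (4 * lg) with hκ
  have hκ0 : 0 < κ := by positivity
  obtain ⟨g', hg'⟩ := exists_nat_ge (4 * Real.log 6 / c)
  set g := g' + 1 with hg
  have hg1 : 4 * Real.log 6 ≤ c * g := by
    rw [div_le_iff₀ hc0] at hg'
    push_cast [hg]
    linarith
  have hκlg : κ * lg = c / 4 := by rw [hκ]; field_simp
  have h6 : Real.log 6 + κ * (g * lg) ≤ c * g / 2 := by
    have : κ * (g * lg) = c * g / 4 := by rw [show κ * (g * lg) = (κ * lg) * g by ring, hκlg]; ring
    linarith
  have hα : 0 < 1 - α := by linarith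
  -- `γ` is the entropy gain per scale; it is positive because `α < 1` leaves room below full entropy
  set γ := c * κ * (1 - α) / 8 with hγ
  have hγ0 : 0 < γ := by positivity
  have hcK := cK_nonneg K
  set ε₁ := γ / (4 * lg) with hε₁
  have hε₁lg : ε₁ * lg = γ / 4 := by rw [hε₁]; field_simp
  set C₂ := Real.log 5 + cK (2 * K + 1) with hC₂
  have hC₂0 : 0 ≤ C₂ := add_nonneg (Real.log_nonneg (by norm_num)) (cK_nonneg _)
  set b₁ := g * lg + |Real.log (κ / 2)| / 2 + 4 * lg with hb₁
  have hb₁0 : 0 ≤ b₁ := by positivity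
  obtain ⟨l₀, hl₀⟩ := exists_nat_ge (g + 1 + 2 * b₁ / ((1 - α) * lg) + 8 * cK K / γ)
  refine ⟨ε₁, by positivity, l₀, fun l hl => ?_⟩
  have hl' : g + 1 + 2 * b₁ / ((1 - α) * lg) + 8 * cK K / γ ≤ (l : ℝ) :=
    hl₀.trans (by exact_mod_cast hl)
  have q1 : 0 ≤ 2 * b₁ / ((1 - α) * lg) := by positivity
  have q2 : 0 ≤ 8 * cK K / γ := by positivity
  have hgl : g ≤ l := by
    have : (g : ℝ) ≤ l := by linarith
    exact_mod_cast this
  have hl1 : 2 * b₁ ≤ l * ((1 - α) * lg) := by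
    rw [← div_le_iff₀ (by positivity)]
    have : (0 : ℝ) ≤ g := Nat.cast_nonneg _
    linarith
  have hl2 : 8 * cK K ≤ l * γ := by
    rw [← div_le_iff₀ hγ0]
    have : (0 : ℝ) ≤ g := Nat.cast_nonneg _
    linarith
  have hlpos : (0 : ℝ) < l := by
    have : (0 : ℝ) ≤ g := Nat.cast_nonneg _
    linarith
  obtain ⟨q, hq⟩ := Nat.exists_eq_add_of_le hgl
  have hqr : (l : ℝ) = g + q := by exact_mod_cast hq
  set A := (α - ε₁) * l * lg - 2 * cK K with hA
  -- the gain of a block of `l = g + q` scales containing a scale with frequent separated pairs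
  set I := 1 / 2 * Real.log (κ * 4 ^ q / 2) - 4 * lg - A with hI
  have hIlow : l * ((1 - α) * lg) / 2 ≤ I := by
    have e : Real.log (κ * 4 ^ q / 2) = Real.log (κ / 2) + 2 * q * lg := by
      rw [show κ * 4 ^ q / 2 = κ / 2 * 4 ^ q by ring, Real.log_mul (by positivity) (by positivity),
        Real.log_pow, show (4 : ℝ) = 2 ^ 2 by norm_num, Real.log_pow]
      push_cast
      ring
    have h1 := neg_abs_le (Real.log (κ / 2))
    have h2 : 0 ≤ ε₁ * l * lg := by positivity
    rw [hI, e, hA]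
    have h3 : (q : ℝ) = l - g := by linarith
    rw [h3]
    linarith
  have hI0 : 0 ≤ I := le_trans (by positivity) hIlow
  set Cl := g * (κ / 2 * I) / l with hCl
  have hCl0 : 0 ≤ Cl := by positivity
  -- the entropy of the many-fold convolution exceeds the expected amount by `γ / 2` per scale
  have hX : ∀ N : ℕ, N * (α * lg + γ / 2) - Cl
      ≤ (N * A + (N * c / (2 * lg) - g) * (κ / 2 * I)) / (g + q) := by
    intro N
    rw [← hqr, le_div_iff₀ hlpos, sub_mul, hCl, div_mul_cancel₀ _ hlpos.ne']
    have h1 : γ * l ≤ c / (2 * lg) * (κ / 2 * I) := by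
      have : c / (2 * lg) * (κ / 2 * (l * ((1 - α) * lg) / 2)) = γ * l := by
        rw [hγ]; field_simp; ring
      rw [← this]
      gcongr
    have hN : (0 : ℝ) ≤ N := Nat.cast_nonneg _
    have h2 : (α * lg + γ / 2) * l ≤ A + c / (2 * lg) * (κ / 2 * I) := by
      rw [hA]
      have : ε₁ * l * lg = γ / 4 * l := by rw [← hε₁lg]; ring
      linarith
    have h3 := mul_le_mul_of_nonneg_left h2 hN
    have e : N * c / (2 * lg) = N * (c / (2 * lg)) := by ring
    rw [e]
    linarith
  set k : ℝ := 4 ^ q with hk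
  have hk0 : 0 < k := by positivity
  -- `p₀` is a lower bound for the probability of rich fibres; `B` collects the requirements on `ε`
  set p₀ := c₀ / (2 * Q * lg) with hp₀
  have hp₀0 : 0 < p₀ := by positivity
  set B := 16 * (lg + γ) / γ + 8 * lg / c₀ + 2 / p₀ + 1 + 320 * Q * lg * k / (p₀ * γ) with hB
  have t1 : 0 ≤ 16 * (lg + γ) / γ := by positivity
  have t2 : 0 ≤ 8 * lg / c₀ := by positivity
  have t3 : 0 ≤ 2 / p₀ := by positivity
  have t4 : 0 ≤ 320 * Q * lg * k / (p₀ * γ) := by positivity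
  have hB0 : 0 < B := by linarith
  obtain ⟨ε, hε, hεB⟩ : ∃ ε > 0, ε * B ≤ 1 := ⟨1 / B, by positivity, by field_simp; exact le_rfl⟩
  have e1 : ε * (lg + γ) ≤ γ / 16 := by
    have := pos_mul_le_one hε hεB (show 16 * (lg + γ) / γ ≤ B by linarith only [hB, t1, t2, t3, t4])
    rw [← mul_div_assoc, div_le_one hγ0] at this
    linarith only [this]
  have e2 : ε * lg ≤ c₀ / 8 := by
    have := pos_mul_le_one hε hεB (show 8 * lg / c₀ ≤ B by linarith only [hB, t1, t2, t3, t4])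
    rw [← mul_div_assoc, div_le_one hc₀] at this
    linarith only [this]
  have e3 : ε ≤ p₀ / 2 := by
    have := pos_mul_le_one hε hεB (show 2 / p₀ ≤ B by linarith only [hB, t1, t2, t3, t4])
    rw [← mul_div_assoc, div_le_one hp₀0] at this
    linarith only [this]
  have e4 : ε ≤ 1 := by
    have := pos_mul_le_one hε hεB (show 1 ≤ B by linarith only [hB, t1, t2, t3, t4])
    linarith only [this]
  have e5 : 5 * (ε * (Q * lg)) ≤ p₀ * γ / (64 * k) := by
    have := pos_mul_le_one hε hεB (show 320 * Q * lg * k / (p₀ * γ) ≤ B by linarith only [hB, t1, t2, t3, t4])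
    rw [← mul_div_assoc, div_le_one (by positivity)] at this
    rw [le_div_iff₀ (by positivity)]
    linarith only [this]
  clear_value Cl B p₀ γ ε₁ b₁ c κ g
  obtain ⟨ℓ₀, hℓ₀⟩ := exists_nat_ge (2 * cK K / (ε * lg) + 1)
  refine ⟨ε, hε, ℓ₀, fun ℓ hℓ => ?_⟩
  have hℓ' : 2 * cK K / (ε * lg) + 1 ≤ (ℓ : ℝ) := hℓ₀.trans (by exact_mod_cast hℓ)
  have hℓc : 2 * cK K ≤ ε * lg * ℓ := by
    rw [mul_comm (ε * lg), ← div_le_iff₀ (by positivity)]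
    linarith
  have hℓ1 : 1 ≤ ℓ := by
    have : 0 ≤ 2 * cK K / (ε * lg) := by positivity
    have : (1 : ℝ) ≤ ℓ := by linarith
    exact_mod_cast this
  have hcK1 := cK_nonneg 1
  set D₁ := l * (lg + γ) + Cl + C + cK 1 with hD₁
  have hD₁0 : 0 ≤ D₁ := by positivity
  set D₂ := 2 * ℓ * lg + C + C₂ with hD₂
  have hD₂0 : 0 ≤ D₂ := by positivity
  obtain ⟨n₀, hn₀⟩ := exists_nat_ge (l + ℓ + 8 * l * lg / c₀ + 8 * D₁ / γ + 8 * k * C₂ / γ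
    + D₂ / (p₀ * γ / (64 * k)) + 1)
  refine ⟨n₀, fun n hn a a' haa hε' hQn ρ σ z θ H h1 h2 hup hpu => ?_⟩
  have hn' := hn₀.trans (show (n₀ : ℝ) ≤ n by exact_mod_cast hn)
  have r1 : (0 : ℝ) ≤ l := Nat.cast_nonneg _
  have r2 : (0 : ℝ) ≤ ℓ := Nat.cast_nonneg _
  have r3 : 0 ≤ 8 * l * lg / c₀ := by positivity
  have r4 : 0 ≤ 8 * D₁ / γ := by positivity
  have r5 : 0 ≤ 8 * k * C₂ / γ := by positivity
  have r6 : 0 ≤ D₂ / (p₀ * γ / (64 * k)) := by positivity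
  have n1 : l ≤ n := by
    have : (l : ℝ) ≤ n := by linarith only [hn', r1, r2, r3, r4, r5, r6]
    exact_mod_cast this
  have n2 : ℓ ≤ n := by
    have : (ℓ : ℝ) ≤ n := by linarith only [hn', r1, r2, r3, r4, r5, r6]
    exact_mod_cast this
  have n3 : l * lg ≤ c₀ * n / 8 := by
    have : 8 * l * lg / c₀ ≤ n := by linarith only [hn', r1, r2, r3, r4, r5, r6]
    rw [div_le_iff₀ hc₀] at this
    linarith only [this]
  have n4 : D₁ ≤ n * γ / 8 := by
    have : 8 * D₁ / γ ≤ n := by linarith only [hn', r1, r2, r3, r4, r5, r6]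
    rw [div_le_iff₀ hγ0] at this
    linarith only [this]
  have n5 : k * C₂ ≤ n * γ / 8 := by
    have : 8 * k * C₂ / γ ≤ n := by linarith only [hn', r1, r2, r3, r4, r5, r6]
    rw [div_le_iff₀ hγ0] at this
    linarith only [this]
  have n6 : D₂ < n * (p₀ * γ / (64 * k)) := by
    rw [← div_lt_iff₀ (by positivity)]
    linarith only [hn', r1, r2, r3, r4, r5, r6]
  have n7 : (0 : ℝ) < n := by linarith only [hn', r1, r2, r3, r4, r5, r6]
  by_contra hcon
  rw [not_lt] at hcon
  obtain ⟨d, hd⟩ := Nat.exists_eq_add_of_le haa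
  obtain ⟨N, hN⟩ : ∃ N, N + (g + q) + a' = Q * n :=
    ⟨Q * n - (g + q) - a', by lia⟩
  obtain ⟨N', hN'⟩ : ∃ N', N' + ℓ + a' = Q * n := ⟨Q * n - ℓ - a', by lia⟩
  have hNr : (N : ℝ) = Q * n - a' - l := by
    have : (N : ℝ) + (g + q) + a' = Q * n := by exact_mod_cast hN
    rw [hqr]; linarith only [this]
  have hNr' : (N' : ℝ) = Q * n - a' - ℓ := by
    have : (N' : ℝ) + ℓ + a' = Q * n := by exact_mod_cast hN'
    linarith only [this]
  have hN0 : (0 : ℝ) ≤ N := Nat.cast_nonneg _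
  have hN0' : (0 : ℝ) ≤ N' := Nat.cast_nonneg _
  have haQ : a ≤ Q * n := by lia
  set m : ℝ := Q * n - a with hm
  have haa' : (a : ℝ) ≤ a' := by exact_mod_cast haa
  have ha0 : (0 : ℝ) ≤ a := Nat.cast_nonneg _
  have hmn : (n : ℝ) ≤ m := by
    have h : (a : ℝ) + n ≤ Q * n := by exact_mod_cast (by lia : a + n ≤ Q * n)
    linarith only [h, hm]
  have hmQ : m ≤ Q * n := by linarith only [hm, ha0]
  have hcast : ((Q * n - a : ℕ) : ℝ) = m := by rw [Nat.cast_sub haQ, hm]; push_cast; rfl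
  have hMcast : ((Q * n : ℕ) : ℝ) = Q * n := by push_cast; rfl
  have hεlg : ε * lg ≤ γ / 16 :=
    le_trans (mul_le_mul_of_nonneg_left (by linarith only [hγ0]) hε.le) e1
  have hbr : n * γ / (8 * k) + C₂ ≤ ((N * A + (N * c / (2 * lg) - g) * (κ / 2 * I)) / (g + q)
      - ((α + ε) * ((Q * n - a : ℕ) : ℝ) * lg + C + cK 1)) / k := by
    rw [hcast, le_div_iff₀ hk0]
    have e : (n * γ / (8 * k) + C₂) * k = n * γ / 8 + k * C₂ := by field_simp
    rw [e]
    have h3 := hX N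
    have h4 : (m - ε * n - l) * (α * lg + γ / 2) ≤ N * (α * lg + γ / 2) := by
      have : 0 ≤ α * lg + γ / 2 := by positivity
      refine mul_le_mul_of_nonneg_right ?_ this
      rw [hNr]; linarith only [hm, hε', haa', ha0, r1]
    have h5 : (ε * n + l) * (α * lg + γ / 2) ≤ (ε * n + l) * (lg + γ) := by
      refine mul_le_mul_of_nonneg_left ?_ (by positivity)
      linarith only [hαlg, hγ0]
    have h6 : n * (γ / 2 - ε * lg) ≤ m * (γ / 2 - ε * lg) :=
      mul_le_mul_of_nonneg_right hmn (by linarith only [hεlg, hγ0])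
    have h7 : n * (ε * (lg + γ)) ≤ n * (γ / 16) := mul_le_mul_of_nonneg_left e1 n7.le
    have h8 : n * (ε * lg) ≤ n * (γ / 16) := mul_le_mul_of_nonneg_left hεlg n7.le
    have h9 : l * (lg + γ) + Cl + C + cK 1 ≤ n * γ / 8 := n4
    linarith only [h3, h4, h5, h6, h7, h8, h9, n5]
  set e₀ := m * α * lg - (ε * n + ℓ) * lg - 2 * ε * m * lg with he₀
  have he₀' : ℓ * e₀ ≤ N' * ((α - ε) * ℓ * lg - 2 * cK K) := by
    have h3 : ℓ * ((α - 2 * ε) * lg) ≤ (α - ε) * ℓ * lg - 2 * cK K := by linarith only [hℓc]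
    have h4 := mul_le_mul_of_nonneg_left h3 hN0'
    refine le_trans ?_ h4
    have h5 : e₀ ≤ N' * ((α - 2 * ε) * lg) := by
      have h6 : (m - ε * n - ℓ) * (α * lg) ≤ N' * (α * lg) :=
        mul_le_mul_of_nonneg_right (by rw [hNr']; linarith only [hm, hε', haa', ha0, r2]) (by positivity)
      have h7 : N' * (2 * ε * lg) ≤ m * (2 * ε * lg) :=
        mul_le_mul_of_nonneg_right (by rw [hNr']; linarith only [hm, hε', haa', ha0, r2]) (by positivity)
      have h8 : (ε * n + ℓ) * (α * lg) ≤ (ε * n + ℓ) * lg :=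
        mul_le_mul_of_nonneg_left hαlg (by positivity)
      rw [he₀]
      linarith only [h6, h7, h8]
    have := mul_le_mul_of_nonneg_left h5 r2
    linarith only [this]
  have h2' : ∃ L₁, ∀ L ≥ L₁, (α - ε) * ℓ * lg - 2 * cK K + 2 * cK K ≤ hh p ρ σ z L ℓ := by
    simpa only [sub_add_cancel] using h2
  have hha : ∃ L₁, ∀ L ≥ L₁, a * α * lg - ℓ * lg - 2 * ε * a * lg ≤ hh p ρ σ z L a := by
    have haα : a * α * lg ≤ a * lg := by
      have := mul_le_mul_of_nonneg_left hαlg ha0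
      linarith only [this]
    have hεa : 0 ≤ 2 * ε * a * lg := by positivity
    by_cases hal : ℓ ≤ a
    · obtain ⟨s, rfl⟩ := Nat.exists_eq_add_of_le' hal
      obtain ⟨L₁, hL₁⟩ := H.hh_lower hK h2' s
      refine ⟨L₁, fun L hL => ?_⟩
      have h3 := hL₁ L hL
      have hℓpos : (0 : ℝ) < ℓ := by exact_mod_cast hℓ1
      have hs0 : (0 : ℝ) ≤ s := Nat.cast_nonneg _
      refine le_of_mul_le_mul_left (le_trans ?_ h3) hℓpos
      have h4 : ℓ * ((α - 2 * ε) * lg) ≤ (α - ε) * ℓ * lg - 2 * cK K := by linarith only [hℓc]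
      refine le_trans ?_ (mul_le_mul_of_nonneg_left h4 hs0)
      push_cast
      have h5 : ℓ * (ℓ * (α * lg)) ≤ ℓ * (ℓ * lg) := by gcongr
      have h6 : 0 ≤ ℓ * (ε * (ℓ * lg)) := by positivity
      linarith only [h5, h6]
    · refine ⟨0, fun L _ => ?_⟩
      have h3 : 0 ≤ hh p ρ σ z L a := ent_nonneg (IsW_pw H.hp L) _
      have h4 : (a : ℝ) * lg ≤ ℓ * lg := by
        have : (a : ℝ) ≤ ℓ := by exact_mod_cast (not_le.1 hal).le
        gcongr
      linarith only [h3, h4, haα, hεa]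
  have key := H.core hK (n := n) (M := Q * n) (a := a) (a' := a') (g := g) (q := q) (N := N)
    (ℓ := ℓ) (N' := N') (A := A) (κ := κ) (c := c) (A₂ := (α - ε) * ℓ * lg - 2 * cK K) (e₀ := e₀)
    (br := n * γ / (8 * k)) (x := c₀ * n / 2) (ε := ε)
    (ha := a * α * lg - ℓ * lg - 2 * ε * a * lg) (up := fun m => (α + ε) * m * lg + C)
    (by simpa only [hA, sub_add_cancel, ← hq] using h1) h2' hup hha hN hN' haa hℓ1
    (by lia) hκ0 h6 hI0 he₀' (by positivity) hbr (by positivity)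
    (by
      rw [hMcast]
      have h3 : c * N ≤ c₀ * n / 4 := by
        have : (N : ℝ) ≤ Q * n := by rw [hNr]; linarith only [hm, hε', haa', ha0, r1]
        calc c * N ≤ c * (Q * n) := by gcongr
          _ = _ := by rw [hc]; field_simp
      have h4 : (Q * n - a - N : ℝ) * lg ≤ (ε * n + l) * lg := by
        refine mul_le_mul_of_nonneg_right ?_ hlg.le
        rw [hNr]; linarith only [hm, hε', haa', ha0, r1]
      have h5 := mul_le_mul_of_nonneg_right e2 n7.le
      linarith only [h3, h4, h5, n3])
    (by linarith only [hcon]) hpu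
  simp only [hMcast] at key
  have hp : p₀ ≤ c₀ * n / 2 / ((Q * n - a) * lg) := by
    rw [le_div_iff₀ (by rw [← hm]; exact mul_pos (n7.trans_le hmn) hlg), ← hm]
    calc p₀ * (m * lg) ≤ p₀ * ((Q * n) * lg) := by gcongr
      _ = _ := by rw [hp₀]; field_simp
  have hbr0 : 0 ≤ n * γ / (8 * k) := by positivity
  have k1 : p₀ / 2 * (n * γ / (8 * k))
      ≤ (c₀ * n / 2 / ((Q * n - a) * lg) - ε) * (n * γ / (8 * k)) :=
    mul_le_mul_of_nonneg_right (by linarith only [hp, e3]) hbr0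
  have k2 : e₀ - C₂ - ε * (m * lg) ≤ (1 - ε) * max 0 (e₀ - C₂) := by
    have h3 : max 0 (e₀ - C₂) ≤ m * lg := by
      refine max_le (mul_nonneg (n7.le.trans hmn) hlg.le) ?_
      have h4 : m * α * lg ≤ m * lg := by
        have := mul_le_mul_of_nonneg_left hαlg (n7.le.trans hmn)
        linarith only [this]
      have h5 : 0 ≤ (ε * n + ℓ) * lg := by positivity
      have h6 : 0 ≤ 2 * ε * m * lg := by
        have : 0 ≤ m := n7.le.trans hmn
        positivity
      linarith only [h4, h5, h6, hC₂0]
    have h4 := le_max_right 0 (e₀ - C₂)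
    have h5 := mul_le_mul_of_nonneg_left h3 hε.le
    linarith only [h4, h5]
  have k3 : p₀ / 2 * (n * γ / (8 * k)) = 4 * (n * (p₀ * γ / (64 * k))) := by
    field_simp; ring
  have k4 : n * (5 * (ε * (Q * lg))) ≤ n * (p₀ * γ / (64 * k)) :=
    mul_le_mul_of_nonneg_left e5 n7.le
  have k5 : ε * n * lg ≤ n * (ε * (Q * lg)) := by
    have : 0 ≤ n * (ε * lg) := by positivity
    have := mul_le_mul_of_nonneg_left hQ' this
    linarith only [this]
  have k6 : ε * m * lg ≤ n * (ε * (Q * lg)) := by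
    have := mul_le_mul_of_nonneg_left hmQ (by positivity : 0 ≤ ε * lg)
    linarith only [this]
  have k7 : ε * a * lg + ε * m * lg = n * (ε * (Q * lg)) := by rw [hm]; ring
  have k8 : a * α * lg + m * α * lg = α * (Q * n) * lg := by rw [hm]; ring
  have k9 : 0 ≤ n * (p₀ * γ / (64 * k)) := by positivity
  rw [he₀] at k2
  linarith only [key, k1, k2, k3, k4, k5, k6, k7, k8, k9, n6, hD₂]

end growth_numeric

/-! ### Comparison of the self-similar measure with its finite approximations -/

section measure

variable {Λ : Type*} [Fintype Λ] {p ρ σ : Λ → ℝ} {z θ : ℝ} {K : ℕ} {μ : Measure ℝ}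

/-- The self-similarity relation iterated over words of length `L`; it holds for arbitrary sets
since the maps are homeomorphisms. -/
lemma Sys.measure_words [IsProbabilityMeasure μ] (H : Sys p ρ σ z θ K)
    (hμ : μ = ∑ i, ENNReal.ofReal (p i) • μ.map (fun x => ρ i * x + σ i)) (L : ℕ) :
    ∀ S : Set ℝ, μ.real S = ∑ u : Fin L → Λ, pw p L u * μ.real {x | ev ρ σ u x ∈ S} := by
  have base : ∀ S : Set ℝ, μ.real S = ∑ i, p i * μ.real {x | ρ i * x + σ i ∈ S} := by
    intro S
    have hemb : ∀ i, MeasurableEmbedding (fun x : ℝ => ρ i * x + σ i) := fun i => by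
      have hi : ρ i ≠ 0 := fun h => by
        have := H.low i
        rw [h] at this
        simp at this
        linarith
      exact ((Homeomorph.mulLeft₀ (ρ i) hi).trans (Homeomorph.addRight (σ i))).measurableEmbedding
    have h1 : μ S = ∑ i, ENNReal.ofReal (p i) * μ {x | ρ i * x + σ i ∈ S} := by
      conv_lhs => rw [hμ]
      simp only [Measure.coe_finsetSum, Finset.sum_apply, Measure.smul_apply, smul_eq_mul]
      exact Finset.sum_congr rfl fun i _ => by rw [(hemb i).map_apply]; rfl
    rw [measureReal_def, h1, ENNReal.toReal_sum (fun i _ => by finiteness)]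
    exact Finset.sum_congr rfl fun i _ => by
      rw [ENNReal.toReal_mul, ENNReal.toReal_ofReal (H.hp.nonneg i), measureReal_def]
  induction L with
  | zero => intro S; simp [pw, ev]
  | succ L ih =>
    intro S
    rw [base S, sum_fin_succ]
    refine Finset.sum_congr rfl fun i _ => ?_
    rw [ih, Finset.mul_sum]
    refine Finset.sum_congr rfl fun u _ => ?_
    rw [pw_cons, mul_assoc]
    simp only [ev_cons, Set.mem_ofPred_eq]

/-- The self-similar measure is carried by a neighbourhood of the invariant interval. -/
lemma Sys.measure_supp [IsProbabilityMeasure μ] (H : Sys p ρ σ z θ K)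
    (hμ : μ = ∑ i, ENNReal.ofReal (p i) • μ.map (fun x => ρ i * x + σ i)) :
    μ.real {x | (K : ℝ) + 1 < |x|} = 0 := by
  refine le_antisymm ?_ measureReal_nonneg
  have hmono : Monotone (fun n : ℕ => {x : ℝ | |x| ≤ n}) := fun n m h x hx => by
    simp only [Set.mem_ofPred_eq] at hx ⊢
    exact hx.trans (by exact_mod_cast h)
  have h1 := tendsto_measure_iUnion_atTop (μ := μ) hmono
  have h2 : (⋃ n : ℕ, {x : ℝ | |x| ≤ n}) = univ := by
    refine eq_univ_of_forall fun x => ?_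
    obtain ⟨n, hn⟩ := exists_nat_ge |x|
    exact mem_iUnion.2 ⟨n, hn⟩
  rw [h2, measure_univ] at h1
  have h3 : Tendsto (fun n : ℕ => 1 - μ.real {x : ℝ | |x| ≤ n}) atTop (nhds (1 - 1)) :=
    ((ENNReal.tendsto_toReal ENNReal.one_ne_top).comp h1).const_sub 1
  rw [sub_self] at h3
  refine ge_of_tendsto' h3 fun n => ?_
  obtain ⟨L, hL⟩ := H.exists_pow ((n : ℝ) + K)
  rw [H.measure_words hμ L]
  have hc : 1 - μ.real {x : ℝ | |x| ≤ n} = μ.real {x : ℝ | |x| ≤ n}ᶜ := by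
    have hm : MeasurableSet {x : ℝ | |x| ≤ n} := measurableSet_le measurable_norm measurable_const
    rw [measureReal_compl hm, probReal_univ]
  rw [hc]
  have hP := IsW_pw H.hp L
  calc _ ≤ ∑ u : Fin L → Λ, pw p L u * μ.real {x : ℝ | |x| ≤ n}ᶜ := by
        refine Finset.sum_le_sum fun u _ => mul_le_mul_of_nonneg_left ?_ (hP.nonneg u)
        refine measureReal_mono fun x hx hxn => ?_
        simp only [Set.mem_ofPred_eq] at hx hxn
        have h4 := ev_affine (ρ := ρ) (σ := σ) u x z
        have h5 := H.abs_ev_le u H.hz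
        have h6 : |rat ρ u * (x - z)| ≤ 1 := by
          rw [abs_mul]
          refine le_trans ?_ hL
          rw [mul_comm]
          have h7 : |x - z| ≤ |(n : ℝ) + K| := by
            rw [abs_of_nonneg (by positivity : (0 : ℝ) ≤ n + K)]
            have := abs_sub x z
            have := H.hz
            linarith
          exact mul_le_mul h7 (H.abs_rat_le u) (abs_nonneg _) (abs_nonneg _)
        rw [← h4] at h6
        have h8 := abs_sub_abs_le_abs_sub (ev ρ σ u x) (ev ρ σ u z)
        linarith
    _ = _ := by rw [← Finset.sum_mul, hP.sum_one, one_mul]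

/-- The law of `X` under the weight `w` and the measure `μ` can be coupled at distance `η`. -/
structure Close {Ω : Type*} [Fintype Ω] (w : Ω → ℝ) (X : Ω → ℝ) (μ : Measure ℝ) (η : ℝ) : Prop where
  le : ∀ S : Set ℝ, μ.real S ≤ ∑ u, if ∃ x ∈ S, |x - X u| ≤ η then w u else 0
  ge : ∀ S : Set ℝ, (∑ u, if X u ∈ S then w u else 0) ≤ μ.real {x | ∃ y ∈ S, |x - y| ≤ η}

lemma Sys.close [IsProbabilityMeasure μ] (H : Sys p ρ σ z θ K)
    (hμ : μ = ∑ i, ENNReal.ofReal (p i) • μ.map (fun x => ρ i * x + σ i)) {η : ℝ} (hη : 0 < η) :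
    ∃ L₁, ∀ L ≥ L₁, Close (pw p L) (fun u => ev ρ σ u z) μ η := by
  obtain ⟨L₁, hL₁⟩ := H.exists_pow ((2 * (K : ℝ) + 1) / η)
  refine ⟨L₁, fun L hL => ?_⟩
  have hP := IsW_pw H.hp L
  have hdist : ∀ (u : Fin L → Λ) (x : ℝ), |x| ≤ K + 1 → |ev ρ σ u x - ev ρ σ u z| ≤ η := by
    intro u x hx
    rw [ev_affine, abs_mul]
    rw [abs_of_nonneg (by positivity : (0 : ℝ) ≤ (2 * K + 1) / η), div_mul_eq_mul_div,
      div_le_one hη] at hL₁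
    refine le_trans ?_ hL₁
    rw [mul_comm]
    have h7 : |x - z| ≤ 2 * K + 1 := by
      have := abs_sub x z
      have := H.hz
      linarith
    exact mul_le_mul h7 ((H.abs_rat_le u).trans (pow_le_pow_of_le_one H.hθ0.le H.hθ1.le hL))
      (abs_nonneg _) (by positivity)
  have hsupp := H.measure_supp hμ
  have hfull : μ.real {x : ℝ | |x| ≤ K + 1} = 1 := by
    have h := measureReal_compl (μ := μ) (s := {x : ℝ | (K : ℝ) + 1 < |x|})
      (measurableSet_lt measurable_const measurable_norm)
    rw [hsupp, sub_zero, probReal_univ] at h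
    refine Eq.trans (congrArg μ.real ?_) h
    ext x
    simp
  constructor
  · intro S
    rw [H.measure_words hμ L S]
    refine Finset.sum_le_sum fun u _ => ?_
    split_ifs with h
    · exact mul_le_of_le_one_right (hP.nonneg u) measureReal_le_one
    · have h0 : μ.real {x | ev ρ σ u x ∈ S} ≤ 0 := by
        rw [← hsupp]
        refine measureReal_mono fun x hx => ?_
        by_contra hn
        simp only [Set.mem_ofPred_eq, not_lt] at hx hn
        exact h ⟨_, hx, hdist u x hn⟩
      exact mul_nonpos_of_nonneg_of_nonpos (hP.nonneg u) h0
  · intro S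
    rw [H.measure_words hμ L]
    refine Finset.sum_le_sum fun u _ => ?_
    split_ifs with h
    · have h1 : 1 ≤ μ.real {x | ev ρ σ u x ∈ {x | ∃ y ∈ S, |x - y| ≤ η}} := by
        rw [← hfull]
        exact measureReal_mono fun x hx => ⟨_, h, hdist u x hx⟩
      exact le_mul_of_one_le_right (hP.nonneg u) h1
    · exact mul_nonneg (hP.nonneg u) measureReal_nonneg

/-- Almost sure eventual validity gives eventual validity on sets of measure close to one. -/
lemma eventually_measure [IsProbabilityMeasure μ] (P : ℕ → ℝ → Prop)
    (h : ∀ᵐ x ∂μ, ∀ᶠ m in atTop, P m x) {η : ℝ} (hη : 0 < η) :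
    ∀ᶠ m in atTop, 1 - η ≤ μ.real {x | P m x} := by
  have hmono : Monotone (fun n : ℕ => {x : ℝ | ∀ m ≥ n, P m x}) :=
    fun n m h x hx k hk => hx k (h.trans hk)
  have h1 := tendsto_measure_iUnion_atTop (μ := μ) hmono
  have h2 : μ (⋃ n : ℕ, {x : ℝ | ∀ m ≥ n, P m x}) = 1 := by
    rw [← measure_univ (μ := μ)]
    refine measure_congr (eventuallyEq_univ.2 ?_)
    filter_upwards [h] with x hx
    obtain ⟨n, hn⟩ := eventually_atTop.1 hx
    exact mem_iUnion.2 ⟨n, hn⟩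
  rw [h2] at h1
  have h3 := (ENNReal.tendsto_toReal ENNReal.one_ne_top).comp h1
  have h4 := h3.eventually (lt_mem_nhds (show (1 - η : ℝ) < (1 : ℝ≥0∞).toReal by simp [hη]))
  filter_upwards [h4] with m hm
  exact hm.le.trans (measureReal_mono fun x hx => hx m le_rfl)

/-- Exact dimensionality along the dyadic scales. -/
lemma exactDim_dyadic {d : ℝ} [IsProbabilityMeasure μ] (hd : ExactDim μ d) {c ε : ℝ} (hc : 0 < c)
    (hε : 0 < ε) : ∀ᵐ x ∂μ, ∀ᶠ m : ℕ in atTop,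
      0 < μ.real (Metric.ball x (c / 2 ^ m)) ∧
      -((d + ε) * m * Real.log 2) ≤ Real.log (μ.real (Metric.ball x (c / 2 ^ m))) ∧
      Real.log (μ.real (Metric.ball x (c / 2 ^ m))) ≤ -((d - ε) * m * Real.log 2) := by
  have hl : 0 < Real.log 2 := Real.log_pos (by norm_num)
  filter_upwards [hd, Measure.support_mem_ae (μ := μ)] with x hx hsup
  have hpow : Tendsto (fun m : ℕ => c / (2 : ℝ) ^ m) atTop (nhds 0) :=
    tendsto_const_nhds.div_atTop (tendsto_pow_atTop_atTop_of_one_lt (by norm_num))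
  have hr : Tendsto (fun m : ℕ => c / (2 : ℝ) ^ m) atTop (nhdsWithin 0 (Set.Ioi 0)) :=
    tendsto_nhdsWithin_iff.2 ⟨hpow, Eventually.of_forall fun m => by
      simp only [Set.mem_Ioi]; positivity⟩
  have h1 := hx.comp hr
  have h2 := h1.eventually (Ioo_mem_nhds (show d - ε / 2 < d by linarith)
    (show d < d + ε / 2 by linarith))
  have hlin : Tendsto (fun m : ℕ => ε / 2 * Real.log 2 * (m : ℝ)) atTop atTop :=
    tendsto_natCast_atTop_atTop.const_mul_atTop (by positivity)
  filter_upwards [h2, hpow.eventually (gt_mem_nhds (show (0 : ℝ) < 1 by norm_num)),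
    hlin.eventually_ge_atTop (|d + ε / 2| * |Real.log c|),
    hlin.eventually_ge_atTop (|d - ε / 2| * |Real.log c|)] with m h3 h4 h5 h6
  have hpos : 0 < c / (2 : ℝ) ^ m := by positivity
  have hlog : Real.log (c / 2 ^ m) = Real.log c - m * Real.log 2 := by
    rw [Real.log_div hc.ne' (by positivity), Real.log_pow]
  have hneg : Real.log (c / 2 ^ m) < 0 := Real.log_neg hpos h4
  have hq : (Real.log (μ (Metric.ball x (c / 2 ^ m))).toReal / Real.log (c / 2 ^ m))
      = Real.log (μ.real (Metric.ball x (c / 2 ^ m))) / Real.log (c / 2 ^ m) := rfl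
  simp only [Function.comp] at h3
  rw [hq, div_lt_iff_of_neg hneg, lt_div_iff_of_neg hneg, hlog] at h3
  have e1 := neg_abs_le ((d + ε / 2) * Real.log c)
  have e2 := le_abs_self ((d - ε / 2) * Real.log c)
  rw [abs_mul] at e1 e2
  refine ⟨?_, ?_, ?_⟩
  · exact ENNReal.toReal_pos ((Measure.mem_support_iff_forall x).1 hsup _
      (Metric.ball_mem_nhds x hpos)).ne' (by finiteness)
  · linarith only [h3.1, h3.2, e1, h5]
  · linarith only [h3.1, h3.2, e2, h6]

lemma exactDim_nonneg {d : ℝ} [IsProbabilityMeasure μ] (hd : ExactDim μ d) : 0 ≤ d := by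
  obtain ⟨x, hx⟩ := (show ∀ᵐ x ∂μ, _ from hd).exists
  refine ge_of_tendsto hx ?_
  filter_upwards [Ioo_mem_nhdsGT (show (0 : ℝ) < 1 by norm_num)] with r hr
  refine div_nonneg_of_nonpos ?_ (Real.log_nonpos hr.1.le hr.2.le)
  exact Real.log_nonpos ENNReal.toReal_nonneg (by
    rw [← measureReal_def]; exact measureReal_le_one)

end measure

/-! ### Entropy and dimension -/

section dimension

variable {Λ : Type*} [Fintype Λ] {p ρ σ : Λ → ℝ} {z θ : ℝ} {K : ℕ} {μ : Measure ℝ}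

lemma abs_lt_of_floor_eq {x y : ℝ} (h : ⌊x⌋ = ⌊y⌋) : |x - y| < 1 :=
  Int.abs_sub_lt_one_of_floor_eq_floor h

/-- The scale entropies of the finite approximations are bounded below by the dimension: most cells
of size `2 ^ (-m)` have mass at most `2 ^ (-(d - ε) m)`. -/
lemma Sys.hh_ge_dim [IsProbabilityMeasure μ] (H : Sys p ρ σ z θ K)
    (hμ : μ = ∑ i, ENNReal.ofReal (p i) • μ.map (fun x => ρ i * x + σ i)) {d : ℝ}
    (hd : ExactDim μ d) {ε : ℝ} (hε : 0 < ε) :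
    ∀ᶠ m : ℕ in atTop, ∃ L₁, ∀ L ≥ L₁, (d - ε) * m * Real.log 2 ≤ hh p ρ σ z L m := by
  have hl : 0 < Real.log 2 := Real.log_pos (by norm_num)
  have hd0 := exactDim_nonneg hd
  have hη : 0 < ε / (2 * (d + 1)) := by positivity
  filter_upwards [eventually_measure _ (exactDim_dyadic hd (c := 8) (by norm_num) (half_pos hε)) hη]
    with m hm
  have h2m : (0 : ℝ) < 2 ^ m := by positivity
  obtain ⟨L₁, hL₁⟩ := H.close hμ (η := 1 / 2 ^ m) (by positivity)
  refine ⟨L₁, fun L hL => ?_⟩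
  have hcl := hL₁ L hL
  have hP := IsW_pw H.hp L
  have hnn := ent_nonneg hP (fun u => ⌊2 ^ m * ev ρ σ u z⌋)
  have hmR : (0 : ℝ) ≤ m := Nat.cast_nonneg m
  by_cases hdε : d - ε / 2 < 0
  · refine le_trans ?_ hnn
    refine mul_nonpos_of_nonpos_of_nonneg (mul_nonpos_of_nonpos_of_nonneg ?_ hmR) hl.le
    linarith
  push Not at hdε
  set G := {x : ℝ | 0 < μ.real (Metric.ball x (8 / 2 ^ m)) ∧
      -((d + ε / 2) * m * Real.log 2) ≤ Real.log (μ.real (Metric.ball x (8 / 2 ^ m))) ∧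
      Real.log (μ.real (Metric.ball x (8 / 2 ^ m))) ≤ -((d - ε / 2) * m * Real.log 2)} with hG
  have h1 := hm.trans (hcl.le G)
  have key : (∑ u : Fin L → Λ, if ∃ x ∈ G, |x - ev ρ σ u z| ≤ 1 / 2 ^ m then pw p L u else 0)
      * ((d - ε / 2) * m * Real.log 2) ≤ hh p ρ σ z L m := by
    rw [hh, ent, ← Finset.sum_neg_distrib, Finset.sum_mul]
    refine Finset.sum_le_sum fun u _ => ?_
    split_ifs with hu
    · obtain ⟨x, hxG, hx⟩ := hu
      by_cases h0 : pw p L u = 0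
      · simp [h0]
      rw [← mul_neg]
      refine mul_le_mul_of_nonneg_left ?_ (hP.nonneg u)
      have hmass : mass (pw p L) (fun u => ⌊2 ^ m * ev ρ σ u z⌋) u
          ≤ μ.real (Metric.ball x (8 / 2 ^ m)) := by
        refine le_trans (hcl.ge {y | ⌊2 ^ m * y⌋ = ⌊2 ^ m * ev ρ σ u z⌋}) (measureReal_mono ?_)
        rintro y ⟨y', hy', hyy⟩
        simp only [Set.mem_ofPred_eq] at hy'
        have h3 := abs_lt_of_floor_eq hy'
        rw [← mul_sub, abs_mul, abs_of_pos h2m] at h3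
        have h4 : |y' - ev ρ σ u z| < 1 / 2 ^ m := by
          rw [lt_div_iff₀ h2m, mul_comm]; exact h3
        rw [Metric.mem_ball, Real.dist_eq]
        have h5 : (8 : ℝ) / 2 ^ m = 8 * (1 / 2 ^ m) := by ring
        rw [h5]
        have h6 : (0 : ℝ) < 1 / 2 ^ m := by positivity
        rw [abs_le] at hyy hx
        rw [abs_lt] at h4 ⊢
        constructor <;> linarith [hyy.1, hyy.2, hx.1, hx.2, h4.1, h4.2]
      have h7 := Real.log_le_log (mass_pos hP _ h0) hmass
      linarith [hxG.2.2]
    · rw [zero_mul, neg_nonneg]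
      refine mul_nonpos_of_nonneg_of_nonpos (hP.nonneg u) ?_
      exact Real.log_nonpos (mass_nonneg hP _ _) (mass_le_one hP _ _)
  refine le_trans ?_ key
  refine le_trans ?_ (mul_le_mul_of_nonneg_right h1 (mul_nonneg (mul_nonneg hdε hmR) hl.le))
  rw [← mul_assoc, ← mul_assoc]
  refine mul_le_mul_of_nonneg_right (mul_le_mul_of_nonneg_right ?_ hmR) hl.le
  have h8 : ε / (2 * (d + 1)) * (d + 1) = ε / 2 := by field_simp
  nlinarith [mul_nonneg hη.le hd0]

/-- The scale entropies of the finite approximations are bounded above by the dimension: most of the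
mass is carried by cells of size `2 ^ (-m)` with mass at least `2 ^ (-(d + ε) m)`. -/
lemma Sys.hh_le_dim [IsProbabilityMeasure μ] (H : Sys p ρ σ z θ K)
    (hμ : μ = ∑ i, ENNReal.ofReal (p i) • μ.map (fun x => ρ i * x + σ i)) {d : ℝ}
    (hd : ExactDim μ d) {ε : ℝ} (hε : 0 < ε) :
    ∀ᶠ m : ℕ in atTop, ∃ L₁, ∀ L ≥ L₁, hh p ρ σ z L m ≤ (d + ε) * m * Real.log 2 := by
  have hl : 0 < Real.log 2 := Real.log_pos (by norm_num)
  have hd0 := exactDim_nonneg hd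
  have hlin : Tendsto (fun m : ℕ => ε / 3 * Real.log 2 * (m : ℝ)) atTop atTop :=
    tendsto_natCast_atTop_atTop.const_mul_atTop (by positivity)
  filter_upwards [eventually_measure _ (exactDim_dyadic hd (c := 1) (by norm_num)
    (show 0 < ε / 3 by positivity)) (show 0 < ε / 3 by positivity),
    hlin.eventually_ge_atTop (Real.log 18 + Real.log (4 * K + 6))] with m hm hc
  have h2m : (0 : ℝ) < 2 ^ m := by positivity
  have hK0 : (0 : ℝ) ≤ K := Nat.cast_nonneg K
  obtain ⟨L₁, hL₁⟩ := H.close hμ (η := 1 / 2 ^ m) (by positivity)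
  refine ⟨L₁, fun L hL => ?_⟩
  have hcl := hL₁ L hL
  have hP := IsW_pw H.hp L
  have hmR : (0 : ℝ) ≤ m := Nat.cast_nonneg m
  set G := {x : ℝ | 0 < μ.real (Metric.ball x (1 / 2 ^ m)) ∧
      -((d + ε / 3) * m * Real.log 2) ≤ Real.log (μ.real (Metric.ball x (1 / 2 ^ m))) ∧
      Real.log (μ.real (Metric.ball x (1 / 2 ^ m))) ≤ -((d - ε / 3) * m * Real.log 2)} with hG
  have h1 := hm.trans (hcl.le G)
  -- `q` averages the uniform law on the cells and the smoothed cell masses of `μ`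
  set q0 : ℤ → ℝ := fun k => ∑ j ∈ Finset.Icc (-4 : ℤ) 4, μ.real ((fun y : ℝ => ⌊2 ^ m * y⌋ - j) ⁻¹' {k})
    with hq0
  set A : Finset ℤ := Finset.Icc (-((K + 1) * 2 ^ m)) ((K + 1) * 2 ^ m) with hA
  have hcard : (A.card : ℝ) ≤ (2 * K + 3) * 2 ^ m := by
    have : (A.card : ℤ) = 2 * (K + 1) * 2 ^ m + 1 := by
      rw [hA, Int.card_Icc, Int.toNat_of_nonneg (by
        have : (0 : ℤ) ≤ (K + 1) * 2 ^ m := by positivity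
        linarith)]; ring
    have h3 : (A.card : ℝ) = 2 * (K + 1) * 2 ^ m + 1 := by exact_mod_cast this
    rw [h3]
    have : (1 : ℝ) ≤ 2 ^ m := one_le_pow₀ (by norm_num)
    linarith
  have hq0n : ∀ k, 0 ≤ q0 k := fun k => Finset.sum_nonneg fun j _ => measureReal_nonneg
  have hD : (0 : ℝ) < (4 * K + 6) * 2 ^ m := by positivity
  have hq0s : ∑ k ∈ A, q0 k ≤ 9 := by
    rw [hq0, Finset.sum_comm]
    calc _ ≤ ∑ j ∈ Finset.Icc (-4 : ℤ) 4, (1 : ℝ) := Finset.sum_le_sum fun j _ => by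
          rw [sum_measureReal_preimage_singleton]
          · exact measureReal_le_one
          · intro k _
            have : Measurable (fun y : ℝ => ⌊2 ^ m * y⌋ - j) := by fun_prop
            exact this (measurableSet_singleton k)
      _ = 9 := by simp
  set q : ℤ → ℝ := fun k => q0 k / 18 + 1 / ((4 * K + 6) * 2 ^ m) with hq
  have hqpos : ∀ k, 0 < q k := fun k => by
    have := hq0n k
    simp only [hq]; positivity
  have hg := gibbs hP (fun u => ⌊2 ^ m * ev ρ σ u z⌋) q (fun k => (hqpos k).le)
    (fun u _ => hqpos _) A (fun u => by
      have h3 := abs_le.1 (H.abs_ev_le u H.hz)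
      have h4 : (1 : ℝ) ≤ 2 ^ m := one_le_pow₀ (by norm_num)
      rw [hA, Finset.mem_Icc]
      constructor
      · rw [Int.le_floor]; push_cast; nlinarith
      · refine Int.floor_le_iff.2 ?_; push_cast; nlinarith) (by
      simp only [hq]
      rw [Finset.sum_add_distrib, ← Finset.sum_div, Finset.sum_const, nsmul_eq_mul]
      have h3 : (A.card : ℝ) * (1 / ((4 * K + 6) * 2 ^ m)) ≤ 1 / 2 := by
        rw [mul_one_div, div_le_iff₀ hD]; linarith
      linarith only [h3, hq0s])
  refine hg.trans ?_
  set c := Real.log 18 + Real.log (4 * K + 6) with hcdef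
  have hc1 : 0 ≤ Real.log 18 := Real.log_nonneg (by norm_num)
  have hc2 : 0 ≤ Real.log (4 * K + 6) := Real.log_nonneg (by linarith)
  have hdm : 0 ≤ (d + ε / 3) * m * Real.log 2 := by positivity
  have hpt : ∀ u : Fin L → Λ, -((d + ε / 3) * m * Real.log 2) - c - m * Real.log 2
      + (if ∃ x ∈ G, |x - ev ρ σ u z| ≤ 1 / 2 ^ m then m * Real.log 2 else 0)
      ≤ Real.log (q ⌊2 ^ m * ev ρ σ u z⌋) := by
    intro u
    split_ifs with hu
    · obtain ⟨x, hxG, hx⟩ := hu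
      have hb : μ.real (Metric.ball x (1 / 2 ^ m)) ≤ q0 ⌊2 ^ m * ev ρ σ u z⌋ := by
        refine le_trans (b := μ.real (⋃ j ∈ Finset.Icc (-4 : ℤ) 4,
          ((fun y : ℝ => ⌊2 ^ m * y⌋ - j) ⁻¹' {⌊2 ^ m * ev ρ σ u z⌋})))
          (measureReal_mono ?_ (measure_ne_top μ _))
          (measureReal_biUnion_finset_le _ _)
        intro y hy
        rw [Metric.mem_ball, Real.dist_eq] at hy
        have h4 : |y - ev ρ σ u z| < 2 * (1 / 2 ^ m) := by
          have := abs_sub_le y x (ev ρ σ u z); linarith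
        have h5 : |2 ^ m * y - 2 ^ m * ev ρ σ u z| < 2 := by
          rw [← mul_sub, abs_mul, abs_of_pos h2m]
          calc _ < 2 ^ m * (2 * (1 / 2 ^ m) : ℝ) := by gcongr
            _ = 2 := by field_simp
        rw [abs_lt] at h5
        have f1 := Int.floor_le (2 ^ m * y)
        have f2 := Int.lt_floor_add_one (2 ^ m * y)
        have f3 := Int.floor_le (2 ^ m * ev ρ σ u z)
        have f4 := Int.lt_floor_add_one (2 ^ m * ev ρ σ u z)
        refine mem_biUnion (x := ⌊2 ^ m * y⌋ - ⌊2 ^ m * ev ρ σ u z⌋) ?_ (by simp)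
        have g1 : ((-4 : ℤ) : ℝ) ≤ ((⌊2 ^ m * y⌋ - ⌊2 ^ m * ev ρ σ u z⌋ : ℤ) : ℝ) := by
          push_cast; linarith [h5.1]
        have g2 : ((⌊2 ^ m * y⌋ - ⌊2 ^ m * ev ρ σ u z⌋ : ℤ) : ℝ) ≤ ((4 : ℤ) : ℝ) := by
          push_cast; linarith [h5.2]
        exact Finset.mem_coe.2 (Finset.mem_Icc.2 ⟨by exact_mod_cast g1, by exact_mod_cast g2⟩)
      have h3 : μ.real (Metric.ball x (1 / 2 ^ m)) / 18 ≤ q ⌊2 ^ m * ev ρ σ u z⌋ := by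
        have : (0 : ℝ) ≤ 1 / ((4 * K + 6) * 2 ^ m) := by positivity
        simp only [hq]; linarith
      have h4 := Real.log_le_log (by have := hxG.1; positivity) h3
      rw [Real.log_div hxG.1.ne' (by norm_num)] at h4
      linarith only [h4, hxG.2.1, hc2, hcdef]
    · have h3 : 1 / ((4 * K + 6) * 2 ^ m) ≤ q ⌊2 ^ m * ev ρ σ u z⌋ := by
        have := hq0n ⌊2 ^ m * ev ρ σ u z⌋
        simp only [hq]; linarith
      have h4 := Real.log_le_log (by positivity) h3
      rw [one_div, Real.log_inv, Real.log_mul (by positivity) (by positivity), Real.log_pow] at h4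
      linarith only [h4, hc1, hcdef, hdm]
  have hfin : -((d + ε / 3) * m * Real.log 2) - c - m * Real.log 2 + (1 - ε / 3) * (m * Real.log 2)
      ≤ ∑ u, pw p L u * Real.log (q ⌊2 ^ m * ev ρ σ u z⌋) := by
    refine le_trans ?_ (Finset.sum_le_sum fun u _ => mul_le_mul_of_nonneg_left (hpt u) (hP.nonneg u))
    simp only [mul_add, Finset.sum_add_distrib, ← Finset.sum_mul, hP.sum_one, one_mul]
    refine add_le_add_right ?_ _
    refine le_trans (mul_le_mul_of_nonneg_right h1 (mul_nonneg hmR hl.le)) ?_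
    rw [Finset.sum_mul]
    refine Finset.sum_le_sum fun u _ => ?_
    split_ifs <;> simp
  linarith only [hfin, hc]

lemma Sys.ent_prefix (H : Sys p ρ σ z θ K) {S : Type*} {L k : ℕ} (X : (Fin L → Λ) → S) :
    ent (pw p (L + k)) (fun v => X (fun i => v (Fin.castAdd k i))) = ent (pw p L) X := by
  rw [← ent_equiv (Fin.appendEquiv L k) (w' := fun x : (Fin L → Λ) × (Fin k → Λ) =>
    pw p L x.1 * pw p k x.2) (fun x => (pw_append x.1 x.2).symm)]
  rw [← ent_fst (IsW_pw H.hp k) X]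
  simp [Fin.appendEquiv]

/-- The entropies of the finite approximations stabilise up to a constant. -/
lemma Sys.hh_stable (H : Sys p ρ σ z θ K) (m : ℕ) :
    ∃ L₁, ∀ L ≥ L₁, ∀ L' ≥ L₁, hh p ρ σ z L m ≤ hh p ρ σ z L' m + 2 * cK 1 := by
  obtain ⟨L₁, hL₁⟩ := H.exists_pow (2 ^ m * (2 * (K : ℝ)))
  have key : ∀ k, hh p ρ σ z (L₁ + k) m ≤ hh p ρ σ z L₁ m + cK 1 ∧
      hh p ρ σ z L₁ m ≤ hh p ρ σ z (L₁ + k) m + cK 1 := by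
    intro k
    have hP := IsW_pw H.hp (L₁ + k)
    have hd : ∀ v : Fin (L₁ + k) → Λ, |2 ^ m * ev ρ σ v z
        - 2 ^ m * ev ρ σ (fun i => v (Fin.castAdd k i)) z| ≤ 1 := by
      intro v
      have e : ev ρ σ v z = ev ρ σ (fun i => v (Fin.castAdd k i))
          (ev ρ σ (fun i => v (Fin.natAdd L₁ i)) z) := by
        rw [← ev_append, Fin.append_castAdd_natAdd]
      rw [e, ← mul_sub, ev_affine, abs_mul, abs_mul, abs_of_pos (by positivity : (0:ℝ) < 2 ^ m)]
      refine le_trans ?_ hL₁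
      rw [abs_of_nonneg (by positivity : (0:ℝ) ≤ 2 ^ m * (2 * K)), mul_assoc, mul_comm (2 * (K : ℝ))]
      have h1 := H.abs_ev_le (fun i => v (Fin.natAdd L₁ i)) H.hz
      have h2 := abs_sub (ev ρ σ (fun i => v (Fin.natAdd L₁ i)) z) z
      have h3 := H.hz
      exact mul_le_mul_of_nonneg_left (mul_le_mul (H.abs_rat_le _) (by linarith) (abs_nonneg _)
        (pow_nonneg H.hθ0.le _)) (by positivity)
    have e := H.ent_prefix (k := k) (fun u : Fin L₁ → Λ => ⌊2 ^ m * ev ρ σ u z⌋)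
    have hfl : ∀ {x y : ℝ}, |x - y| ≤ 1 → |(⌊x⌋ - ⌊y⌋ : ℤ)| ≤ 2 := by
      intro x y h
      rw [abs_le] at h
      have f1 := Int.floor_le x
      have f2 := Int.lt_floor_add_one x
      have f3 := Int.floor_le y
      have f4 := Int.lt_floor_add_one y
      rw [abs_le]
      constructor
      · have : ((-3 : ℤ) : ℝ) < ((⌊x⌋ - ⌊y⌋ : ℤ) : ℝ) := by push_cast; linarith [h.1]
        have : -3 < ⌊x⌋ - ⌊y⌋ := by exact_mod_cast this
        omega
      · have : ((⌊x⌋ - ⌊y⌋ : ℤ) : ℝ) < ((3 : ℤ) : ℝ) := by push_cast; linarith [h.2]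
        have : ⌊x⌋ - ⌊y⌋ < 3 := by exact_mod_cast this
        omega
    have hc : Real.log (2 * ((2 : ℕ) : ℝ) + 1) ≤ cK 1 := by
      rw [cK]; exact Real.log_le_log (by norm_num) (by norm_num)
    constructor
    · rw [hh, hh, ← e]
      refine (ent_approx hP _ _ 2 fun v _ => ?_).trans (add_le_add_right hc _)
      exact hfl (hd v)
    · rw [hh, hh, ← e]
      refine (ent_approx hP _ _ 2 fun v _ => ?_).trans (add_le_add_right hc _)
      rw [abs_sub_comm]
      exact hfl (hd v)
  refine ⟨L₁, fun L hL L' hL' => ?_⟩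
  obtain ⟨k, rfl⟩ := Nat.exists_eq_add_of_le hL
  obtain ⟨k', rfl⟩ := Nat.exists_eq_add_of_le hL'
  have := (key k).1
  have := (key k').2
  linarith

/-- By superadditivity the entropy never exceeds the dimension times the scale by more than a
constant depending only on the bounds of the system. -/
lemma Sys.hh_le_dim_add [IsProbabilityMeasure μ] (H : Sys p ρ σ z θ K) (hK : 1 ≤ K)
    (hμ : μ = ∑ i, ENNReal.ofReal (p i) • μ.map (fun x => ρ i * x + σ i)) {d : ℝ}
    (hd : ExactDim μ d) (m : ℕ) :
    ∃ L₁, ∀ L ≥ L₁, hh p ρ σ z L m ≤ d * m * Real.log 2 + 4 * cK K := by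
  have hl : 0 < Real.log 2 := Real.log_pos (by norm_num)
  have hd0 := exactDim_nonneg hd
  obtain ⟨L₁, hL₁⟩ := H.hh_stable m
  refine ⟨L₁, fun L hL => ?_⟩
  have hA : ∀ L' ≥ L₁, hh p ρ σ z L m - 2 * cK 1 ≤ hh p ρ σ z L' m := fun L' hL' => by
    have := hL₁ L hL L' hL'
    linarith
  have hcc := cK_mono hK
  set B := hh p ρ σ z L m - 2 * cK 1 - 2 * cK K with hB
  suffices h : ∀ ε : ℝ, 0 < ε → B ≤ d * m * Real.log 2 + ε by
    have := le_of_forall_pos_le_add h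
    linarith
  intro ε hε
  have hmR : (0 : ℝ) ≤ m := Nat.cast_nonneg m
  set ε' := ε / (m * Real.log 2 + 1) with hε'
  have hε'0 : 0 < ε' := by positivity
  have hεm : ε' * (m * Real.log 2) ≤ ε := by
    rw [hε', div_mul_eq_mul_div, div_le_iff₀ (by positivity)]
    nlinarith
  have hev := H.hh_le_dim hμ hd hε'0
  by_contra hn
  push Not at hn
  set g := B - m * ((d + ε') * Real.log 2) with hg
  have hg0 : 0 < g := by nlinarith
  obtain ⟨N₀, hN₀⟩ := eventually_atTop.1 hev
  obtain ⟨N₁, hN₁⟩ := exists_nat_gt (m * ((d + ε') * m * Real.log 2) / g)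
  set N := max N₀ N₁
  obtain ⟨L₂, hL₂⟩ := hN₀ (N + m) (by omega)
  obtain ⟨n, hn'⟩ := H.exists_pow (2 ^ (N + m))
  have h1 := H.base_total hA N n (2 ^ (N + m)) 0 (max L₂ (L₁ + n)) (by
    rw [abs_of_pos (by positivity)]
    exact le_mul_of_one_le_left (by positivity) (by exact_mod_cast hK)) hn' (le_max_right _ _)
  simp only [add_zero] at h1
  have h2 := hL₂ (max L₂ (L₁ + n)) (le_max_left _ _)
  rw [hh] at h2
  have h3 := mul_le_mul_of_nonneg_left h2 hmR
  have h4 : (N : ℝ) * B ≤ m * ((d + ε') * ((N + m : ℕ) : ℝ) * Real.log 2) := h1.trans h3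
  push_cast at h4
  rw [div_lt_iff₀ hg0] at hN₁
  have h5 : (N₁ : ℝ) ≤ N := by exact_mod_cast le_max_right _ _
  have h6 := mul_le_mul_of_nonneg_right h5 hg0.le
  have h7 : (N : ℝ) * g = N * B - N * (m * ((d + ε') * Real.log 2)) := by rw [hg]; ring
  have h8 : (m : ℝ) * ((d + ε') * (N + m) * Real.log 2)
      = N * (m * ((d + ε') * Real.log 2)) + m * ((d + ε') * m * Real.log 2) := by ring
  linarith

end dimension

/-! ### Entropy of words seen from two parameters -/

section two_parameters

variable {Ω S : Type*} [Fintype Ω] {w : Ω → ℝ}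

lemma ent_pair_approx (hw : IsW w) (X : Ω → ℤ) (Z : Ω → S) (f : S → ℤ) (K : ℕ)
    (h : ∀ ω, |X ω - f (Z ω)| ≤ K) :
    ent w (fun ω => (X ω, Z ω)) ≤ ent w Z + Real.log (2 * K + 1) := by
  have h1 : ent w (fun ω => (X ω, Z ω)) ≤ ent w (fun ω => (Z ω, X ω - f (Z ω))) := ent_mono hw (by
    intro ω ω' h
    simp only [Prod.mk.injEq] at h ⊢
    obtain ⟨h1, h2⟩ := h
    rw [h1] at h2
    exact ⟨by lia, h1⟩)
  have h2 := ent_pair_le hw Z (fun ω => X ω - f (Z ω))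
  have h3 := ent_approx hw (fun ω => X ω - f (Z ω)) (fun _ => 0) K (fun ω _ => by simpa using h ω)
  rw [ent_const hw] at h3
  linarith

/-- A variable bounded by `R` off a bad event, and by `R * 2 ^ a` always, has bounded entropy up to
the contribution of the bad event. -/
lemma ent_le_of_bad (hw : IsW w) (D : Ω → ℤ) (good : Ω → Prop) (R a : ℕ)
    (h1 : ∀ ω, good ω → |D ω| ≤ R) (h2 : ∀ ω, |D ω| ≤ R * 2 ^ a) :
    ent w D ≤ Real.log (4 * R + 2)
      + (∑ ω, w ω * (if good ω then 0 else 1)) * (a * Real.log 2) := by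
  have hR : (0 : ℝ) ≤ R := Nat.cast_nonneg R
  have h2a : (1 : ℝ) ≤ 2 ^ a := one_le_pow₀ (by norm_num)
  have hRa : (0 : ℝ) < 2 * (2 * R * 2 ^ a + 1) := by positivity
  set q : ℤ → ℝ := fun d => (if d ∈ Finset.Icc (-(R : ℤ)) R then 1 / (4 * (R : ℝ) + 2) else 0)
    + 1 / (2 * (2 * R * 2 ^ a + 1)) with hq
  have hqpos : ∀ d, 0 < q d := fun d => by
    simp only [hq]
    split_ifs <;> positivity
  set A : Finset ℤ := Finset.Icc (-((R : ℤ) * 2 ^ a)) (R * 2 ^ a) with hA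
  have hcard : (A.card : ℝ) = 2 * R * 2 ^ a + 1 := by
    have : (A.card : ℤ) = 2 * R * 2 ^ a + 1 := by
      rw [hA, Int.card_Icc, Int.toNat_of_nonneg (by
        have : (0 : ℤ) ≤ R * 2 ^ a := by positivity
        linarith)]; ring
    exact_mod_cast this
  have hcard' : ((Finset.Icc (-(R : ℤ)) R).card : ℝ) = 2 * R + 1 := by
    have : ((Finset.Icc (-(R : ℤ)) R).card : ℤ) = 2 * R + 1 := by
      rw [Int.card_Icc, Int.toNat_of_nonneg (by linarith)]; ring
    exact_mod_cast this
  have hg := gibbs hw D q (fun k => (hqpos k).le) (fun u _ => hqpos _) A (fun ω => by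
    rw [hA, Finset.mem_Icc]
    exact abs_le.1 (h2 ω)) (by
    simp only [hq]
    rw [Finset.sum_add_distrib, Finset.sum_const, nsmul_eq_mul, hcard, ← Finset.sum_filter,
      Finset.sum_const, nsmul_eq_mul]
    have e1 : ((A.filter (fun d => d ∈ Finset.Icc (-(R : ℤ)) R)).card : ℝ) ≤ 2 * R + 1 := by
      rw [← hcard']
      exact_mod_cast Finset.card_le_card fun x hx => (Finset.mem_filter.1 hx).2
    have e2 : ((A.filter (fun d => d ∈ Finset.Icc (-(R : ℤ)) R)).card : ℝ) * (1 / (4 * (R : ℝ) + 2))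
        ≤ 1 / 2 := by
      rw [mul_one_div, div_le_iff₀ (by positivity)]
      linarith
    have e3 : (2 * (R : ℝ) * 2 ^ a + 1) * (1 / (2 * (2 * R * 2 ^ a + 1))) = 1 / 2 := by
      field_simp
    linarith)
  refine hg.trans ?_
  have hlg : 0 < Real.log 2 := Real.log_pos (by norm_num)
  have hpt : ∀ ω, -Real.log (q (D ω)) ≤ Real.log (4 * R + 2)
      + (if good ω then 0 else 1) * (a * Real.log 2) := by
    intro ω
    by_cases hω : good ω
    · rw [if_pos hω, zero_mul, add_zero]
      have hm : D ω ∈ Finset.Icc (-(R : ℤ)) R := Finset.mem_Icc.2 (abs_le.1 (h1 ω hω))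
      have h3 : 1 / (4 * (R : ℝ) + 2) ≤ q (D ω) := by
        simp only [hq, if_pos hm]
        have := hRa
        exact le_add_of_nonneg_right (by positivity)
      have h4 := Real.log_le_log (by positivity) h3
      rw [one_div, Real.log_inv] at h4
      linarith
    · rw [if_neg hω, one_mul]
      have h3 : 1 / ((4 * (R : ℝ) + 2) * 2 ^ a) ≤ q (D ω) := by
        refine le_trans (one_div_le_one_div_of_le hRa (by nlinarith)) ?_
        simp only [hq]
        refine le_add_of_nonneg_left ?_
        split_ifs <;> positivity
      have h4 := Real.log_le_log (by positivity) h3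
      rw [one_div, Real.log_inv, Real.log_mul (by positivity) (by positivity), Real.log_pow] at h4
      linarith
  rw [← Finset.sum_neg_distrib]
  calc _ ≤ ∑ ω, w ω * (Real.log (4 * R + 2) + (if good ω then 0 else 1) * (a * Real.log 2)) :=
        Finset.sum_le_sum fun ω _ => by
          rw [← mul_neg]
          exact mul_le_mul_of_nonneg_left (hpt ω) (hw.nonneg ω)
    _ = _ := by
        simp only [mul_add, Finset.sum_add_distrib, ← mul_assoc, ← Finset.sum_mul, hw.sum_one,
          one_mul]

variable {Λ : Type*} [Fintype Λ] {p ρ σ : Λ → ℝ} {z θ : ℝ} {K : ℕ}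

lemma ent_word (hp : IsW p) (hpos : ∀ i, 0 < p i) (n : ℕ) :
    ent (pw p n) (fun u => u) = n * -∑ i, p i * Real.log (p i) := by
  have h1 : ∀ u : Fin n → Λ, mass (pw p n) (fun u => u) u = pw p n u := by
    intro u
    rw [mass, Finset.sum_eq_single u]
    · rw [if_pos rfl]
    · intro v _ hv
      rw [if_neg hv]
    · simp
  simp only [ent, h1]
  have h2 : ∀ u : Fin n → Λ, Real.log (pw p n u) = ∑ k, Real.log (p (u k)) := fun u => by
    rw [pw, Real.log_prod (fun k _ => (hpos _).ne')]
  simp only [h2]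
  rw [pw_first_moment hp (fun _ i => Real.log (p i))]
  simp

lemma ent_cnt_le (hp : IsW p) (n : ℕ) :
    ent (pw p n) (fun u => cnt u) ≤ Fintype.card Λ * Real.log (n + 1) := by
  have h := ent_le_log_card (IsW_pw hp n) (fun u => cnt u)
    (Fintype.piFinset (fun _ : Λ => Finset.range (n + 1))) (fun u _ => by
      rw [Fintype.mem_piFinset]
      intro i
      rw [Finset.mem_range, Nat.lt_succ_iff]
      exact (Finset.card_le_univ _).trans (by simp))
  refine h.trans (le_of_eq ?_)
  rw [Fintype.card_piFinset]
  simp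

lemma abs_floor_sub_floor_le {x y : ℝ} {R : ℕ} (h : |x - y| ≤ R) : |⌊x⌋ - ⌊y⌋| ≤ (R + 1 : ℕ) := by
  rw [abs_le] at h
  have f1 := Int.floor_le x
  have f2 := Int.lt_floor_add_one x
  have f3 := Int.floor_le y
  have f4 := Int.lt_floor_add_one y
  rw [abs_le]
  constructor
  · have : ((-(R : ℤ) - 2 : ℤ) : ℝ) < ((⌊x⌋ - ⌊y⌋ : ℤ) : ℝ) := by push_cast; linarith [h.1]
    have : -(R : ℤ) - 2 < ⌊x⌋ - ⌊y⌋ := by exact_mod_cast this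
    push_cast
    omega
  · have : ((⌊x⌋ - ⌊y⌋ : ℤ) : ℝ) < ((R + 2 : ℤ) : ℝ) := by push_cast; linarith [h.2]
    have : ⌊x⌋ - ⌊y⌋ < R + 2 := by exact_mod_cast this
    push_cast
    omega

/-- The positions of the cylinders of generation `n`, seen at the scale of the typical cylinders,
have essentially no more entropy than the measure. -/
lemma Sys.ent_coarse_le (H : Sys p ρ σ z θ K) (n L a a' : ℕ) :
    ent (pw p n) (fun u => ⌊2 ^ a * ev ρ σ u z⌋) ≤ hh p ρ σ z (n + L) a
      + Real.log (4 * ((2 * K + 1 : ℕ) : ℝ) + 2)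
      + (∑ u : Fin n → Λ, pw p n u * (if Typ ρ a a' u then 0 else 1)) * (a * Real.log 2) := by
  set w : (Fin n → Λ) × (Fin L → Λ) → ℝ := fun x => pw p n x.1 * pw p L x.2 with hw
  have hP := IsW_pw H.hp n
  have hP' := IsW_pw H.hp L
  have hW : IsW w := IsW_prod hP hP'
  have e1 : ent w (fun x => ⌊2 ^ a * ev ρ σ x.1 z⌋) = ent (pw p n) (fun u => ⌊2 ^ a * ev ρ σ u z⌋) :=
    ent_fst hP' (fun u : Fin n → Λ => ⌊2 ^ a * ev ρ σ u z⌋)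
  have e2 : ent w (UU ρ σ z n L a) = hh p ρ σ z (n + L) a := ent_UU n L a
  rw [← e1, ← e2]
  set D : (Fin n → Λ) × (Fin L → Λ) → ℤ := fun x => ⌊2 ^ a * ev ρ σ x.1 z⌋ - UU ρ σ z n L a x with hD
  have h1 : ent w (fun x => ⌊2 ^ a * ev ρ σ x.1 z⌋) ≤ ent w (fun x => (UU ρ σ z n L a x, D x)) :=
    ent_mono hW (by
      intro x y h
      simp only [Prod.mk.injEq, hD] at h
      lia)
  have h2 := ent_pair_le hW (UU ρ σ z n L a) D
  have h2a : (1 : ℝ) ≤ 2 ^ a := one_le_pow₀ (by norm_num)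
  have hdist : ∀ x : (Fin n → Λ) × (Fin L → Λ), |z - ev ρ σ x.2 z| ≤ 2 * K := fun x => by
    have h1 := H.abs_ev_le x.2 H.hz
    have h2 := abs_sub z (ev ρ σ x.2 z)
    have h3 := H.hz
    linarith
  have h3 := ent_le_of_bad hW D (fun x => Typ ρ a a' x.1) (2 * K + 1) a (by
    intro x hx
    refine abs_floor_sub_floor_le ?_
    rw [← mul_sub, ev_affine, abs_mul, abs_mul, abs_of_pos (by positivity : (0:ℝ) < 2 ^ a),
      ← mul_assoc, mul_comm (2 ^ a : ℝ)]
    push_cast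
    exact (mul_le_mul hx.2 (hdist x) (abs_nonneg _) zero_le_one).trans (by rw [one_mul])) (by
    intro x
    have h4 : |⌊2 ^ a * ev ρ σ x.1 z⌋ - ⌊2 ^ a * ev ρ σ x.1 (ev ρ σ x.2 z)⌋|
        ≤ ((2 * K * 2 ^ a) + 1 : ℕ) := by
      refine abs_floor_sub_floor_le ?_
      rw [← mul_sub, ev_affine, abs_mul, abs_mul, abs_of_pos (by positivity : (0:ℝ) < 2 ^ a)]
      push_cast
      rw [mul_comm (2 * (K : ℝ))]
      have h5 : |rat ρ x.1| ≤ 1 :=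
        (H.abs_rat_le x.1).trans (pow_le_one₀ H.hθ0.le H.hθ1.le)
      refine mul_le_mul_of_nonneg_left ?_ (by positivity)
      exact (mul_le_mul h5 (hdist x) (abs_nonneg _) zero_le_one).trans (by rw [one_mul])
    refine h4.trans ?_
    push_cast
    have : (1 : ℤ) ≤ 2 ^ a := one_le_pow₀ (by norm_num)
    nlinarith)
  have e3 : ∑ x, w x * (if Typ ρ a a' x.1 then (0 : ℝ) else 1)
      = ∑ u : Fin n → Λ, pw p n u * (if Typ ρ a a' u then 0 else 1) := by
    rw [Fintype.sum_prod_type]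
    refine Finset.sum_congr rfl fun u _ => ?_
    simp only [hw]
    by_cases h : Typ ρ a a' u
    · simp [h]
    · simp [h, ← Finset.mul_sum, hP'.sum_one]
  rw [e3] at h3
  linarith

/-- If a word is determined by its positions at two parameters, then the entropy below the coarse
scale `2 ^ (-a)` at the two parameters adds up to the missing entropy. -/
lemma two_params (hp : IsW p) (hpos : ∀ i, 0 < p i) {n a M : ℕ} (haM : a ≤ M)
    (X X' : (Fin n → Λ) → ℝ)
    (hinj : ∀ u v, ⌊2 ^ M * X u⌋ = ⌊2 ^ M * X v⌋ → ⌊2 ^ M * X' u⌋ = ⌊2 ^ M * X' v⌋ → u = v)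
    (happ : ∀ u, |2 ^ a * X u - 2 ^ a * X' u| ≤ 1) :
    n * -(∑ i, p i * Real.log (p i)) ≤
      (ent (pw p n) (fun u => (cnt u, ⌊2 ^ M * X u⌋)) - ent (pw p n) (fun u => (cnt u, ⌊2 ^ a * X u⌋)))
      + (ent (pw p n) (fun u => (cnt u, ⌊2 ^ M * X' u⌋))
        - ent (pw p n) (fun u => (cnt u, ⌊2 ^ a * X' u⌋)))
      + ent (pw p n) (fun u => (cnt u, ⌊2 ^ a * X u⌋)) + 2 * Real.log 5 := by
  have hP := IsW_pw hp n
  rw [← ent_word hp hpos]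
  have hdiv : ∀ x : ℝ, ⌊2 ^ a * x⌋ = ⌊2 ^ M * x⌋ / 2 ^ (M - a) := by
    intro x
    rw [floor_div_pow]
    congr 1
    rw [eq_div_iff (by positivity), mul_right_comm, ← pow_add, Nat.add_sub_cancel' haM]
  have hclose : ∀ u, |⌊2 ^ a * X u⌋ - ⌊2 ^ a * X' u⌋| ≤ ((2 : ℕ) : ℤ) := fun u =>
    abs_floor_sub_floor_le (R := 1) (by simpa using happ u)
  have hsub := submod hP (fun u => ⌊2 ^ M * X u⌋) (fun u => ⌊2 ^ M * X' u⌋)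
    (fun u => (cnt u, ⌊2 ^ a * X u⌋))
  have h1 : ent (pw p n) (fun u => u) ≤ ent (pw p n)
      (fun u => (⌊2 ^ M * X u⌋, ⌊2 ^ M * X' u⌋, (cnt u, ⌊2 ^ a * X u⌋))) :=
    ent_mono hP fun u v h => by
      simp only [Prod.mk.injEq] at h
      exact hinj _ _ h.1 h.2.1
  have h2 : ent (pw p n) (fun u => (⌊2 ^ M * X u⌋, (cnt u, ⌊2 ^ a * X u⌋)))
      ≤ ent (pw p n) (fun u => (cnt u, ⌊2 ^ M * X u⌋)) :=
    ent_mono hP fun u v h => by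
      simp only [Prod.mk.injEq] at h ⊢
      exact ⟨h.2, h.1, by rw [hdiv, hdiv, h.2]⟩
  have h3 : ent (pw p n) (fun u => (⌊2 ^ M * X' u⌋, (cnt u, ⌊2 ^ a * X u⌋)))
      ≤ ent (pw p n) (fun u => (cnt u, ⌊2 ^ M * X' u⌋)) + Real.log 5 := by
    have := ent_pair_approx hP (fun u => ⌊2 ^ a * X u⌋) (fun u => (cnt u, ⌊2 ^ M * X' u⌋))
      (fun y => y.2 / 2 ^ (M - a)) 2 (fun u => by rw [← hdiv]; exact hclose u)
    norm_num at this
    refine le_trans (ent_mono hP fun u v h => ?_) this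
    simp only [Prod.mk.injEq] at h ⊢
    exact ⟨h.2.2, h.2.1, h.1⟩
  have h4 : ent (pw p n) (fun u => (cnt u, ⌊2 ^ a * X' u⌋))
      ≤ ent (pw p n) (fun u => (cnt u, ⌊2 ^ a * X u⌋)) + Real.log 5 := by
    have := ent_pair_approx hP (fun u => ⌊2 ^ a * X' u⌋) (fun u => (cnt u, ⌊2 ^ a * X u⌋))
      (fun y => y.2) 2 (fun u => by rw [abs_sub_comm]; exact hclose u)
    norm_num at this
    refine le_trans (ent_mono hP fun u v h => ?_) this
    simp only [Prod.mk.injEq] at h ⊢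
    exact ⟨h.2.1, h.1⟩
  linarith

end two_parameters

/-! ### Coding points and transversality -/

section transversality

variable {Λ : Type*} [Fintype Λ]

/-- The infinite word `u ι ι ι ⋯`. -/
def sq (ι : Λ) {n : ℕ} (u : Fin n → Λ) (k : ℕ) : Λ := if h : k < n then u ⟨k, h⟩ else ι

/-- The fixed point of the map with index `ι`. -/
def zz (r s : Λ → ℝ → ℝ) (ι : Λ) (t : ℝ) : ℝ := s ι t / (1 - r ι t)

/-- The image of the base point under the cylinder map of a word, as a function of the parameter. -/
def XX (r s : Λ → ℝ → ℝ) (ι : Λ) {n : ℕ} (u : Fin n → Λ) (t : ℝ) : ℝ :=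
  ev (fun i => r i t) (fun i => s i t) u (zz r s ι t)

variable {r s : Λ → ℝ → ℝ}

lemma codingPoint_summable [Nonempty Λ] {t : ℝ} (h : ∀ i, |r i t| < 1) (x : ℕ → Λ) :
    Summable (fun n : ℕ => (∏ k ∈ Finset.range n, r (x k) t) * s (x n) t) := by
  obtain ⟨i₀, hi₀⟩ := Finite.exists_max (fun i => |r i t|)
  obtain ⟨j₀, hj₀⟩ := Finite.exists_max (fun i => |s i t|)
  refine Summable.of_norm_bounded (g := fun n : ℕ => |r i₀ t| ^ n * |s j₀ t|)
    ((summable_geometric_of_lt_one (abs_nonneg _) (h i₀)).mul_right _) fun n => ?_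
  rw [Real.norm_eq_abs, abs_mul, Finset.abs_prod]
  refine mul_le_mul ?_ (hj₀ _) (abs_nonneg _) (by positivity)
  calc _ ≤ ∏ _k ∈ Finset.range n, |r i₀ t| :=
        Finset.prod_le_prod (fun _ _ => abs_nonneg _) fun k _ => hi₀ _
    _ = _ := by simp

lemma codingPoint_shift [Nonempty Λ] {t : ℝ} (h : ∀ i, |r i t| < 1) (x : ℕ → Λ) :
    codingPoint r s x t = r (x 0) t * codingPoint r s (fun k => x (k + 1)) t + s (x 0) t := by
  rw [codingPoint, (codingPoint_summable h x).tsum_eq_zero_add, codingPoint, ← tsum_mul_left]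
  simp only [Finset.range_zero, Finset.prod_empty, one_mul, Finset.prod_range_succ']
  rw [add_comm]
  congr 1
  exact tsum_congr fun n => by ring

lemma codingPoint_sq [Nonempty Λ] {t : ℝ} (h : ∀ i, |r i t| < 1) (ι : Λ) {n : ℕ} (u : Fin n → Λ) :
    codingPoint r s (sq ι u) t = XX r s ι u t := by
  induction n with
  | zero =>
    have e : sq ι u = fun _ => ι := by funext k; simp [sq]
    have h1 : 1 - r ι t ≠ 0 := by
      have := (abs_lt.1 (h ι)).2
      intro h0
      linarith
    have h2 : ev (fun i => r i t) (fun i => s i t) u (zz r s ι t) = zz r s ι t := by simp [ev]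
    rw [e, XX, h2, zz, eq_div_iff h1]
    have h3 := codingPoint_shift (s := s) h (fun _ => ι)
    linarith
  | succ n ih =>
    rw [codingPoint_shift h, ← Fin.cons_self_tail u, XX, ev_cons]
    have e : (fun k => sq ι (Fin.cons (u 0) (Fin.tail u) : Fin (n + 1) → Λ) (k + 1))
        = sq ι (Fin.tail u) := by
      funext k
      simp only [sq, Fin.cons_self_tail]
      by_cases hk : k < n
      · rw [dif_pos hk, dif_pos (by omega)]; rfl
      · rw [dif_neg hk, dif_neg (by omega)]
    have e0 : sq ι (Fin.cons (u 0) (Fin.tail u) : Fin (n + 1) → Λ) 0 = u 0 := by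
      simp [sq]
    rw [e, e0, ih (Fin.tail u), XX]

lemma contDiffOn_XX {a b : ℝ} (hcontr : ∀ i, ∀ t ∈ Ioo a b, 0 < |r i t| ∧ |r i t| < 1)
    (hC2 : ∀ i, ContDiffOn ℝ 2 (r i) (Ioo a b) ∧ ContDiffOn ℝ 2 (s i) (Ioo a b)) (ι : Λ) {n : ℕ}
    (u : Fin n → Λ) : ContDiffOn ℝ 2 (XX r s ι u) (Ioo a b) := by
  induction n with
  | zero =>
    have e : XX r s ι u = fun t => s ι t / (1 - r ι t) := by funext t; simp [XX, ev, zz]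
    rw [e]
    refine (hC2 ι).2.div (contDiffOn_const.sub (hC2 ι).1) fun t ht h0 => ?_
    have := (abs_lt.1 (hcontr ι t ht).2).2
    linarith
  | succ n ih =>
    have e : XX r s ι u = fun t => r (u 0) t * XX r s ι (Fin.tail u) t + s (u 0) t := by
      funext t
      rw [XX, ← Fin.cons_self_tail u, ev_cons]
      rfl
    rw [e]
    exact ((hC2 _).1.mul (ih _)).add (hC2 _).2

lemma sq_ne {ι : Λ} {n : ℕ} {u v : Fin n → Λ} (h : u ≠ v) : sq ι u ≠ sq ι v := by
  intro e
  apply h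
  funext k
  have := congrFun e k
  simpa [sq] using this

/-- Distinct words of length `n` give points at symbolic distance at least `2 ^ (-n)`. -/
lemma seqDist_ge {ι : Λ} {n : ℕ} {u v : Fin n → Λ} (h : u ≠ v) {β : ℝ} (hβ : 0 ≤ β) {B : ℕ}
    (hB : β ≤ B) : 1 ≤ 2 ^ (B * n) * seqDist (sq ι u) (sq ι v) ^ β := by
  rw [seqDist, if_neg (sq_ne h)]
  set k := sInf {k : ℕ | sq ι u k ≠ sq ι v k} with hk
  have hkn : k ≤ n := by
    obtain ⟨j, hj⟩ := Function.ne_iff.1 h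
    refine (Nat.sInf_le (m := (j : ℕ)) ?_).trans j.2.le
    simpa [sq] using hj
  rw [← Real.rpow_intCast, ← Real.rpow_mul (by norm_num), ← Real.rpow_natCast,
    ← Real.rpow_add (by norm_num)]
  refine Real.one_le_rpow (by norm_num) ?_
  push_cast
  have h1 : (k : ℝ) ≤ n := by exact_mod_cast hkn
  have h2 : (k : ℝ) * β ≤ n * B := mul_le_mul h1 hB hβ (Nat.cast_nonneg n)
  linarith

/-- Transversality: two distinct words of length `n` cannot be close both at `t₀` and at a
parameter `t'` whose distance to `t₀` is small compared to `2 ^ (-B n)`. -/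
lemma transv [Nonempty Λ] {a b : ℝ} (hcontr : ∀ i, ∀ t ∈ Ioo a b, 0 < |r i t| ∧ |r i t| < 1)
    (hC2 : ∀ i, ContDiffOn ℝ 2 (r i) (Ioo a b) ∧ ContDiffOn ℝ 2 (s i) (Ioo a b))
    (hreg : ∀ J' ⊆ Ioo a b, IsCompact J' →
      ∃ C : ℝ, ∀ x : ℕ → Λ, ∀ t ∈ J',
        |deriv (codingPoint r s x) t| ≤ C ∧ |deriv (deriv (codingPoint r s x)) t| ≤ C)
    {β : ℝ} (hβ : 0 ≤ β)
    (htrans : ∃ Cβ : ℝ, 0 < Cβ ∧ ∀ t ∈ Ioo a b, ∀ x y : ℕ → Λ, x ≠ y →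
      |codingPoint r s x t - codingPoint r s y t| ≤ Cβ * seqDist x y ^ β →
      Cβ * seqDist x y ^ β ≤ |deriv (fun u => codingPoint r s x u - codingPoint r s y u) t|)
    (ι : Λ) {B : ℕ} (hB : β ≤ B) {t₀ : ℝ} (ht₀ : t₀ ∈ Ioo a b) :
    ∃ e > 0, ∃ c > 0, c ≤ 1 ∧ Icc (t₀ - e) (t₀ + e) ⊆ Ioo a b ∧
      (∀ t' ∈ Icc (t₀ - e) (t₀ + e), ∀ (n : ℕ) (u : Fin n → Λ),
        c * |XX r s ι u t₀ - XX r s ι u t'| ≤ |t' - t₀|) ∧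
      ∀ t' ∈ Icc (t₀ - e) (t₀ + e), ∀ n : ℕ, |t' - t₀| * 2 ^ (B * n) ≤ c →
        ∀ u v : Fin n → Λ, u ≠ v → c * |t' - t₀| ≤ 2 ^ (B * n) *
          max |XX r s ι u t₀ - XX r s ι v t₀| |XX r s ι u t' - XX r s ι v t'| := by
  obtain ⟨Cβ, hCβ, htr⟩ := htrans
  obtain ⟨e, he, hsub⟩ : ∃ e > 0, Icc (t₀ - e) (t₀ + e) ⊆ Ioo a b := by
    obtain ⟨e, he, h⟩ := Metric.isOpen_iff.1 isOpen_Ioo t₀ ht₀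
    refine ⟨e / 2, by positivity, fun x hx => h ?_⟩
    rw [Metric.mem_ball, Real.dist_eq, abs_lt]
    constructor <;> linarith [hx.1, hx.2]
  obtain ⟨C₁, hC₁⟩ := hreg _ hsub isCompact_Icc
  set C := max C₁ 1 with hC
  have hC1 : 1 ≤ C := le_max_right _ _
  have hC0 : 0 < C := by linarith
  have ht₀e : t₀ ∈ Icc (t₀ - e) (t₀ + e) := ⟨by linarith, by linarith⟩
  have hcv : Convex ℝ (Icc (t₀ - e) (t₀ + e)) := convex_Icc _ _
  have hcp : ∀ {n : ℕ} (u : Fin n → Λ), ∀ t ∈ Ioo a b,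
      codingPoint r s (sq ι u) t = XX r s ι u t := fun u t ht =>
    codingPoint_sq (fun i => (hcontr i t ht).2) ι u
  have hF : ∀ {n : ℕ} (u : Fin n → Λ), ContDiffOn ℝ 2 (codingPoint r s (sq ι u)) (Ioo a b) :=
    fun u => (contDiffOn_XX hcontr hC2 ι u).congr (hcp u)
  have hd1 : ∀ {n : ℕ} (u : Fin n → Λ), ∀ t ∈ Ioo a b,
      HasDerivAt (codingPoint r s (sq ι u)) (deriv (codingPoint r s (sq ι u)) t) t := fun u t ht =>
    (((hF u).differentiableOn (by norm_num)).differentiableAt (isOpen_Ioo.mem_nhds ht)).hasDerivAt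
  have hd2 : ∀ {n : ℕ} (u : Fin n → Λ), ∀ t ∈ Ioo a b,
      HasDerivAt (deriv (codingPoint r s (sq ι u)))
        (deriv (deriv (codingPoint r s (sq ι u))) t) t := fun u t ht =>
    ((((hF u).deriv_of_isOpen (m := 1) isOpen_Ioo (by norm_num)).differentiableOn
      (by norm_num)).differentiableAt (isOpen_Ioo.mem_nhds ht)).hasDerivAt
  set c := min (1 / C) (min (Cβ / (8 * C)) (Cβ / 4)) with hc
  have hc0 : 0 < c := by positivity
  have hcC : c ≤ 1 / C := min_le_left _ _
  have hcC' : c * C ≤ 1 := (le_div_iff₀ hC0).1 hcC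
  have hc1 : c ≤ 1 := hcC.trans ((div_le_one hC0).2 hC1)
  have hc2 : c ≤ Cβ / (8 * C) := (min_le_right _ _).trans (min_le_left _ _)
  have hc3 : c ≤ Cβ / 4 := (min_le_right _ _).trans (min_le_right _ _)
  refine ⟨e, he, c, hc0, hc1, hsub, ?_, ?_⟩
  · intro t' ht' n u
    have h1 := hcv.norm_image_sub_le_of_norm_hasDerivWithin_le (C := C)
      (fun t ht => (hd1 u t (hsub ht)).hasDerivWithinAt)
      (fun t ht => ((hC₁ _ t ht).1).trans (le_max_left _ _)) ht' ht₀e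
    rw [hcp u _ (hsub ht'), hcp u _ ht₀, Real.norm_eq_abs, Real.norm_eq_abs, abs_sub_comm t₀] at h1
    calc _ ≤ c * (C * |t' - t₀|) := mul_le_mul_of_nonneg_left h1 hc0.le
      _ = c * C * |t' - t₀| := by ring
      _ ≤ 1 * |t' - t₀| := mul_le_mul_of_nonneg_right hcC' (abs_nonneg _)
      _ = _ := one_mul _
  · intro t' ht' n hn u v huv
    rw [← hcp u _ ht₀, ← hcp v _ ht₀, ← hcp u _ (hsub ht'), ← hcp v _ (hsub ht')]
    have hdist := seqDist_ge (ι := ι) huv hβ hB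
    have htr' := htr t₀ ht₀ _ _ (sq_ne (ι := ι) huv)
    set D : ℝ → ℝ := fun t => codingPoint r s (sq ι u) t - codingPoint r s (sq ι v) t with hD
    set G : ℝ → ℝ := fun t => deriv (codingPoint r s (sq ι u)) t
      - deriv (codingPoint r s (sq ι v)) t with hG
    have hDG : ∀ t ∈ Ioo a b, HasDerivAt D (G t) t := fun t ht => (hd1 u t ht).sub (hd1 v t ht)
    have hG1 : ∀ t ∈ Icc (t₀ - e) (t₀ + e), |G t - G t₀| ≤ 2 * C * |t - t₀| := by
      intro t ht
      refine hcv.norm_image_sub_le_of_norm_hasDerivWithin_le (C := 2 * C)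
        (fun t ht => ((hd2 u t (hsub ht)).sub (hd2 v t (hsub ht))).hasDerivWithinAt)
        (fun t ht => ?_) ht₀e ht
      have h1 := (hC₁ (sq ι u) t ht).2
      have h2 := (hC₁ (sq ι v) t ht).2
      have h3 := le_max_left C₁ 1
      rw [Real.norm_eq_abs]
      refine (abs_sub _ _).trans ?_
      linarith
    set τ := |t' - t₀| with hτ
    have hτ0 : 0 ≤ τ := abs_nonneg _
    have hlin : |D t' - D t₀ - G t₀ * (t' - t₀)| ≤ 2 * C * τ * τ := by
      have hseg : uIcc t₀ t' ⊆ Icc (t₀ - e) (t₀ + e) := by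
        rw [← segment_eq_uIcc]
        exact hcv.segment_subset ht₀e ht'
      have := (convex_uIcc t₀ t').norm_image_sub_le_of_norm_hasDerivWithin_le (C := 2 * C * τ)
        (f := fun t => D t - G t₀ * t) (f' := fun t => G t - G t₀ * 1)
        (fun t ht => ((hDG t (hsub (hseg ht))).sub
          ((hasDerivAt_id t).const_mul (G t₀))).hasDerivWithinAt)
        (fun t ht => by
          rw [mul_one, Real.norm_eq_abs]
          refine (hG1 t (hseg ht)).trans ?_
          refine mul_le_mul_of_nonneg_left ?_ (by positivity)
          exact abs_sub_left_of_mem_uIcc ht) left_mem_uIcc right_mem_uIcc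
      rw [Real.norm_eq_abs, Real.norm_eq_abs] at this
      convert this using 2
      ring
    have hder : deriv D t₀ = G t₀ := (hDG t₀ ht₀).deriv
    change |D t₀| ≤ _ → _ ≤ |deriv D t₀| at htr'
    rw [hder] at htr'
    change c * τ ≤ 2 ^ (B * n) * max |D t₀| |D t'|
    set P : ℝ := 2 ^ (B * n) with hP
    have hP1 : 1 ≤ P := one_le_pow₀ (by norm_num)
    have hτ1 : τ ≤ 1 := by nlinarith
    set κ := Cβ * seqDist (sq ι u) (sq ι v) ^ β with hκ
    have hPκ : Cβ ≤ P * κ := by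
      calc Cβ = Cβ * 1 := (mul_one _).symm
        _ ≤ Cβ * (P * seqDist (sq ι u) (sq ι v) ^ β) := mul_le_mul_of_nonneg_left hdist hCβ.le
        _ = _ := by rw [hκ]; ring
    have hP0 : 0 < P := by linarith
    by_cases hcase : |D t₀| ≤ κ
    · have h1 := htr' hcase
      have h2 : |G t₀| * τ ≤ |D t'| + |D t₀| + 2 * C * τ * τ := by
        rw [hτ, ← abs_mul, ← hτ]
        have h3 : G t₀ * (t' - t₀) = D t' - D t₀ - (D t' - D t₀ - G t₀ * (t' - t₀)) := by ring
        rw [h3]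
        have h4 := abs_sub (D t' - D t₀) (D t' - D t₀ - G t₀ * (t' - t₀))
        have h5 := abs_sub (D t') (D t₀)
        linarith
      have h3 : κ * τ ≤ |G t₀| * τ := mul_le_mul_of_nonneg_right h1 hτ0
      have h4 : |D t'| + |D t₀| ≤ 2 * max |D t₀| |D t'| := by
        have := le_max_left |D t₀| |D t'|
        have := le_max_right |D t₀| |D t'|
        linarith
      have h5 : P * (κ * τ) ≤ P * (2 * max |D t₀| |D t'| + 2 * C * τ * τ) :=
        mul_le_mul_of_nonneg_left (by linarith) hP0.le
      have h6 : Cβ * τ ≤ P * κ * τ := mul_le_mul_of_nonneg_right hPκ hτ0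
      have h7 : 2 * C * (τ * P) ≤ Cβ / 4 := by
        have := mul_le_mul_of_nonneg_left (hn.trans hc2) (by positivity : 0 ≤ 2 * C)
        have e : 2 * C * (Cβ / (8 * C)) = Cβ / 4 := by field_simp; norm_num
        linarith
      have h8 : 2 * C * (τ * P) * τ ≤ Cβ / 4 * τ := mul_le_mul_of_nonneg_right h7 hτ0
      have h9 : c * τ ≤ Cβ / 4 * τ := mul_le_mul_of_nonneg_right hc3 hτ0
      have e1 : P * (κ * τ) = P * κ * τ := by ring
      have e2 : P * (2 * max |D t₀| |D t'| + 2 * C * τ * τ)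
          = 2 * (P * max |D t₀| |D t'|) + 2 * C * (τ * P) * τ := by ring
      rw [e1, e2] at h5
      have h10 : 0 ≤ Cβ * τ := by positivity
      linarith only [h5, h6, h8, h9, h10]
    · push Not at hcase
      have h1 : P * κ ≤ P * max |D t₀| |D t'| :=
        mul_le_mul_of_nonneg_left (hcase.le.trans (le_max_left _ _)) hP0.le
      have h2 : c * τ ≤ c := mul_le_of_le_one_right hc0.le hτ1
      linarith

end transversality

/-! ### Typical words, uniform bounds near a parameter, and choice of scales -/

section perturb

variable {Λ : Type*} [Fintype Λ] {p ρ σ : Λ → ℝ} {z θ : ℝ} {K : ℕ}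

/-- If the logarithm of the contraction ratio of a word deviates little from its mean for the
unperturbed system, the word is typical for every nearby system. -/
lemma typ_of_dev {ρ₀ : Λ → ℝ} {χ η : ℝ} {n a a' : ℕ}
    (hρ : ∀ i, ρ i ≠ 0 ∧ |Real.log |ρ i| - Real.log (|ρ₀ i|)| ≤ η)
    (ha : a * Real.log 2 ≤ n * (χ - 2 * η)) (ha' : n * (χ + 2 * η) ≤ a' * Real.log 2)
    (u : Fin n → Λ) (hu : |∑ k, (Real.log |ρ₀ (u k)| + χ)| ≤ η * n) : Typ ρ a a' u := by
  have hne : rat ρ u ≠ 0 := Finset.prod_ne_zero_iff.2 fun k _ => (hρ (u k)).1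
  have hlog : Real.log |rat ρ u| = ∑ k, Real.log |ρ (u k)| := by
    rw [rat, Finset.abs_prod, Real.log_prod]
    intro k _
    exact abs_ne_zero.2 (hρ (u k)).1
  have h1 : |∑ k, (Real.log |ρ (u k)| - Real.log |ρ₀ (u k)|)| ≤ n * η := by
    refine (Finset.abs_sum_le_sum_abs _ _).trans ?_
    refine (Finset.sum_le_sum fun k _ => (hρ (u k)).2).trans ?_
    simp
  rw [Finset.sum_sub_distrib, ← hlog, abs_le] at h1
  rw [Finset.sum_add_distrib, abs_le] at hu
  simp only [Finset.sum_const, Finset.card_univ, Fintype.card_fin, nsmul_eq_mul] at hu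
  have hpos : 0 < |rat ρ u| := abs_pos.2 hne
  have hpa : ∀ m : ℕ, Real.log (|rat ρ u| * 2 ^ m) = Real.log |rat ρ u| + m * Real.log 2 := by
    intro m
    rw [Real.log_mul hpos.ne' (by positivity), Real.log_pow]
  constructor
  · rw [← Real.log_nonneg_iff (by positivity), hpa]
    linarith [h1.1, h1.2, hu.1, hu.2]
  · rw [← Real.log_nonpos_iff (by positivity), hpa]
    linarith [h1.1, h1.2, hu.1, hu.2]

/-- Chebyshev's inequality: long words are typical with probability close to one, uniformly over
the systems close to a given one. -/
lemma typ_prob (hp : IsW p) (ρ₀ : Λ → ℝ) {η κ : ℝ} (hη : 0 < η) (hκ : 0 < κ) :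
    ∃ n₁ : ℕ, ∀ n ≥ n₁, ∀ ρ : Λ → ℝ,
      (∀ i, ρ i ≠ 0 ∧ |Real.log |ρ i| - Real.log (|ρ₀ i|)| ≤ η) → ∀ a a' : ℕ,
      a * Real.log 2 ≤ n * (-(∑ i, p i * Real.log |ρ₀ i|) - 2 * η) →
      n * (-(∑ i, p i * Real.log |ρ₀ i|) + 2 * η) ≤ a' * Real.log 2 →
      ∑ u : Fin n → Λ, pw p n u * (if Typ ρ a a' u then 0 else 1) ≤ κ := by
  set χ : ℝ := -(∑ i, p i * Real.log |ρ₀ i|) with hχ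
  set V : ℝ := ∑ b, p b * (Real.log |ρ₀ b| + χ) ^ 2 with hV
  have hV0 : 0 ≤ V := Finset.sum_nonneg fun b _ => mul_nonneg (hp.nonneg b) (sq_nonneg _)
  obtain ⟨n₁, hn₁⟩ := exists_nat_ge (V / (η ^ 2 * κ))
  refine ⟨n₁ + 1, fun n hn ρ hρ a a' ha ha' => ?_⟩
  have hnn : (n₁ : ℝ) + 1 ≤ n := by exact_mod_cast hn
  have hn0 : (0 : ℝ) < n := lt_of_lt_of_le (by positivity) hnn
  have hmean : ∑ b, p b * (Real.log |ρ₀ b| + χ) = 0 := by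
    simp only [mul_add, Finset.sum_add_distrib, ← Finset.sum_mul, hp.sum_one, hχ]
    ring
  have h2 := pw_second_moment hp (k := n) (fun _ b => Real.log |ρ₀ b| + χ) (fun _ => hmean)
  have hle : ∀ u : Fin n → Λ, pw p n u * (if Typ ρ a a' u then 0 else 1)
      ≤ (pw p n u * (∑ k, (Real.log |ρ₀ (u k)| + χ)) ^ 2) / (η * n) ^ 2 := by
    intro u
    have hu0 := (IsW_pw hp n).nonneg u
    by_cases h : Typ ρ a a' u
    · rw [if_pos h, mul_zero]
      positivity
    · rw [if_neg h, mul_one]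
      have hd : η * n < |∑ k, (Real.log |ρ₀ (u k)| + χ)| := by
        by_contra hcon
        exact h (typ_of_dev hρ ha ha' u (not_lt.1 hcon))
      rw [le_div_iff₀ (by positivity)]
      refine mul_le_mul_of_nonneg_left ?_ hu0
      rw [← sq_abs (∑ k, (Real.log |ρ₀ (u k)| + χ))]
      exact pow_le_pow_left₀ (by positivity) hd.le 2
  refine (Finset.sum_le_sum fun u _ => hle u).trans ?_
  rw [← Finset.sum_div, h2]
  simp only [Finset.sum_const, Finset.card_univ, Fintype.card_fin, nsmul_eq_mul]
  rw [← hV, div_le_iff₀ (by positivity)]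
  have h3 : V ≤ n * (η ^ 2 * κ) := by
    rw [div_le_iff₀ (by positivity)] at hn₁
    refine hn₁.trans (mul_le_mul_of_nonneg_right ?_ (by positivity))
    linarith only [hnn]
  calc n * V ≤ n * (n * (η ^ 2 * κ)) := mul_le_mul_of_nonneg_left h3 hn0.le
    _ = κ * (η * n) ^ 2 := by ring

/-- Two scales `2 ^ (-a)`, `2 ^ (-a')` enclosing the size of typical cylinders of length `n`. -/
lemma scales {χ ε : ℝ} (hχ : 0 < χ) (hε : 0 < ε) :
    ∃ η > 0, ∃ n₁ : ℕ, ∀ n ≥ n₁, ∃ a a' : ℕ, a ≤ a' ∧ (a' : ℝ) - a ≤ ε * n ∧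
      a * Real.log 2 ≤ n * (χ - 2 * η) ∧ n * (χ + 2 * η) ≤ a' * Real.log 2 ∧
      ∀ B : ℕ, χ / Real.log 2 + 3 ≤ B → a' + n ≤ B * n := by
  have hl : 0 < Real.log 2 := Real.log_pos one_lt_two
  set lam : ℝ := Real.log 2 with hlam
  clear_value lam
  obtain ⟨η, hη, hη1, hη2, hη3⟩ : ∃ η > 0, η ≤ χ / 4 ∧ η ≤ lam / 2 ∧ η ≤ ε * lam / 8 :=
    ⟨min (χ / 4) (min (lam / 2) (ε * lam / 8)), by positivity, min_le_left _ _,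
      (min_le_right _ _).trans (min_le_left _ _), (min_le_right _ _).trans (min_le_right _ _)⟩
  obtain ⟨n₁, hn₁⟩ := exists_nat_ge (4 / ε)
  refine ⟨η, hη, n₁ + 1, fun n hn => ?_⟩
  have hnn : (n₁ : ℝ) + 1 ≤ n := by exact_mod_cast hn
  have hn1 : (1 : ℝ) ≤ n := le_trans (by have : (0 : ℝ) ≤ n₁ := Nat.cast_nonneg _; linarith) hnn
  have hn0 : (0 : ℝ) < n := by linarith
  have hnε : 2 ≤ ε * n / 2 := by
    rw [div_le_iff₀ hε] at hn₁
    nlinarith only [hn₁, hnn, hε]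
  have hx0 : 0 ≤ n * (χ - 2 * η) / lam :=
    div_nonneg (mul_nonneg hn0.le (by linarith)) hl.le
  have hy0 : 0 ≤ n * (χ + 2 * η) / lam := by positivity
  have hxy : n * (χ + 2 * η) / lam = n * (χ - 2 * η) / lam + n * (4 * η / lam) := by
    field_simp
    ring
  have h4 : n * (4 * η / lam) ≤ ε * n / 2 := by
    have : 4 * η / lam ≤ ε / 2 := by rw [div_le_iff₀ hl]; linarith
    calc n * (4 * η / lam) ≤ n * (ε / 2) := mul_le_mul_of_nonneg_left this hn0.le
      _ = _ := by ring
  have h40 : 0 ≤ n * (4 * η / lam) := by positivity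
  have ha1 := Nat.floor_le hx0
  have ha2 := Nat.lt_floor_add_one (n * (χ - 2 * η) / lam)
  have hb1 := Nat.le_ceil (n * (χ + 2 * η) / lam)
  have hb2 := Nat.ceil_lt_add_one hy0
  refine ⟨⌊n * (χ - 2 * η) / lam⌋₊, ⌈n * (χ + 2 * η) / lam⌉₊, ?_, ?_, ?_, ?_, ?_⟩
  · have : (⌊n * (χ - 2 * η) / lam⌋₊ : ℝ) ≤ ⌈n * (χ + 2 * η) / lam⌉₊ := by linarith
    exact_mod_cast this
  · linarith
  · exact (le_div_iff₀ hl).1 ha1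
  · exact (div_le_iff₀ hl).1 hb1
  · intro B hB
    have h5 : n * (χ + 2 * η) / lam ≤ n * (χ / lam + 1) := by
      rw [mul_div_assoc]
      refine mul_le_mul_of_nonneg_left ?_ hn0.le
      rw [add_div]
      have : 2 * η / lam ≤ 1 := by rw [div_le_iff₀ hl]; linarith
      linarith
    have h6 : (n : ℝ) * (χ / lam + 3) ≤ n * B := mul_le_mul_of_nonneg_left hB hn0.le
    have : (⌈n * (χ + 2 * η) / lam⌉₊ : ℝ) + n ≤ B * n := by linarith
    exact_mod_cast this

/-- The word length `n` for which `τ` is comparable to `c * 2 ^ (-B n)`. -/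
lemma scale_choice {c τ : ℝ} {B : ℕ} (hB : 1 ≤ B) (hτ : 0 < τ) (N : ℕ)
    (hN : τ * 2 ^ (B * N) ≤ c) :
    ∃ n ≥ N, τ * 2 ^ (B * n) ≤ c ∧ c < τ * 2 ^ (B * (n + 1)) := by
  have hmono : ∀ i j : ℕ, i ≤ j → τ * 2 ^ (B * i) ≤ τ * 2 ^ (B * j) := fun i j hij =>
    mul_le_mul_of_nonneg_left (pow_le_pow_right₀ one_le_two (Nat.mul_le_mul_left B hij)) hτ.le
  have hex : ∃ k : ℕ, c < τ * 2 ^ (B * k) := by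
    obtain ⟨k, hk⟩ := pow_unbounded_of_one_lt (c / τ) (one_lt_two (α := ℝ))
    refine ⟨k, ?_⟩
    rw [div_lt_iff₀ hτ] at hk
    refine hk.trans_le ?_
    rw [mul_comm]
    exact mul_le_mul_of_nonneg_left
      (pow_le_pow_right₀ one_le_two (Nat.le_mul_of_pos_left k hB)) hτ.le
  have hk := Nat.find_spec hex
  have hkN : N < Nat.find hex := by
    by_contra hcon
    exact absurd (hk.trans_le ((hmono _ _ (not_lt.1 hcon)).trans hN)) (lt_irrefl c)
  obtain ⟨n, hn⟩ : ∃ n, Nat.find hex = n + 1 := ⟨Nat.find hex - 1, by omega⟩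
  refine ⟨n, by omega, ?_, by rw [← hn]; exact hk⟩
  have := Nat.find_min hex (m := n) (by omega)
  exact not_lt.1 this

/-- The scale entropies of two systems whose word images are close are comparable. -/
lemma hh_close (hp : IsW p) {ρ' σ' : Λ → ℝ} {z' c τ : ℝ} (hc : 0 < c) {L m : ℕ}
    (h : ∀ u : Fin L → Λ, c * |ev ρ σ u z - ev ρ' σ' u z'| ≤ τ) (hτ : τ * 2 ^ m ≤ c) :
    hh p ρ σ z L m ≤ hh p ρ' σ' z' L m + cK 2 := by
  refine ent_floor_le_of_approx (IsW_pw hp L) (fun u => 2 ^ m * ev ρ σ u z)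
    (fun u => ⌊2 ^ m * ev ρ' σ' u z'⌋) (fun k : ℤ => (k : ℝ)) 2 (fun u _ => ?_)
  have h1 : |2 ^ m * ev ρ σ u z - 2 ^ m * ev ρ' σ' u z'| ≤ 1 := by
    rw [← mul_sub, abs_mul, abs_of_pos (by positivity : (0 : ℝ) < 2 ^ m)]
    have h2 := mul_le_mul_of_nonneg_right (h u) (by positivity : (0 : ℝ) ≤ 2 ^ m)
    have h3 : c * (2 ^ m * |ev ρ σ u z - ev ρ' σ' u z'|) ≤ c * 1 := by linarith
    exact le_of_mul_le_mul_left h3 hc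
  have h2 := Int.floor_le (2 ^ m * ev ρ' σ' u z')
  have h3 := Int.lt_floor_add_one (2 ^ m * ev ρ' σ' u z')
  rw [abs_le] at h1 ⊢
  push_cast
  constructor <;> linarith [h1.1, h1.2]

/-- The lower bound by the dimension, with room for the constant of `hh_close`. -/
lemma Sys.lower {μ : Measure ℝ} [IsProbabilityMeasure μ] {d : ℝ} (H : Sys p ρ σ z θ K)
    (hμ : μ = ∑ i, ENNReal.ofReal (p i) • μ.map (fun x => ρ i * x + σ i)) (hd : ExactDim μ d)
    {ε : ℝ} (hε : 0 < ε) :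
    ∀ᶠ m : ℕ in atTop, ∃ L₁, ∀ L ≥ L₁,
      (d - ε) * m * Real.log 2 + cK 2 ≤ hh p ρ σ z L m := by
  have hl : 0 < Real.log 2 := Real.log_pos one_lt_two
  obtain ⟨m₀, hm₀⟩ := exists_nat_ge (cK 2 / (ε / 2 * Real.log 2))
  filter_upwards [H.hh_ge_dim hμ hd (half_pos hε), eventually_ge_atTop m₀] with m hm hmm
  obtain ⟨L₁, h⟩ := hm
  refine ⟨L₁, fun L hL => le_trans ?_ (h L hL)⟩
  have h1 : (m₀ : ℝ) ≤ m := by exact_mod_cast hmm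
  rw [div_le_iff₀ (by positivity)] at hm₀
  have h2 := mul_le_mul_of_nonneg_right h1 (by positivity : 0 ≤ ε / 2 * Real.log 2)
  linarith

/-- The entropy of a word is controlled by the two fine entropies at two close parameters together
with the coarse entropy at one of them. -/
lemma Sys.word_ent_le (H : Sys p ρ σ z θ K) (hpos : ∀ i, 0 < p i) {n a a' M : ℕ} (haM : a ≤ M)
    (X' : (Fin n → Λ) → ℝ)
    (hinj : ∀ u v, ⌊2 ^ M * ev ρ σ u z⌋ = ⌊2 ^ M * ev ρ σ v z⌋ →
      ⌊2 ^ M * X' u⌋ = ⌊2 ^ M * X' v⌋ → u = v)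
    (happ : ∀ u, |2 ^ a * ev ρ σ u z - 2 ^ a * X' u| ≤ 1) {D : ℝ}
    (hD : ∃ L₁, ∀ L ≥ L₁, hh p ρ σ z L a ≤ D) :
    n * -(∑ i, p i * Real.log (p i)) ≤
      (ent (pw p n) (fun u => (cnt u, ⌊2 ^ M * ev ρ σ u z⌋)) - ent (pw p n) (ZZ ρ σ z n a))
      + (ent (pw p n) (fun u => (cnt u, ⌊2 ^ M * X' u⌋))
        - ent (pw p n) (fun u => (cnt u, ⌊2 ^ a * X' u⌋)))
      + (Fintype.card Λ * Real.log (n + 1) + D + Real.log (4 * ((2 * K + 1 : ℕ) : ℝ) + 2)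
        + (∑ u : Fin n → Λ, pw p n u * (if Typ ρ a a' u then 0 else 1)) * (a * Real.log 2)
        + 2 * Real.log 5) := by
  obtain ⟨L₁, hL₁⟩ := hD
  have h1 := two_params H.hp hpos haM (fun u => ev ρ σ u z) X' hinj happ
  have h2 := ent_pair_le (IsW_pw H.hp n) (fun u : Fin n → Λ => cnt u)
    (fun u => ⌊2 ^ a * ev ρ σ u z⌋)
  have h3 := ent_cnt_le H.hp n
  have h4 := H.ent_coarse_le n L₁ a a'
  have h5 := hL₁ (n + L₁) (by omega)
  have h6 : ent (pw p n) (ZZ ρ σ z n a)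
      = ent (pw p n) (fun u => (cnt u, ⌊2 ^ a * ev ρ σ u z⌋)) := rfl
  rw [h6]
  beta_reduce at h1
  linarith only [h1, h2, h3, h4, h5]

variable {r s : Λ → ℝ → ℝ}

/-- The quantitative bounds of `Sys` hold with the same constants near a given parameter. -/
lemma unif_sys [Nonempty Λ] {a b : ℝ} (hcontr : ∀ i, ∀ t ∈ Ioo a b, 0 < |r i t| ∧ |r i t| < 1)
    (hC2 : ∀ i, ContDiffOn ℝ 2 (r i) (Ioo a b) ∧ ContDiffOn ℝ 2 (s i) (Ioo a b))
    (hp : IsW p) (ι : Λ) {t₀ : ℝ} (ht₀ : t₀ ∈ Ioo a b) :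
    ∃ (θ : ℝ) (K : ℕ), 1 ≤ K ∧ ∀ᶠ t in nhds t₀,
      Sys p (fun i => r i t) (fun i => s i t) (zz r s ι t) θ K := by
  have hnh : Ioo a b ∈ nhds t₀ := isOpen_Ioo.mem_nhds ht₀
  have hr : ∀ i, ContinuousAt (fun t => |r i t|) t₀ := fun i =>
    ((hC2 i).1.continuousOn.continuousAt hnh).abs
  have hs : ∀ i, ContinuousAt (fun t => |s i t|) t₀ := fun i =>
    ((hC2 i).2.continuousOn.continuousAt hnh).abs
  obtain ⟨i₀, hi₀⟩ := Finite.exists_max (fun i => |r i t₀|)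
  obtain ⟨i₁, hi₁⟩ := Finite.exists_min (fun i => |r i t₀|)
  obtain ⟨i₂, hi₂⟩ := Finite.exists_max (fun i => |s i t₀|)
  obtain ⟨θ, hθ, hθ1⟩ := exists_between (hcontr i₀ t₀ ht₀).2
  obtain ⟨q, hq0, hq⟩ := exists_between (hcontr i₁ t₀ ht₀).1
  have hθ0 : 0 < θ := lt_of_le_of_lt (abs_nonneg _) hθ
  set S := |s i₂ t₀| + 1 with hS
  have hS0 : 0 ≤ S := by positivity
  have h1θ : 0 < 1 - θ := by linarith
  obtain ⟨K, hK⟩ := exists_nat_ge (max (1 / q) (S / (1 - θ)))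
  have hK1 := (le_max_left _ _).trans hK
  have hK2 := (le_max_right _ _).trans hK
  rw [div_le_iff₀ hq0] at hK1
  have hKpos : (0 : ℝ) < K := by
    by_contra hcon
    nlinarith [Nat.cast_nonneg (α := ℝ) K]
  refine ⟨θ, K, by exact_mod_cast hKpos, ?_⟩
  have e1 : ∀ᶠ t in nhds t₀, ∀ i, |r i t| < θ := eventually_all.2 fun i =>
    (hr i).eventually (gt_mem_nhds ((hi₀ i).trans_lt hθ))
  have e2 : ∀ᶠ t in nhds t₀, ∀ i, q < |r i t| := eventually_all.2 fun i =>
    (hr i).eventually (lt_mem_nhds (hq.trans_le (hi₁ i)))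
  have e3 : ∀ᶠ t in nhds t₀, ∀ i, |s i t| < S := eventually_all.2 fun i =>
    (hs i).eventually (gt_mem_nhds (lt_of_le_of_lt (hi₂ i) (by linarith)))
  filter_upwards [e1, e2, e3] with t h1 h2 h3
  refine ⟨hp, hθ0, hθ1, fun i => ?_, fun i => (h1 i).le, fun i => ?_, ?_⟩
  · exact hK1.trans (mul_le_mul_of_nonneg_left (h2 i).le hKpos.le)
  · rw [div_le_iff₀ h1θ] at hK2
    have := mul_le_mul_of_nonneg_right (h1 i).le hKpos.le
    linarith [h3 i]
  · rw [zz, abs_div]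
    refine le_trans ?_ hK2
    have h4 : 1 - θ ≤ |1 - r ι t| := by
      have := le_abs_self (1 - r ι t)
      have := le_abs_self (r ι t)
      linarith [h1 ι]
    exact div_le_div₀ hS0 (h3 ι).le h1θ h4

lemma log_close {a b : ℝ} (hcontr : ∀ i, ∀ t ∈ Ioo a b, 0 < |r i t| ∧ |r i t| < 1)
    (hC2 : ∀ i, ContDiffOn ℝ 2 (r i) (Ioo a b) ∧ ContDiffOn ℝ 2 (s i) (Ioo a b))
    {t₀ : ℝ} (ht₀ : t₀ ∈ Ioo a b) {η : ℝ} (hη : 0 < η) :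
    ∀ᶠ t in nhds t₀, ∀ i, r i t ≠ 0 ∧ |Real.log |r i t| - Real.log (|r i t₀|)| ≤ η := by
  have hnh : Ioo a b ∈ nhds t₀ := isOpen_Ioo.mem_nhds ht₀
  refine eventually_all.2 fun i => ?_
  have hc : ContinuousAt (fun t => Real.log |r i t|) t₀ :=
    ((hC2 i).1.continuousOn.continuousAt hnh).abs.log (hcontr i t₀ ht₀).1.ne'
  filter_upwards [hnh, hc.eventually (Metric.ball_mem_nhds _ hη)] with t ht h
  refine ⟨abs_pos.1 (hcontr i t ht).1, ?_⟩
  rw [Real.dist_eq] at h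
  exact h.le

end perturb

/-! ### Comparison of a parameter with a nearby one -/

section compare

variable {Λ : Type*} [Fintype Λ] {p : Λ → ℝ}

lemma eventually_small (k C₁ : ℝ) {g : ℝ} (hg : 0 < g) :
    ∃ N : ℕ, ∀ n : ℕ, n ≥ N → k * Real.log (n + 1) + C₁ ≤ g * n := by
  have h1 : Tendsto (fun n : ℕ => ((n : ℝ) + 1)) atTop atTop :=
    tendsto_atTop_add_const_right _ _ tendsto_natCast_atTop_atTop
  have h2 : (fun x : ℝ => k * Real.log x + (C₁ + g)) =o[atTop] (fun x : ℝ => x) := by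
    refine (Real.isLittleO_log_id_atTop.const_mul_left k).add ?_
    exact Asymptotics.isLittleO_const_left.2 (Or.inr tendsto_norm_atTop_atTop)
  have h3 := h1.eventually (h2.bound hg)
  obtain ⟨N, hN⟩ := eventually_atTop.1 h3
  refine ⟨N, fun n hn => ?_⟩
  have h4 := (Real.le_norm_self _).trans (hN n hn)
  rw [Real.norm_of_nonneg (by positivity : (0 : ℝ) ≤ (n : ℝ) + 1)] at h4
  linarith

/-- Separation of words at one of two parameters gives injectivity of the pair of fine
discretizations. -/
lemma words_inj {n B : ℕ} {c τ : ℝ} (hc : 0 < c) (X X' : (Fin n → Λ) → ℝ)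
    (hsep : ∀ u v, u ≠ v → c * τ ≤ 2 ^ (B * n) * max |X u - X v| |X' u - X' v|)
    (hτ : c < τ * 2 ^ (B * (n + 1))) (hbig : 2 ^ B ≤ c ^ 2 * 2 ^ (B * n)) (u v : Fin n → Λ)
    (h : ⌊2 ^ (3 * B * n) * X u⌋ = ⌊2 ^ (3 * B * n) * X v⌋)
    (h' : ⌊2 ^ (3 * B * n) * X' u⌋ = ⌊2 ^ (3 * B * n) * X' v⌋) : u = v := by
  by_contra hne
  have hM : (0 : ℝ) < 2 ^ (3 * B * n) := by positivity
  have key : ∀ x y : ℝ, ⌊2 ^ (3 * B * n) * x⌋ = ⌊2 ^ (3 * B * n) * y⌋ →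
      2 ^ (3 * B * n) * |x - y| < 1 := by
    intro x y hxy
    have := Int.abs_sub_lt_one_of_floor_eq_floor hxy
    rwa [← mul_sub, abs_mul, abs_of_pos hM] at this
  have hmax : 2 ^ (3 * B * n) * max |X u - X v| |X' u - X' v| < 1 := by
    rcases max_choice |X u - X v| |X' u - X' v| with h0 | h0 <;> rw [h0]
    · exact key _ _ h
    · exact key _ _ h'
  have h1 := hsep u v hne
  set W : ℝ := 2 ^ (B * n) with hW
  have hW0 : 0 < W := by positivity
  have e1 : (2 : ℝ) ^ (3 * B * n) = W ^ 3 := by rw [hW, ← pow_mul]; congr 1; ring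
  have e2 : (2 : ℝ) ^ (B * (n + 1)) = W * 2 ^ B := by rw [hW, ← pow_add]; congr 1
  rw [e1] at hmax
  rw [e2] at hτ
  set m := max |X u - X v| |X' u - X' v| with hm
  set P : ℝ := 2 ^ B with hP
  have hP0 : 0 < P := by positivity
  clear_value W m P
  have a1 : c * c < W * P * (W * m) := by
    calc c * c < c * (τ * (W * P)) := mul_lt_mul_of_pos_left hτ hc
      _ = (W * P) * (c * τ) := by ring
      _ ≤ _ := mul_le_mul_of_nonneg_left h1 (by positivity)
  have a2 : P * (W ^ 3 * m) < P * 1 := mul_lt_mul_of_pos_left hmax hP0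
  have a3 := mul_lt_mul_of_pos_right a1 hW0
  have a4 : W * P * (W * m) * W = P * (W ^ 3 * m) := by ring
  have a5 : c * c * W = c ^ 2 * W := by ring
  linarith

end compare

end SSM

/-- under β-transversality, at every parameter where the dimension drops below
`min(1, similarity dimension)`, every small nonzero perturbation raises the dimension by a
definite amount. -/
theorem stmt1 {Λ : Type*} [Fintype Λ] [Nonempty Λ] (a b : ℝ)
    (r s : Λ → ℝ → ℝ)
    (hcontr : ∀ i, ∀ t ∈ Ioo a b, 0 < |r i t| ∧ |r i t| < 1)
    (hC2 : ∀ i, ContDiffOn ℝ 2 (r i) (Ioo a b) ∧ ContDiffOn ℝ 2 (s i) (Ioo a b))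
    (hreg : ∀ J' ⊆ Ioo a b, IsCompact J' →
      ∃ C : ℝ, ∀ x : ℕ → Λ, ∀ t ∈ J',
        |deriv (codingPoint r s x) t| ≤ C ∧ |deriv (deriv (codingPoint r s x)) t| ≤ C)
    (β : ℝ) (hβ : 0 ≤ β)
    (htrans : ∃ Cβ : ℝ, 0 < Cβ ∧ ∀ t ∈ Ioo a b, ∀ x y : ℕ → Λ, x ≠ y →
      |codingPoint r s x t - codingPoint r s y t| ≤ Cβ * seqDist x y ^ β →
      Cβ * seqDist x y ^ β ≤ |deriv (fun u => codingPoint r s x u - codingPoint r s y u) t|)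
    (p : Λ → ℝ) (hp : ∀ i, 0 < p i) (hp1 : ∑ i : Λ, p i = 1)
    (μ : ℝ → Measure ℝ) (hμ : ∀ t ∈ Ioo a b, IsSelfSimilarMeasure r s p t (μ t))
    (dimf : ℝ → ℝ) (hdim : ∀ t ∈ Ioo a b, ExactDim (μ t) (dimf t)) :
    ∀ t ∈ Ioo a b, dimf t < min 1 (simDim p r t) →
      ∃ δ : ℝ, 0 < δ ∧ ∃ ε : ℝ, 0 < ε ∧
        ∀ t' ∈ Icc (t - ε) (t + ε) ∩ Ioo a b, t' ≠ t → dimf t + δ ≤ dimf t' := by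
  intro t₀ ht₀ hdrop
  have hl : 0 < Real.log 2 := Real.log_pos one_lt_two
  have hw : SSM.IsW p := ⟨fun i => (hp i).le, hp1⟩
  have hα1 : dimf t₀ < 1 := hdrop.trans_le (min_le_left _ _)
  have hαs : dimf t₀ < simDim p r t₀ := hdrop.trans_le (min_le_right _ _)
  have hprob : ∀ t ∈ Ioo a b, IsProbabilityMeasure (μ t) := fun t ht => (hμ t ht).1
  haveI := hprob t₀ ht₀
  have hα0 : 0 ≤ dimf t₀ := SSM.exactDim_nonneg (hdim t₀ ht₀)
  obtain ⟨χ, hχ⟩ : ∃ χ, χ = -(∑ i, p i * Real.log |r i t₀|) := ⟨_, rfl⟩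
  obtain ⟨h, hh⟩ : ∃ h, h = -(∑ i, p i * Real.log (p i)) := ⟨_, rfl⟩
  have hχ0 : 0 < χ := by
    rw [hχ, ← Finset.sum_neg_distrib]
    refine Finset.sum_pos (fun i _ => ?_) Finset.univ_nonempty
    rw [← mul_neg]
    exact mul_pos (hp i)
      (neg_pos.2 (Real.log_neg (hcontr i t₀ ht₀).1 (hcontr i t₀ ht₀).2))
  -- `g` is the entropy deficit per letter.
  obtain ⟨g, hg⟩ : ∃ g, g = h - dimf t₀ * χ := ⟨_, rfl⟩
  have hg0 : 0 < g := by
    have h1 : simDim p r t₀ = h / χ := by rw [simDim, hh, hχ, neg_div_neg_eq]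
    rw [h1, lt_div_iff₀ hχ0] at hαs
    linarith
  have ι : Λ := Classical.arbitrary Λ
  obtain ⟨B, hB⟩ := exists_nat_ge (max β (χ / Real.log 2 + 3))
  have hBβ : β ≤ B := (le_max_left _ _).trans hB
  have hBχ : χ / Real.log 2 + 3 ≤ B := (le_max_right _ _).trans hB
  have hB1 : 1 ≤ B := by
    have h1 : (0 : ℝ) < χ / Real.log 2 := by positivity
    have h2 : (1 : ℝ) ≤ B := by linarith
    exact_mod_cast h2
  obtain ⟨e, he, c, hc, -, hsub, hlip, hsep⟩ :=
    SSM.transv hcontr hC2 hreg hβ htrans ι hBβ ht₀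
  obtain ⟨θ, K, hK, hSys⟩ := SSM.unif_sys hcontr hC2 hw ι ht₀
  have H₀ := hSys.self_of_nhds
  have hC : 0 ≤ 4 * SSM.cK K := by have := SSM.cK_nonneg K; linarith
  -- The constants are chosen in the order in which `growth` produces them.
  obtain ⟨ε₁, hε₁, l₀, hgr⟩ := SSM.growth (p := p) (Q := 3 * B) hα0 hα1
    (by positivity : 0 < g / 4) (by omega) hK hC
  obtain ⟨l, hl1, hl2⟩ := ((H₀.lower (hμ t₀ ht₀).2 (hdim t₀ ht₀) hε₁).and
    (eventually_ge_atTop l₀)).exists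
  obtain ⟨ε, hε, ℓ₀, hgr⟩ := hgr l hl2
  obtain ⟨ℓ, hℓ1, hℓ2⟩ := ((H₀.lower (hμ t₀ ht₀).2 (hdim t₀ ht₀) hε).and
    (eventually_ge_atTop ℓ₀)).exists
  obtain ⟨n₀, hgr⟩ := hgr ℓ hℓ2
  obtain ⟨η, hη, n₁, hsc⟩ := SSM.scales hχ0 hε
  obtain ⟨κ, hκ, hκε, hκg⟩ : ∃ κ > 0, κ ≤ ε ∧ κ * χ ≤ g / 8 := by
    refine ⟨min ε (g / 8 / χ), by positivity, min_le_left _ _, ?_⟩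
    exact (le_div_iff₀ hχ0).1 (min_le_right _ _)
  obtain ⟨n₂, hn₂⟩ := SSM.typ_prob hw (fun i => r i t₀) hη hκ
  obtain ⟨n₃, hn₃⟩ := SSM.eventually_small (Fintype.card Λ)
    (4 * SSM.cK K + Real.log (4 * ((2 * K + 1 : ℕ) : ℝ) + 2) + 2 * Real.log 5)
    (by positivity : 0 < g / 8)
  obtain ⟨n₄, hn₄⟩ : ∃ n₄ : ℕ, ∀ n ≥ n₄, (2 : ℝ) ^ B ≤ c ^ 2 * 2 ^ (B * n) := by
    obtain ⟨k, hk⟩ := pow_unbounded_of_one_lt ((2 : ℝ) ^ B / c ^ 2) (one_lt_two (α := ℝ))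
    refine ⟨k, fun n hn => ?_⟩
    rw [div_lt_iff₀ (by positivity)] at hk
    refine hk.le.trans ?_
    rw [mul_comm]
    refine mul_le_mul_of_nonneg_left (pow_le_pow_right₀ one_le_two ?_) (by positivity)
    exact hn.trans (Nat.le_mul_of_pos_left n hB1)
  obtain ⟨N, hN0, hN1, hN2, hN3, hN4, hN5⟩ :
      ∃ N : ℕ, n₀ ≤ N ∧ n₁ ≤ N ∧ n₂ ≤ N ∧ n₃ ≤ N ∧ n₄ ≤ N ∧ 1 ≤ N :=
    ⟨n₀ + n₁ + n₂ + n₃ + n₄ + 1, by omega, by omega, by omega, by omega, by omega, by omega⟩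
  have hsmall : ∀ k : ℕ, ∀ᶠ t in nhds t₀, |t - t₀| * 2 ^ k ≤ c := by
    intro k
    have hct : ContinuousAt (fun t : ℝ => |t - t₀| * 2 ^ k) t₀ := by fun_prop
    have hlt : |t₀ - t₀| * 2 ^ k < c := by simpa using hc
    exact (hct.eventually (gt_mem_nhds hlt)).mono fun t ht => le_of_lt ht
  have hnear : ∀ᶠ t in nhds t₀, t ∈ Icc (t₀ - e) (t₀ + e) :=
    Icc_mem_nhds (by linarith) (by linarith)
  have hall := hSys.and ((SSM.log_close hcontr hC2 ht₀ hη).and ((hsmall l).and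
    ((hsmall ℓ).and ((hsmall (B * N)).and hnear))))
  obtain ⟨d, hd, hball⟩ := Metric.eventually_nhds_iff.1 hall
  refine ⟨ε, hε, d / 2, by positivity, ?_⟩
  rintro t ⟨htd, ht⟩ hne
  obtain ⟨H, hlog, hτl, hτℓ, hτN, hte⟩ := hball (y := t) (by
    rw [Real.dist_eq, abs_lt]
    constructor <;> linarith [htd.1, htd.2])
  haveI := hprob t ht
  by_contra hcon
  rw [not_le] at hcon
  have hτ0 : 0 < |t - t₀| := abs_pos.2 (sub_ne_zero.2 hne)
  obtain ⟨n, hnN, hτn, hτn'⟩ := SSM.scale_choice hB1 hτ0 N hτN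
  obtain ⟨m, m', hmm, hmε, hm1, hm2, hmB⟩ := hsc n (hN1.trans hnN)
  have hmB := hmB B hBχ
  have hn0 : (0 : ℝ) ≤ n := Nat.cast_nonneg n
  have hmQ : m' + n ≤ 3 * B * n := hmB.trans (by
    rw [mul_assoc]
    omega)
  -- Typicality of most words, at both parameters.
  have hlog₀ : ∀ i, r i t₀ ≠ 0 ∧ |Real.log |r i t₀| - Real.log (|r i t₀|)| ≤ η := fun i =>
    ⟨abs_pos.1 (hcontr i t₀ ht₀).1, by rw [sub_self, abs_zero]; exact hη.le⟩
  rw [hχ] at hm1 hm2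
  have hty₀ := hn₂ n (hN2.trans hnN) (fun i => r i t₀) hlog₀ m m' hm1 hm2
  have hty := hn₂ n (hN2.trans hnN) (fun i => r i t) hlog m m' hm1 hm2
  rw [← hχ] at hm1 hm2
  -- Small entropy growth at `t₀`, and at `t` because its dimension is assumed to be small.
  have hlow : ∀ (k : ℕ) (x : ℝ), |t - t₀| * 2 ^ k ≤ c →
      (∃ L₁, ∀ L ≥ L₁, x + SSM.cK 2 ≤
        SSM.hh p (fun i => r i t₀) (fun i => s i t₀) (SSM.zz r s ι t₀) L k) →
      ∃ L₁, ∀ L ≥ L₁, x ≤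
        SSM.hh p (fun i => r i t) (fun i => s i t) (SSM.zz r s ι t) L k := by
    rintro k x hk ⟨L₁, hL₁⟩
    refine ⟨L₁, fun L hL => ?_⟩
    have h1 := SSM.hh_close hw (ρ := fun i => r i t₀) (σ := fun i => s i t₀)
      (z := SSM.zz r s ι t₀) (ρ' := fun i => r i t) (σ' := fun i => s i t)
      (z' := SSM.zz r s ι t) hc (L := L) (m := k) (hlip t hte L) hk
    linarith only [h1, hL₁ L hL]
  have hlow₀ : ∀ (k : ℕ) (x : ℝ),
      (∃ L₁, ∀ L ≥ L₁, x + SSM.cK 2 ≤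
        SSM.hh p (fun i => r i t₀) (fun i => s i t₀) (SSM.zz r s ι t₀) L k) →
      ∃ L₁, ∀ L ≥ L₁, x ≤
        SSM.hh p (fun i => r i t₀) (fun i => s i t₀) (SSM.zz r s ι t₀) L k := by
    rintro k x ⟨L₁, hL₁⟩
    exact ⟨L₁, fun L hL => by linarith only [hL₁ L hL, SSM.cK_nonneg 2]⟩
  have hup : ∀ x : ℝ, x ≤ dimf t₀ + ε → ∀ k : ℕ,
      x * k * Real.log 2 + 4 * SSM.cK K
        ≤ (dimf t₀ + ε) * k * Real.log 2 + 4 * SSM.cK K := by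
    intro x hx k
    have h1 := mul_le_mul_of_nonneg_right hx
      (mul_nonneg (Nat.cast_nonneg (α := ℝ) k) hl.le)
    linarith only [h1]
  have G₀ := hgr n (hN0.trans hnN) m m' hmm hmε hmQ (fun i => r i t₀) (fun i => s i t₀)
    (SSM.zz r s ι t₀) θ H₀ (hlow₀ l _ hl1) (hlow₀ ℓ _ hℓ1)
    (fun k => by
      obtain ⟨L₁, hL₁⟩ := H₀.hh_le_dim_add hK (hμ t₀ ht₀).2 (hdim t₀ ht₀) k
      exact ⟨L₁, fun L hL => (hL₁ L hL).trans (hup _ (by linarith only [hε]) k)⟩)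
    (hty₀.trans hκε)
  have G := hgr n (hN0.trans hnN) m m' hmm hmε hmQ (fun i => r i t) (fun i => s i t)
    (SSM.zz r s ι t) θ H (hlow l _ hτl hl1) (hlow ℓ _ hτℓ hℓ1)
    (fun k => by
      obtain ⟨L₁, hL₁⟩ := H.hh_le_dim_add hK (hμ t ht).2 (hdim t ht) k
      exact ⟨L₁, fun L hL => (hL₁ L hL).trans (hup _ hcon.le k)⟩)
    (hty.trans hκε)
  -- The pair of fine discretizations determines the word, which forces large growth at one of
  -- the two parameters.
  have hinj := SSM.words_inj hc (SSM.XX r s ι · t₀) (SSM.XX r s ι · t)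
    (hsep t hte n hτn) hτn' (hn₄ n (hN4.trans hnN))
  have happ : ∀ u : Fin n → Λ, |2 ^ m * SSM.XX r s ι u t₀ - 2 ^ m * SSM.XX r s ι u t| ≤ 1 := by
    intro u
    rw [← mul_sub, abs_mul, abs_of_pos (by positivity : (0 : ℝ) < 2 ^ m)]
    have h1 := mul_le_mul_of_nonneg_right (hlip t hte n u) (by positivity : (0 : ℝ) ≤ 2 ^ m)
    have h2 : |t - t₀| * 2 ^ m ≤ |t - t₀| * 2 ^ (B * n) :=
      mul_le_mul_of_nonneg_left (pow_le_pow_right₀ one_le_two (by omega)) hτ0.le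
    have h3 : c * (2 ^ m * |SSM.XX r s ι u t₀ - SSM.XX r s ι u t|) ≤ c * 1 := by
      linarith only [h1, h2, hτn]
    exact le_of_mul_le_mul_left h3 hc
  have hmain := H₀.word_ent_le hp (a := m) (a' := m') (M := 3 * B * n) (by omega)
    (SSM.XX r s ι · t) hinj happ (H₀.hh_le_dim_add hK (hμ t₀ ht₀).2 (hdim t₀ ht₀) m)
  have hG : SSM.ent (SSM.pw p n)
      (SSM.ZZ (fun i => r i t) (fun i => s i t) (SSM.zz r s ι t) n m)
      = SSM.ent (SSM.pw p n) (fun u => (SSM.cnt u, ⌊2 ^ m * SSM.XX r s ι u t⌋)) := rfl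
  have hG' : SSM.ent (SSM.pw p n) (fun u => (SSM.cnt u,
        ⌊2 ^ (3 * B * n) * SSM.ev (fun i => r i t) (fun i => s i t) u (SSM.zz r s ι t)⌋))
      = SSM.ent (SSM.pw p n) (fun u => (SSM.cnt u, ⌊2 ^ (3 * B * n) * SSM.XX r s ι u t⌋)) := rfl
  rw [hG, hG'] at G
  have hmχ : m * Real.log 2 ≤ n * χ := by
    have := mul_nonneg hn0 hη.le
    linarith only [this, hm1]
  have hm0 : 0 ≤ m * Real.log 2 := by positivity
  have b1 : (∑ u : Fin n → Λ, SSM.pw p n u *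
      (if SSM.Typ (fun i => r i t₀) m m' u then 0 else 1)) * (m * Real.log 2) ≤ g / 8 * n := by
    calc _ ≤ κ * (m * Real.log 2) := mul_le_mul_of_nonneg_right hty₀ hm0
      _ ≤ κ * (n * χ) := mul_le_mul_of_nonneg_left hmχ hκ.le
      _ = κ * χ * n := by ring
      _ ≤ _ := mul_le_mul_of_nonneg_right hκg hn0
  have b2 : dimf t₀ * m * Real.log 2 ≤ dimf t₀ * χ * n := by
    have := mul_le_mul_of_nonneg_left hmχ hα0
    linarith only [this]
  have b3 := hn₃ n (hN3.trans hnN)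
  have b4 : (0 : ℝ) < g * n := by
    have : (1 : ℝ) ≤ n := by exact_mod_cast hN5.trans hnN
    positivity
  have b5 : n * h = g * n + dimf t₀ * χ * n := by rw [hg]; ring
  rw [← hh] at hmain
  linarith only [hmain, G₀, G, b1, b2, b3, b4, b5]

end
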